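/- Let q be an odd prime and k ≥ 1 an integer. Put r = gcd(k, q−1) and h = (q−1)/r, and assume h is even. Then there exists a constant C > 0 (depending only on r and q) such that, as x → ∞, S_{k,q}(x) = (C·x/(log x)^{1/h})·(1 + (1 − γ_{k,q})/(h·log x)) + O(x/(log x)^{2+1/h}). -/

import Mathlib

open Filter Topology

/-- The `k`-th divisor sum function `σ_k(n) = ∑_{d ∣ n} d^k`. -/
def sigmak (k n : ℕ) : ℕ := ∑ d ∈ n.divisors, d ^ k

/-- The multiplicative order `g_p` of `p^m` modulo `q`. -/
noncomputable def gp (q m p : ℕ) : ℕ := orderOf ((p : ZMod q) ^ m)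

/-- The local term at a prime `p` of the prime sum `S(m,q)` of the paper. -/
noncomputable def Sterm (q m p : ℕ) : ℝ :=
  if p = q then 0 else
    (if gp q m p = 1 then
        (q : ℝ) * Real.log p / ((p : ℝ) ^ q - 1)
          - ((q : ℝ) - 1) * Real.log p / ((p : ℝ) ^ (q - 1) - 1)
      else 0)
    + (if 3 ≤ gp q m p then
        (gp q m p : ℝ) * Real.log p / ((p : ℝ) ^ gp q m p - 1)
          - ((gp q m p : ℝ) - 1) * Real.log p / ((p : ℝ) ^ (gp q m p - 1) - 1)
      else 0)
    + (if gp q m p = 2 then Real.log p / ((p : ℝ) ^ 2 - 1) else 0)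
    + (if 4 ≤ gp q m p ∧ 2 ∣ gp q m p then
        Real.log p / ((p : ℝ) ^ (gp q m p / 2) - ((p : ℝ) ^ (gp q m p / 2))⁻¹)
      else 0)

/-- The prime sum `S(m,q)` of the paper (a sum over all primes `p ≠ q`). -/
noncomputable def Smq (q m : ℕ) : ℝ := ∑' p : Nat.Primes, Sterm q m (p : ℕ)

/-- The Dirichlet L-function attached to a Dirichlet character mod `q` (junk value for `q = 0`). -/
noncomputable def Lfun {q : ℕ} (χ : DirichletCharacter ℂ q) (s : ℂ) : ℂ :=
  if h : q = 0 then 0 else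
    haveI : NeZero q := ⟨h⟩
    DirichletCharacter.LFunction χ s

/-- `γ_{K_m} = γ + ∑_{χ ∈ X_m^*} (L'/L)(1,χ)`, the Euler–Kronecker constant of the unique
subfield of `ℚ(ζ_q)` of degree `(q-1)/m`; here `X_m^*` is the set of nonprincipal Dirichlet
characters mod `q` that are trivial on the group `C_m` of `m`-th roots of unity mod `q`. -/
noncomputable def gammaK (q m : ℕ) : ℝ :=
  Real.eulerMascheroniConstant +
    (∑ᶠ χ ∈ {χ : DirichletCharacter ℂ q | χ ≠ 1 ∧ ∀ a : ZMod q, a ^ m = 1 → χ a = 1},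
      deriv (Lfun χ) 1 / Lfun χ 1).re

/-- The Euler–Kronecker constant `γ_{k,q}`, for `q` an odd prime, `r = gcd(k, q-1)` and
`h = (q-1)/r` even:  `γ_{k,q} = γ − (1/h)(2γ_{K_{2r}} − γ_{K_r}) − log q/(h(q−1)) − S(r,q)`. -/
noncomputable def gammakq (q k : ℕ) : ℝ :=
  Real.eulerMascheroniConstant
    - (1 / (((q - 1) / Nat.gcd k (q - 1) : ℕ) : ℝ)) *
        (2 * gammaK q (2 * Nat.gcd k (q - 1)) - gammaK q (Nat.gcd k (q - 1)))
    - Real.log q / ((((q - 1) / Nat.gcd k (q - 1) : ℕ) : ℝ) * ((q : ℝ) - 1))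
    - Smq q (Nat.gcd k (q - 1))

/-- `γ'_{k,q} = γ_{k,q} + log q/(q-1)`. -/
noncomputable def gammakq' (q k : ℕ) : ℝ := gammakq q k + Real.log q / ((q : ℝ) - 1)

/-- `S_{k,q}(x) = #{1 ≤ n ≤ x : q ∤ σ_k(n)}`. -/
noncomputable def Skq (k q : ℕ) (x : ℝ) : ℕ :=
  Nat.card {n : ℕ | 1 ≤ n ∧ (n : ℝ) ≤ x ∧ ¬ q ∣ sigmak k n}

/-- `S'_{k,q}(x) = #{1 ≤ n ≤ x : q ∤ n·σ_k(n)}`. -/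
noncomputable def Skq' (k q : ℕ) (x : ℝ) : ℕ :=
  Nat.card {n : ℕ | 1 ≤ n ∧ (n : ℝ) ≤ x ∧ ¬ q ∣ n * sigmak k n}

/-!
The Euler factors of `F(s) = ∑ n⁻ˢ`, taken over `q ∤ σ_k(n)`, depend on `p` mod `q` up to terms of
order `p⁻²ˢ`. Orthogonality of characters therefore gives
`F(s) = exp (∑ c_χ log L(s, χ) + G(s))` with `G` holomorphic beyond the line `Re s = 1`, so that
`F(1 + w) = w ^ (-z) K(w)` near `w = 0`, where `z = 1 - 1/h` and `K'(0) / K(0) = γ_{k,q}`.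

On the rest of the line `Re s = 1` the functions `L(s, χ)`, their inverses and their derivatives
grow more slowly than any power of `|Im s|`, hence so do the derivatives of `F`. Passing to Riesz
sums makes these bounds integrable: once the explicit singular terms `w ^ (j - z)` are removed,
differentiating the Laplace transform several times and inverting it on the boundary line gains
powers of `log x`. No zero-free region is required. Differencing the Riesz sum recovers the
counting function, whose two leading coefficients are `K(0) / Γ(z)` and
`(z - 1) (K'(0) - K(0)) / Γ(z)`.
-/

/-! ### Slow growth to the right of `Re s = 1` -/

/-- `f` grows more slowly than any power of `|Im s|` in the strip `1 < Re s ≤ 2`, away from the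
real axis. Points near the real axis are left out because the functions of interest are singular at
`s = 1`. -/
def SlowGrowth (f : ℂ → ℂ) : Prop :=
  ∀ ε > (0 : ℝ), ∀ ρ > (0 : ℝ), ∃ C, ∀ s : ℂ, 1 < s.re → s.re ≤ 2 → ρ ≤ |s.im| →
    ‖f s‖ ≤ C * (1 + |s.im|) ^ ε

/-- `f` is holomorphic on `Re s > 1` and its derivatives of order at most `n` grow slowly. -/
structure SlowUpTo (n : ℕ) (f : ℂ → ℂ) : Prop where
  differentiableOn : DifferentiableOn ℂ f {s | 1 < s.re}
  slow : ∀ j ≤ n, SlowGrowth (iteratedDeriv j f)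

lemma SlowGrowth.exists_pos {f : ℂ → ℂ} (hf : SlowGrowth f) {ε ρ : ℝ} (hε : 0 < ε)
    (hρ : 0 < ρ) : ∃ C, 0 < C ∧ ∀ s : ℂ, 1 < s.re → s.re ≤ 2 → ρ ≤ |s.im| →
    ‖f s‖ ≤ C * (1 + |s.im|) ^ ε := by
  obtain ⟨C, hC⟩ := hf ε hε ρ hρ
  refine ⟨max C 1, by positivity, fun s hs hs2 him => (hC s hs hs2 him).trans ?_⟩
  gcongr
  exact le_max_left _ _

lemma SlowGrowth.congr {f g : ℂ → ℂ} (hf : SlowGrowth f)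
    (h : ∀ s : ℂ, 1 < s.re → f s = g s) : SlowGrowth g := by
  intro ε hε ρ hρ
  obtain ⟨C, hC⟩ := hf ε hε ρ hρ
  exact ⟨C, fun s hs hs2 him => by rw [← h s hs]; exact hC s hs hs2 him⟩

lemma SlowGrowth.add {f g : ℂ → ℂ} (hf : SlowGrowth f) (hg : SlowGrowth g) :
    SlowGrowth (fun s => f s + g s) := by
  intro ε hε ρ hρ
  obtain ⟨C, hC⟩ := hf ε hε ρ hρ
  obtain ⟨D, hD⟩ := hg ε hε ρ hρ
  refine ⟨C + D, fun s hs hs2 him => (norm_add_le _ _).trans ?_⟩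
  rw [add_mul]
  exact add_le_add (hC s hs hs2 him) (hD s hs hs2 him)

lemma SlowGrowth.mul {f g : ℂ → ℂ} (hf : SlowGrowth f) (hg : SlowGrowth g) :
    SlowGrowth (fun s => f s * g s) := by
  intro ε hε ρ hρ
  obtain ⟨C, hC0, hC⟩ := hf.exists_pos (half_pos hε) hρ
  obtain ⟨D, -, hD⟩ := hg.exists_pos (half_pos hε) hρ
  refine ⟨C * D, fun s hs hs2 him => ?_⟩
  have hpos : 0 < 1 + |s.im| := by positivity
  calc ‖f s * g s‖ = ‖f s‖ * ‖g s‖ := norm_mul _ _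
    _ ≤ (C * (1 + |s.im|) ^ (ε / 2)) * (D * (1 + |s.im|) ^ (ε / 2)) := by
        gcongr
        · exact hC s hs hs2 him
        · exact hD s hs hs2 him
    _ = C * D * ((1 + |s.im|) ^ (ε / 2) * (1 + |s.im|) ^ (ε / 2)) := by ring
    _ = C * D * (1 + |s.im|) ^ ε := by rw [← Real.rpow_add hpos, add_halves]

lemma SlowGrowth.of_bound {f : ℂ → ℂ} (B : ℝ) (h : ∀ s : ℂ, 1 < s.re → s.re ≤ 2 → ‖f s‖ ≤ B) :
    SlowGrowth f := by
  intro ε hε ρ hρ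
  refine ⟨max B 0, fun s hs hs2 _ => (h s hs hs2).trans ((le_max_left B 0).trans ?_)⟩
  exact le_mul_of_one_le_right (le_max_right _ _)
    (Real.one_le_rpow (by linarith [abs_nonneg s.im]) hε.le)

lemma SlowGrowth.zero : SlowGrowth (fun _ => 0) :=
  SlowGrowth.of_bound 0 fun _ _ _ => by simp

lemma SlowGrowth.const_mul {f : ℂ → ℂ} (hf : SlowGrowth f) (c : ℂ) :
    SlowGrowth (fun s => c * f s) :=
  (SlowGrowth.of_bound ‖c‖ fun _ _ _ => le_rfl : SlowGrowth fun _ => c).mul hf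

lemma SlowGrowth.sum {ι : Type*} (t : Finset ι) {f : ι → ℂ → ℂ}
    (hf : ∀ i ∈ t, SlowGrowth (f i)) : SlowGrowth (fun s => ∑ i ∈ t, f i s) := by
  classical
  induction t using Finset.induction_on with
  | empty => simpa using SlowGrowth.zero
  | insert a t ha ih =>
    simp only [Finset.sum_insert ha]
    exact (hf a (by simp)).add (ih fun i hi => hf i (by simp [hi]))

lemma SlowGrowth.prod {ι : Type*} (t : Finset ι) {f : ι → ℂ → ℂ}
    (hf : ∀ i ∈ t, SlowGrowth (f i)) : SlowGrowth (fun s => ∏ i ∈ t, f i s) := by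
  classical
  induction t using Finset.induction_on with
  | empty => exact SlowGrowth.of_bound 1 fun s _ _ => by simp
  | insert a t ha ih =>
    simp only [Finset.prod_insert ha]
    exact (hf a (by simp)).mul (ih fun i hi => hf i (by simp [hi]))

lemma SlowGrowth.of_norm_le_rpow {f g : ℂ → ℂ} {c : ℝ} (hf : SlowGrowth f) (hc : 0 ≤ c)
    (hg : ∀ s : ℂ, 1 < s.re → ‖g s‖ ≤ ‖f s‖ ^ c) : SlowGrowth g := by
  intro ε hε ρ hρ
  obtain ⟨C, hC0, hC⟩ := hf.exists_pos (ε := ε / (c + 1)) (by positivity) hρ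
  refine ⟨C ^ c, fun s hs hs2 him => ?_⟩
  have hexponent : ε / (c + 1) * c ≤ ε := by
    rw [div_mul_eq_mul_div, div_le_iff₀ (by positivity)]
    nlinarith
  calc ‖g s‖ ≤ ‖f s‖ ^ c := hg s hs
    _ ≤ (C * (1 + |s.im|) ^ (ε / (c + 1))) ^ c := by
        gcongr
        exact hC s hs hs2 him
    _ = C ^ c * (1 + |s.im|) ^ (ε / (c + 1) * c) := by
        rw [Real.mul_rpow hC0.le (by positivity), Real.rpow_mul (by positivity)]
    _ ≤ C ^ c * (1 + |s.im|) ^ ε := by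
        gcongr
        linarith [abs_nonneg s.im]

lemma contDiffAt_of_differentiableOn_one_lt_re {f : ℂ → ℂ}
    (hf : DifferentiableOn ℂ f {s | 1 < s.re}) {s : ℂ} (hs : 1 < s.re) {n : WithTop ℕ∞} :
    ContDiffAt ℂ n f s :=
  (hf.analyticAt ((Complex.isOpen_re_gt 1).mem_nhds hs)).contDiffAt

namespace SlowUpTo

variable {n : ℕ} {f g : ℂ → ℂ}

lemma congr (hf : SlowUpTo n f) (h : ∀ s : ℂ, 1 < s.re → f s = g s) : SlowUpTo n g := by
  refine ⟨hf.differentiableOn.congr fun s hs => (h s hs).symm, fun j hj =>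
    (hf.slow j hj).congr fun s hs => ?_⟩
  refine Filter.EventuallyEq.iteratedDeriv_eq j ?_
  filter_upwards [(Complex.isOpen_re_gt 1).mem_nhds hs] with w hw using h w hw

lemma mono {m : ℕ} (hf : SlowUpTo n f) (hmn : m ≤ n) : SlowUpTo m f :=
  ⟨hf.differentiableOn, fun j hj => hf.slow j (hj.trans hmn)⟩

lemma add (hf : SlowUpTo n f) (hg : SlowUpTo n g) : SlowUpTo n (fun s => f s + g s) := by
  refine ⟨hf.differentiableOn.add hg.differentiableOn, fun j hj =>
    ((hf.slow j hj).add (hg.slow j hj)).congr fun s hs => ?_⟩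
  exact (iteratedDeriv_fun_add
    (contDiffAt_of_differentiableOn_one_lt_re hf.differentiableOn hs)
    (contDiffAt_of_differentiableOn_one_lt_re hg.differentiableOn hs)).symm

lemma mul (hf : SlowUpTo n f) (hg : SlowUpTo n g) : SlowUpTo n (fun s => f s * g s) := by
  refine ⟨hf.differentiableOn.mul hg.differentiableOn, fun j hj => ?_⟩
  have hleibniz : SlowGrowth (fun s => ∑ i ∈ Finset.range (j + 1),
      (j.choose i : ℂ) * iteratedDeriv i f s * iteratedDeriv (j - i) g s) := by
    refine SlowGrowth.sum _ fun i hi => ?_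
    have hi' : i ≤ j := by simpa [Nat.lt_succ_iff] using hi
    exact ((hf.slow i (hi'.trans hj)).const_mul _).mul (hg.slow (j - i) (by omega))
  refine hleibniz.congr fun s hs => ?_
  exact (iteratedDeriv_fun_mul
    (contDiffAt_of_differentiableOn_one_lt_re hf.differentiableOn hs)
    (contDiffAt_of_differentiableOn_one_lt_re hg.differentiableOn hs)).symm

lemma const (c : ℂ) : SlowUpTo n (fun _ => c) := by
  refine ⟨differentiableOn_const c, fun j _ => SlowGrowth.of_bound ‖c‖ fun s _ _ => ?_⟩
  rw [iteratedDeriv_const]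
  split_ifs <;> simp

lemma const_mul (hf : SlowUpTo n f) (c : ℂ) : SlowUpTo n (fun s => c * f s) := (const c).mul hf

lemma sum {ι : Type*} (t : Finset ι) {f : ι → ℂ → ℂ} (hf : ∀ i ∈ t, SlowUpTo n (f i)) :
    SlowUpTo n (fun s => ∑ i ∈ t, f i s) := by
  classical
  induction t using Finset.induction_on with
  | empty => simpa using const 0
  | insert a t ha ih =>
    simp only [Finset.sum_insert ha]
    exact (hf a (by simp)).add (ih fun i hi => hf i (by simp [hi]))

lemma deriv (hf : SlowUpTo (n + 1) f) : SlowUpTo n (deriv f) := by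
  refine ⟨hf.differentiableOn.deriv (Complex.isOpen_re_gt 1), fun j hj => ?_⟩
  rw [← iteratedDeriv_succ']
  exact hf.slow (j + 1) (by omega)

lemma of_slowGrowth (hf : DifferentiableOn ℂ f {s | 1 < s.re}) (h0 : SlowGrowth f) :
    SlowUpTo 0 f :=
  ⟨hf, fun j hj => by simpa [Nat.le_zero.1 hj] using h0⟩

lemma of_deriv (hf : DifferentiableOn ℂ f {s | 1 < s.re}) (h0 : SlowGrowth f)
    (hg : SlowUpTo n g) (h : ∀ s : ℂ, 1 < s.re → _root_.deriv f s = g s) :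
    SlowUpTo (n + 1) f := by
  refine ⟨hf, fun j hj => ?_⟩
  rcases j with _ | j
  · simpa using h0
  · rw [iteratedDeriv_succ']
    exact (hg.congr fun s hs => (h s hs).symm).slow j (by omega)

lemma of_norm_le {a C : ℝ} (ha : a < 1) (hf : DifferentiableOn ℂ f {s | a < s.re})
    (hC : ∀ s : ℂ, a < s.re → ‖f s‖ ≤ C) (n : ℕ) : SlowUpTo n f := by
  refine ⟨hf.mono fun s (hs : 1 < s.re) => ha.trans hs, fun j _ =>
    SlowGrowth.of_bound (j.factorial * C / ((1 - a) / 2) ^ j) fun s hs _ => ?_⟩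
  have hball : Metric.closedBall s ((1 - a) / 2) ⊆ {s : ℂ | a < s.re} := fun w hw => by
    have hre := (abs_le.mp (Complex.abs_re_le_norm (w - s))).1
    rw [mem_closedBall_iff_norm] at hw
    rw [Complex.sub_re] at hre
    change a < w.re
    linarith
  refine Complex.norm_iteratedDeriv_le_of_forall_mem_sphere_norm_le j (by linarith)
    ?_ fun w hw => hC w (hball (Metric.sphere_subset_closedBall hw))
  refine DifferentiableOn.diffContOnCl ?_
  rw [closure_ball _ (by linarith)]
  exact hf.mono hball

lemma of_deriv_eq_mul {Φ : ℂ → ℂ} (hf : DifferentiableOn ℂ f {s | 1 < s.re}) (h0 : SlowGrowth f)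
    (hΦ : SlowUpTo n Φ) (h : ∀ s : ℂ, 1 < s.re → _root_.deriv f s = f s * Φ s) :
    SlowUpTo n f := by
  induction n with
  | zero => exact of_slowGrowth hf h0
  | succ n ih => exact of_deriv hf h0 ((ih (hΦ.mono n.le_succ)).mul (hΦ.mono n.le_succ)) h

lemma inv (hf : SlowUpTo n f) (h0 : ∀ s : ℂ, 1 < s.re → f s ≠ 0)
    (hinv : SlowGrowth fun s => (f s)⁻¹) : SlowUpTo n (fun s => (f s)⁻¹) := by
  have hd : DifferentiableOn ℂ (fun s => (f s)⁻¹) {s | 1 < s.re} :=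
    hf.differentiableOn.inv fun s hs => h0 s hs
  induction n with
  | zero => exact of_slowGrowth hd hinv
  | succ n ih =>
    have ihn := ih (hf.mono n.le_succ)
    refine of_deriv hd hinv ((hf.deriv.mul (ihn.mul ihn)).const_mul (-1)) fun s hs => ?_
    have hfd : DifferentiableAt ℂ f s :=
      hf.differentiableOn.differentiableAt ((Complex.isOpen_re_gt 1).mem_nhds hs)
    have hfs : f s ≠ 0 := h0 s hs
    have hderiv := (hfd.hasDerivAt.fun_inv hfs).deriv
    rw [hderiv]
    field_simp

end SlowUpTo

/-! ### Laplace transforms near an algebraic singularity -/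

section Laplace

open MeasureTheory
open scoped Real FourierTransform

/-- Functions on `(0, ∞)` whose Laplace integral converges absolutely on the right half plane.
Integrability is required for real arguments only; `LaplaceAdmissible.integrable` extends it. -/
def LaplaceAdmissible (g : ℝ → ℂ) : Prop :=
  ∀ σ : ℝ, 0 < σ → IntegrableOn (fun u : ℝ => g u * Complex.exp (-(σ * u : ℝ))) (Set.Ioi 0)

/-- The Laplace transform of a function on `(0, ∞)`. -/
noncomputable def laplace (g : ℝ → ℂ) (w : ℂ) : ℂ :=
  ∫ u : ℝ in Set.Ioi 0, g u * Complex.exp (-(w * u))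

namespace LaplaceAdmissible

variable {f g : ℝ → ℂ}

lemma aestronglyMeasurable (hg : LaplaceAdmissible g) :
    AEStronglyMeasurable g (volume.restrict (Set.Ioi 0)) := by
  have hmul := (hg 1 one_pos).aestronglyMeasurable
  have hexp : AEStronglyMeasurable (fun u : ℝ => Complex.exp (u : ℂ))
      (volume.restrict (Set.Ioi 0)) := by
    apply Continuous.aestronglyMeasurable
    fun_prop
  refine (hmul.mul hexp).congr (ae_of_all _ fun u => ?_)
  simp only [Pi.mul_apply]
  rw [mul_assoc, ← Complex.exp_add]
  simp

lemma integrable (hg : LaplaceAdmissible g) {w : ℂ} (hw : 0 < w.re) :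
    IntegrableOn (fun u : ℝ => g u * Complex.exp (-(w * u))) (Set.Ioi 0) := by
  refine Integrable.mono (hg w.re hw) (hg.aestronglyMeasurable.mul ?_) (ae_of_all _ fun u => ?_)
  · apply Continuous.aestronglyMeasurable
    fun_prop
  · rw [norm_mul, norm_mul, Complex.norm_exp, Complex.norm_exp]
    simp

lemma sub (hf : LaplaceAdmissible f) (hg : LaplaceAdmissible g) :
    LaplaceAdmissible (fun u => f u - g u) := fun σ hσ => by
  simpa only [sub_mul, Pi.sub_def] using (hf σ hσ).sub (hg σ hσ)

lemma const_mul (hg : LaplaceAdmissible g) (c : ℂ) :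
    LaplaceAdmissible (fun u => c * g u) := fun σ hσ => by
  simpa only [IntegrableOn, mul_assoc] using (hg σ hσ).const_mul c

lemma finset_sum {ι : Type*} (s : Finset ι) {g : ι → ℝ → ℂ}
    (hg : ∀ i ∈ s, LaplaceAdmissible (g i)) :
    LaplaceAdmissible (fun u => ∑ i ∈ s, g i u) := by
  intro σ hσ
  simpa only [IntegrableOn, Finset.sum_mul] using integrable_finsetSum s fun i hi => hg i hi σ hσ

lemma mul_id (hg : LaplaceAdmissible g) : LaplaceAdmissible (fun u => u * g u) := by
  intro σ hσ
  refine ((hg (σ / 2) (half_pos hσ)).const_mul (2 / σ : ℂ)).mono ?_ ?_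
  · refine (AEStronglyMeasurable.mul ?_ hg.aestronglyMeasurable).mul ?_ <;>
    · apply Continuous.aestronglyMeasurable
      fun_prop
  · rw [ae_restrict_iff' measurableSet_Ioi]
    refine ae_of_all _ fun u (hu : 0 < u) => ?_
    simp only [norm_mul, norm_div, Complex.norm_exp, Complex.norm_real, Real.norm_of_nonneg hu.le,
      Real.norm_of_nonneg hσ.le, Complex.neg_re, Complex.ofReal_re, Complex.norm_ofNat]
    have hu_le : u ≤ 2 / σ * Real.exp (σ / 2 * u) := by
      have := Real.add_one_le_exp (σ / 2 * u)
      calc u = 2 / σ * (σ / 2 * u) := by field_simp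
        _ ≤ _ := by gcongr; linarith
    have hexp_add : Real.exp (-(σ / 2 * u)) = Real.exp (σ / 2 * u) * Real.exp (-(σ * u)) := by
      rw [← Real.exp_add]
      ring_nf
    rw [hexp_add]
    calc u * ‖g u‖ * Real.exp (-(σ * u))
        ≤ (2 / σ * Real.exp (σ / 2 * u)) * ‖g u‖ * Real.exp (-(σ * u)) := by gcongr
      _ = _ := by ring

lemma pow_mul (hg : LaplaceAdmissible g) (n : ℕ) :
    LaplaceAdmissible (fun u => (u : ℂ) ^ n * g u) := by
  induction n with
  | zero => simpa using hg
  | succ n ih =>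
    refine (funext fun u => ?_ : _ = fun u : ℝ => (u : ℂ) ^ (n + 1) * g u) ▸ ih.mul_id
    ring

lemma hasDerivAt_laplace (hg : LaplaceAdmissible g) {w : ℂ} (hw : 0 < w.re) :
    HasDerivAt (laplace g) (-laplace (fun u => u * g u) w) w := by
  have hs : {s : ℂ | w.re / 2 < s.re} ∈ 𝓝 w :=
    (Complex.isOpen_re_gt _).mem_nhds (half_lt_self hw)
  have hg' := hg.mul_id
  have hderiv := hasDerivAt_integral_of_dominated_loc_of_deriv_le
    (μ := volume.restrict (Set.Ioi (0 : ℝ))) (x₀ := w)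
    (F := fun (s : ℂ) (u : ℝ) => g u * Complex.exp (-(s * u)))
    (F' := fun (s : ℂ) (u : ℝ) => -((u * g u) * Complex.exp (-(s * u))))
    (bound := fun u : ℝ => ‖u * g u * Complex.exp (-(w.re / 2 * u : ℝ))‖)
    hs ?_ (hg.integrable hw) ?_ ?_ (hg' _ (half_pos hw)).norm ?_
  · exact hderiv.2.congr_deriv (integral_neg _)
  · filter_upwards [hs] with s hs
    exact (hg.integrable ((half_pos hw).trans hs)).aestronglyMeasurable
  · exact (hg'.integrable hw).aestronglyMeasurable.neg
  · rw [ae_restrict_iff' measurableSet_Ioi]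
    refine ae_of_all _ fun u (hu : 0 < u) s (hs : w.re / 2 < s.re) => ?_
    rw [norm_neg, norm_mul, norm_mul _ (Complex.exp _), Complex.norm_exp, Complex.norm_exp]
    refine mul_le_mul_of_nonneg_left (Real.exp_le_exp.mpr ?_) (norm_nonneg _)
    simp only [Complex.neg_re, Complex.mul_re, Complex.ofReal_re, Complex.ofReal_im, mul_zero,
      sub_zero]
    nlinarith
  · refine ae_of_all _ fun u s _ => ?_
    have hderiv : HasDerivAt (fun s : ℂ => Complex.exp (-(s * u)))
        (Complex.exp (-(s * u)) * (-(1 * u))) s :=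
      (((hasDerivAt_id s).mul_const (u : ℂ)).neg).cexp
    exact (hderiv.const_mul (g u)).congr_deriv (by ring)

lemma laplace_sub (hf : LaplaceAdmissible f) (hg : LaplaceAdmissible g) {w : ℂ} (hw : 0 < w.re) :
    laplace (fun u => f u - g u) w = laplace f w - laplace g w := by
  simp only [laplace, sub_mul]
  exact integral_sub (hf.integrable hw) (hg.integrable hw)

lemma differentiableOn_laplace (hg : LaplaceAdmissible g) :
    DifferentiableOn ℂ (laplace g) {w | 0 < w.re} := fun _ hw =>
  (hg.hasDerivAt_laplace hw).differentiableAt.differentiableWithinAt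

lemma iteratedDeriv_laplace (hg : LaplaceAdmissible g) (n : ℕ) {w : ℂ} (hw : 0 < w.re) :
    iteratedDeriv n (laplace g) w = (-1) ^ n * laplace (fun u => (u : ℂ) ^ n * g u) w := by
  induction n generalizing w with
  | zero => simp
  | succ n ih =>
    have hev : iteratedDeriv n (laplace g) =ᶠ[𝓝 w]
        fun w => (-1) ^ n * laplace (fun u => (u : ℂ) ^ n * g u) w := by
      filter_upwards [(Complex.isOpen_re_gt 0).mem_nhds hw] with s hs using ih hs
    rw [iteratedDeriv_succ, hev.deriv_eq,
      (((hg.pow_mul n).hasDerivAt_laplace hw).const_mul ((-1) ^ n)).deriv]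
    have : (fun u : ℝ => (u : ℂ) * ((u : ℂ) ^ n * g u)) = fun u : ℝ => (u : ℂ) ^ (n + 1) * g u := by
      funext u
      ring
    rw [this]
    ring

end LaplaceAdmissible

lemma laplaceAdmissible_cpow {s : ℝ} (hs : 0 < s) :
    LaplaceAdmissible (fun u => (u : ℂ) ^ ((s - 1 : ℝ) : ℂ)) := by
  intro σ hσ
  have h := integrableOn_rpow_mul_exp_neg_mul_rpow (s := s - 1) (p := 1) (b := σ) (by linarith)
    one_pos hσ
  refine (h.ofReal (𝕜 := ℂ)).congr ?_
  rw [EventuallyEq, ae_restrict_iff' measurableSet_Ioi]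
  refine ae_of_all _ fun u (hu : 0 < u) => ?_
  change ((u ^ (s - 1) * Real.exp (-σ * u ^ (1 : ℝ)) : ℝ) : ℂ) = _
  beta_reduce
  rw [← Complex.ofReal_cpow hu.le, Real.rpow_one, neg_mul]
  push_cast
  rfl

lemma laplace_cpow_ofReal {s r : ℝ} (hs : 0 < s) (hr : 0 < r) :
    laplace (fun u => (u : ℂ) ^ ((s - 1 : ℝ) : ℂ)) r = Real.Gamma s * (r : ℂ) ^ (-(s : ℂ)) := by
  rw [laplace]
  push_cast
  rw [Complex.integral_cpow_mul_exp_neg_mul_Ioi (by simpa using hs) hr, ← Complex.Gamma_ofReal,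
    mul_comm, Complex.cpow_neg, one_div, Complex.inv_cpow]
  rw [Complex.arg_ofReal_of_nonneg hr.le]
  exact Real.pi_pos.ne

lemma laplace_cpow {s : ℝ} (hs : 0 < s) {w : ℂ} (hw : 0 < w.re) :
    laplace (fun u => (u : ℂ) ^ ((s - 1 : ℝ) : ℂ)) w = Real.Gamma s * w ^ (-(s : ℂ)) := by
  have hopen : IsOpen {w : ℂ | 0 < w.re} := Complex.isOpen_re_gt 0
  have hleft := (laplaceAdmissible_cpow hs).differentiableOn_laplace.analyticOnNhd hopen
  have hright : AnalyticOnNhd ℂ (fun w : ℂ => (Real.Gamma s : ℂ) * w ^ (-(s : ℂ)))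
      {w | 0 < w.re} := by
    refine DifferentiableOn.analyticOnNhd (fun w hw => ?_) hopen
    exact ((differentiableAt_id.cpow_const (Or.inl hw)).const_mul _).differentiableWithinAt
  refine hleft.eqOn_of_preconnected_of_frequently_eq hright
    (convex_halfSpace_re_gt 0).isPreconnected (z₀ := 1) (by simp) ?_ hw
  have hreal : Tendsto (fun r : ℝ => (r : ℂ)) (𝓝[≠] 1) (𝓝[≠] 1) := by
    refine tendsto_nhdsWithin_iff.mpr ⟨?_, ?_⟩
    · simpa using (Complex.continuous_ofReal.continuousAt (x := 1)).tendsto.mono_left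
        nhdsWithin_le_nhds
    · filter_upwards [self_mem_nhdsWithin] with r hr
      simpa using hr
  have hev : ∀ᶠ r : ℝ in 𝓝[≠] 1, laplace (fun u => (u : ℂ) ^ ((s - 1 : ℝ) : ℂ)) r =
      Real.Gamma s * (r : ℂ) ^ (-(s : ℂ)) :=
    nhdsWithin_le_nhds ((lt_mem_nhds one_pos).mono fun _ => laplace_cpow_ofReal hs)
  exact hreal.frequently hev.frequently

lemma fourier_indicator_mul_exp_eq_laplace (B : ℝ → ℂ) (σ y : ℝ) :
    𝓕 ((Set.Ioi 0).indicator fun u : ℝ => B u * Complex.exp (-(σ * u : ℝ))) y =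
      laplace B (σ + (2 * π * y : ℝ) * Complex.I) := by
  rw [Real.fourier_real_eq_integral_exp_smul, laplace, ← integral_indicator measurableSet_Ioi]
  refine integral_congr_ae (ae_of_all _ fun v => ?_)
  by_cases hv : v ∈ Set.Ioi (0 : ℝ)
  · simp only [Set.indicator_of_mem hv, smul_eq_mul]
    rw [mul_left_comm, ← Complex.exp_add]
    congr 2
    push_cast
    ring
  · simp only [Set.indicator_of_notMem hv, smul_zero]

lemma LaplaceAdmissible.norm_mul_exp_le {B : ℝ → ℂ} (hB : LaplaceAdmissible B)
    (hc : ContinuousOn B (Set.Ioi 0)) {G : ℝ → ℝ} (hG : Integrable G) {σ : ℝ} (hσ : 0 < σ)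
    (h : ∀ t : ℝ, t ≠ 0 → ‖laplace B (σ + t * Complex.I)‖ ≤ G t) {u : ℝ} (hu : 0 < u) :
    ‖B u‖ * Real.exp (-(σ * u)) ≤ ∫ y : ℝ, G (2 * π * y) := by
  set f : ℝ → ℂ := (Set.Ioi 0).indicator fun u : ℝ => B u * Complex.exp (-(σ * u : ℝ)) with hf
  have hG' : Integrable fun y : ℝ => G (2 * π * y) := hG.comp_mul_left' (by positivity)
  have hfi : Integrable f := (integrable_indicator_iff measurableSet_Ioi).mpr (hB σ hσ)
  have hbound : ∀ᵐ y : ℝ, ‖𝓕 f y‖ ≤ G (2 * π * y) := by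
    filter_upwards [Measure.ae_ne volume (0 : ℝ)] with y hy
    rw [fourier_indicator_mul_exp_eq_laplace]
    exact h _ (by positivity)
  have hFc : Continuous (𝓕 f) :=
    VectorFourier.fourierIntegral_continuous Real.continuous_fourierChar
      (by exact continuous_inner) hfi
  have hFi : Integrable (𝓕 f) := hG'.mono' hFc.aestronglyMeasurable hbound
  have hfc : ContinuousAt f u := by
    have hcont : ContinuousAt (fun u : ℝ => B u * Complex.exp (-(σ * u : ℝ))) u :=
      (hc.continuousAt (Ioi_mem_nhds hu)).mul (by fun_prop)
    refine hcont.congr ?_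
    filter_upwards [Ioi_mem_nhds hu] with v hv
    rw [hf, Set.indicator_of_mem hv]
  have hfu : ‖f u‖ = ‖B u‖ * Real.exp (-(σ * u)) := by
    rw [hf, Set.indicator_of_mem (Set.mem_Ioi.mpr hu), norm_mul, Complex.norm_exp]
    simp
  rw [← hfu, ← hfi.fourierInv_fourier_eq hFi hfc, Real.fourierInv_eq']
  refine norm_integral_le_of_norm_le hG' ?_
  filter_upwards [hbound] with y hy
  rwa [norm_smul, Complex.norm_exp_ofReal_mul_I, one_mul]

-- The bound of `norm_mul_exp_le` does not depend on `σ`, which may therefore tend to `0`.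
lemma LaplaceAdmissible.exists_norm_le {B : ℝ → ℂ} (hB : LaplaceAdmissible B)
    (hc : ContinuousOn B (Set.Ioi 0)) {G : ℝ → ℝ} (hG : Integrable G) {σ₀ : ℝ} (hσ₀ : 0 < σ₀)
    (h : ∀ σ t : ℝ, 0 < σ → σ < σ₀ → t ≠ 0 → ‖laplace B (σ + t * Complex.I)‖ ≤ G t) :
    ∃ M, ∀ u : ℝ, 0 < u → ‖B u‖ ≤ M := by
  refine ⟨∫ y : ℝ, G (2 * π * y), fun u hu => ?_⟩
  have hlim : Tendsto (fun σ : ℝ => ‖B u‖ * Real.exp (-(σ * u))) (𝓝[>] 0) (𝓝 ‖B u‖) := by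
    have hcont : Continuous fun σ : ℝ => ‖B u‖ * Real.exp (-(σ * u)) := by fun_prop
    have hzero := hcont.tendsto 0
    simp only [zero_mul, neg_zero, Real.exp_zero, mul_one] at hzero
    exact hzero.mono_left nhdsWithin_le_nhds
  refine le_of_tendsto hlim ?_
  filter_upwards [Ioo_mem_nhdsGT hσ₀] with σ hσ
  exact hB.norm_mul_exp_le hc hG hσ.1 (fun t ht => h σ t hσ.1 hσ.2 ht) hu

end Laplace

section LocalSingularity

lemma iteratedDeriv_cpow_const (s : ℂ) (n : ℕ) {w : ℂ} (hw : w ∈ Complex.slitPlane) :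
    iteratedDeriv n (fun w : ℂ => w ^ s) w = (∏ i ∈ Finset.range n, (s - i)) * w ^ (s - n) := by
  induction n generalizing w with
  | zero => simp
  | succ n ih =>
    have hev : iteratedDeriv n (fun w : ℂ => w ^ s) =ᶠ[𝓝 w]
        fun w => (∏ i ∈ Finset.range n, (s - i)) * w ^ (s - n) := by
      filter_upwards [Complex.isOpen_slitPlane.mem_nhds hw] with v hv using ih hv
    have hderiv : HasDerivAt (fun w : ℂ => (∏ i ∈ Finset.range n, (s - i)) * w ^ (s - n))
        ((∏ i ∈ Finset.range n, (s - i)) * ((s - n) * w ^ (s - n - 1) * 1)) w :=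
      ((hasDerivAt_id w).cpow_const (c := s - n) hw).const_mul
        (∏ i ∈ Finset.range n, (s - (i : ℂ)))
    rw [iteratedDeriv_succ, hev.deriv_eq, hderiv.deriv, Finset.prod_range_succ]
    push_cast
    rw [show s - ((n : ℂ) + 1) = s - n - 1 by ring]
    ring

lemma exists_eq_sum_add_pow_mul {f : ℂ → ℂ} {ρ : ℝ} (hρ : 0 < ρ)
    (hf : DifferentiableOn ℂ f (Metric.ball 0 ρ)) :
    ∃ (c : ℕ → ℂ) (E : ℕ → ℂ → ℂ), c 0 = f 0 ∧ c 1 = deriv f 0 ∧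
      ∀ n, DifferentiableOn ℂ (E n) (Metric.ball 0 ρ) ∧
        ∀ w, f w = ∑ j ∈ Finset.range n, c j * w ^ j + w ^ n * E n w := by
  set E : ℕ → ℂ → ℂ := fun n => (Function.swap dslope 0)^[n] f
  have hzero : E 0 = f := rfl
  have hsucc : ∀ n, E (n + 1) = dslope (E n) 0 := fun n => Function.iterate_succ_apply' _ _ _
  refine ⟨fun j => E j 0, E, rfl, ?_, fun n => ⟨?_, fun w => ?_⟩⟩
  · change E 1 0 = _
    rw [hsucc 0, dslope_same, hzero]
  · induction n with
    | zero => exact hf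
    | succ n ih =>
      rw [hsucc]
      exact (Complex.differentiableOn_dslope (Metric.ball_mem_nhds 0 hρ)).mpr ih
  · induction n with
    | zero => simp [hzero]
    | succ n ih =>
      have hslope := sub_smul_dslope (E n) 0 w
      rw [sub_zero, smul_eq_mul, ← hsucc] at hslope
      rw [Finset.sum_range_succ, ih]
      linear_combination (-w ^ n) * hslope

lemma mem_slitPlane_of_norm_sub_le {v w : ℂ} (hw : 0 < w.re) (h : ‖v - w‖ ≤ ‖w‖ / 2) :
    v ∈ Complex.slitPlane := by
  have hw0 : 0 < ‖w‖ := norm_pos_iff.mpr fun h0 => by simp [h0] at hw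
  by_contra hv
  rw [Complex.mem_slitPlane_iff, not_or, not_lt, not_not] at hv
  have hnorm_le : ‖w‖ ≤ ‖v - w‖ := by
    rw [← sq_le_sq₀ (norm_nonneg _) (norm_nonneg _), Complex.sq_norm, Complex.sq_norm,
      Complex.normSq_apply, Complex.normSq_apply, Complex.sub_re, Complex.sub_im, hv.2]
    nlinarith
  linarith

lemma exists_norm_iteratedDeriv_cpow_mul_le {E : ℂ → ℂ} {ρ s : ℝ} (hs : 0 ≤ s) (hρ : 0 < ρ)
    (hE : DifferentiableOn ℂ E (Metric.ball 0 ρ)) (n : ℕ) :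
    ∃ C : ℝ, 0 ≤ C ∧ ∀ w : ℂ, 0 < w.re → ‖w‖ ≤ ρ / 4 →
      ‖iteratedDeriv n (fun w => w ^ (s : ℂ) * E w) w‖ ≤ C * ‖w‖ ^ (s - n) := by
  obtain ⟨M, hM⟩ := (isCompact_closedBall (0 : ℂ) (ρ / 2)).exists_bound_of_continuousOn
    (hE.continuousOn.mono (Metric.closedBall_subset_ball (half_lt_self hρ)))
  have hM0 : 0 ≤ M := (norm_nonneg _).trans (hM 0 (Metric.mem_closedBall_self (by positivity)))
  refine ⟨n.factorial * 2 ^ n * 2 ^ s * M, by positivity, fun w hw hwρ => ?_⟩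
  have hw0 : 0 < ‖w‖ := norm_pos_iff.mpr fun h0 => by simp [h0] at hw
  have hnorm : ∀ v, ‖v - w‖ ≤ ‖w‖ / 2 → ‖v‖ ≤ 2 * ‖w‖ := fun v hv => by
    have := norm_add_le (v - w) w
    rw [sub_add_cancel] at this
    linarith
  have hdiff : DifferentiableOn ℂ (fun w => w ^ (s : ℂ) * E w) (Metric.closedBall w (‖w‖ / 2)) := by
    intro v hv
    rw [mem_closedBall_iff_norm] at hv
    have hv_ball : v ∈ Metric.ball (0 : ℂ) ρ := by
      rw [mem_ball_zero_iff]
      linarith [hnorm v hv]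
    refine DifferentiableAt.differentiableWithinAt ?_
    exact (differentiableAt_id.cpow_const (mem_slitPlane_of_norm_sub_le hw hv)).mul
      (hE.differentiableAt (Metric.isOpen_ball.mem_nhds hv_ball))
  have hdc : DiffContOnCl ℂ (fun w => w ^ (s : ℂ) * E w) (Metric.ball w (‖w‖ / 2)) :=
    DifferentiableOn.diffContOnCl (hdiff.mono Metric.closure_ball_subset_closedBall)
  have hcauchy := Complex.norm_iteratedDeriv_le_of_forall_mem_sphere_norm_le n
    (C := (2 * ‖w‖) ^ s * M) (half_pos hw0) hdc fun v hv => by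
      rw [mem_sphere_iff_norm] at hv
      rw [norm_mul, Complex.norm_cpow_real]
      gcongr
      · exact hnorm v hv.le
      · refine hM v ?_
        rw [mem_closedBall_zero_iff]
        linarith [hnorm v hv.le]
  refine hcauchy.trans_eq ?_
  rw [div_pow, Real.mul_rpow two_pos.le hw0.le, Real.rpow_sub hw0, Real.rpow_natCast]
  field_simp


end LocalSingularity

section RieszSmoothing

open MeasureTheory

/-- The Laplace transform of the smoothing kernel `e^{-u} - e^{-2u}`; its quadratic decay makes
Laplace transforms of smoothed sums integrable on vertical lines. -/
noncomputable def rieszFactor (w : ℂ) : ℂ := ((1 + w) * (2 + w))⁻¹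

lemma norm_rieszFactor_le {v w : ℂ} (hw : 0 < w.re) (hv : ‖v - w‖ ≤ 1 / 2) :
    ‖rieszFactor v‖ ≤ 16 * (1 + |w.im|) ^ (-2 : ℝ) := by
  have hre : |v.re - w.re| ≤ 1 / 2 := by
    simpa using (Complex.abs_re_le_norm (v - w)).trans hv
  have him : |v.im - w.im| ≤ 1 / 2 := by
    simpa using (Complex.abs_im_le_norm (v - w)).trans hv
  have norm_add_ge : ∀ a : ℝ, 1 ≤ a → (1 + |w.im|) / 4 ≤ ‖(a : ℂ) + v‖ := by
    intro a ha
    have hnorm_re := Complex.abs_re_le_norm ((a : ℂ) + v)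
    have hnorm_im := Complex.abs_im_le_norm ((a : ℂ) + v)
    simp only [Complex.add_re, Complex.ofReal_re, Complex.add_im, Complex.ofReal_im,
      zero_add] at hnorm_re hnorm_im
    have hre_le := le_abs_self (a + v.re)
    have hre_ge := (abs_le.mp hre).1
    have him_ge := abs_sub_abs_le_abs_sub w.im v.im
    rw [abs_sub_comm] at him_ge
    rcases le_total |w.im| 1 with _ | _ <;> linarith
  have hone := norm_add_ge 1 le_rfl
  have htwo := norm_add_ge 2 one_le_two
  push_cast at hone htwo
  have hpos : 0 < 1 + |w.im| := by positivity
  rw [rieszFactor, norm_inv, norm_mul, Real.rpow_neg hpos.le, Real.rpow_two]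
  calc (‖1 + v‖ * ‖2 + v‖)⁻¹ ≤ (((1 + |w.im|) / 4) * ((1 + |w.im|) / 4))⁻¹ := by gcongr
    _ = _ := by field_simp; norm_num

lemma differentiableAt_rieszFactor {v : ℂ} (hv : -1 < v.re) : DifferentiableAt ℂ rieszFactor v := by
  have hadd_ne_zero : ∀ a : ℝ, 1 ≤ a → (a : ℂ) + v ≠ 0 := fun a ha h0 => by
    have hre := congrArg Complex.re h0
    simp only [Complex.add_re, Complex.ofReal_re, Complex.zero_re] at hre
    linarith
  have hone := hadd_ne_zero 1 le_rfl
  have htwo := hadd_ne_zero 2 one_le_two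
  push_cast at hone htwo
  unfold rieszFactor
  exact DifferentiableAt.inv (by fun_prop) (mul_ne_zero hone htwo)

lemma hasDerivAt_rieszFactor_zero : HasDerivAt rieszFactor (-(3 / 4)) 0 := by
  have hprod : HasDerivAt (fun w : ℂ => (1 + w) * (2 + w)) (1 * (2 + 0) + (1 + 0) * 1) 0 :=
    ((hasDerivAt_id 0).const_add 1).mul ((hasDerivAt_id 0).const_add 2)
  exact (hprod.fun_inv (by norm_num)).congr_deriv (by norm_num)

lemma norm_iteratedDeriv_rieszFactor_le (n : ℕ) {w : ℂ} (hw : 0 < w.re) :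
    ‖iteratedDeriv n rieszFactor w‖ ≤ n.factorial * 2 ^ n * 16 * (1 + |w.im|) ^ (-2 : ℝ) := by
  have hdiff : DifferentiableOn ℂ rieszFactor (Metric.closedBall w (1 / 2)) := by
    intro v hv
    rw [mem_closedBall_iff_norm] at hv
    have := (abs_le.mp ((Complex.abs_re_le_norm (v - w)).trans hv)).1
    rw [Complex.sub_re] at this
    exact (differentiableAt_rieszFactor (by linarith)).differentiableWithinAt
  have hcauchy := Complex.norm_iteratedDeriv_le_of_forall_mem_sphere_norm_le n (half_pos one_pos)
    (DifferentiableOn.diffContOnCl (hdiff.mono Metric.closure_ball_subset_closedBall))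
    fun v hv => norm_rieszFactor_le hw (mem_sphere_iff_norm.mp hv).le
  refine hcauchy.trans_eq ?_
  rw [div_pow, one_pow]
  field_simp

lemma contDiffAt_rieszFactor (n : ℕ) {w : ℂ} (hw : 0 < w.re) : ContDiffAt ℂ n rieszFactor w := by
  have h : DifferentiableOn ℂ rieszFactor {w | 0 < w.re} := fun v (hv : 0 < v.re) =>
    (differentiableAt_rieszFactor (by linarith)).differentiableWithinAt
  exact (h.contDiffOn (Complex.isOpen_re_gt 0)).contDiffAt ((Complex.isOpen_re_gt 0).mem_nhds hw)

lemma SlowUpTo.exists_norm_iteratedDeriv_le {F : ℂ → ℂ} {n : ℕ} (hF : SlowUpTo n F) {ρ : ℝ}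
    (hρ : 0 < ρ) : ∃ C : ℝ, 0 ≤ C ∧ ∀ w : ℂ, 0 < w.re → w.re ≤ 1 → ρ ≤ |w.im| →
      ‖iteratedDeriv n (fun w => F (1 + w) * rieszFactor w) w‖ ≤
        C * (1 + |w.im|) ^ (-(3 / 2) : ℝ) := by
  choose! C hC0 hC using fun j (hj : j ≤ n) => (hF.slow j hj).exists_pos (half_pos one_pos) hρ
  refine ⟨∑ i ∈ Finset.range (n + 1),
    n.choose i * (C i * ((n - i).factorial * 2 ^ (n - i) * 16)),
    Finset.sum_nonneg fun i hi => ?_, fun w hw hw1 hwρ => ?_⟩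
  · have := hC0 i (Finset.mem_range_succ_iff.mp hi)
    positivity
  have hs : 1 < (1 + w).re := by simpa using hw
  have hFc : ContDiffAt ℂ n (fun w => F (1 + w)) w :=
    (contDiffAt_of_differentiableOn_one_lt_re hF.differentiableOn hs).comp w (by fun_prop)
  have hpos : 0 < 1 + |w.im| := by positivity
  rw [iteratedDeriv_fun_mul hFc (contDiffAt_rieszFactor n hw), Finset.sum_mul]
  refine (norm_sum_le _ _).trans (Finset.sum_le_sum fun i hi => ?_)
  have hin : i ≤ n := Finset.mem_range_succ_iff.mp hi
  rw [norm_mul, norm_mul, Complex.norm_natCast, iteratedDeriv_comp_const_add]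
  have hFi := hC i hin (1 + w) hs (by rw [Complex.add_re, Complex.one_re]; linarith)
    (by simpa using hwρ)
  have hriesz := norm_iteratedDeriv_rieszFactor_le (n - i) hw
  rw [Complex.add_im, Complex.one_im, zero_add] at hFi
  have hCi := hC0 i hin
  calc _ ≤ n.choose i * (C i * (1 + |w.im|) ^ (1 / 2 : ℝ)) *
        ((n - i).factorial * 2 ^ (n - i) * 16 * (1 + |w.im|) ^ (-2 : ℝ)) := by gcongr
    _ = n.choose i * (C i * ((n - i).factorial * 2 ^ (n - i) * 16)) *
        ((1 + |w.im|) ^ (1 / 2 : ℝ) * (1 + |w.im|) ^ (-2 : ℝ)) := by ring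
    _ = _ := by
      rw [← Real.rpow_add hpos]
      norm_num

lemma exists_norm_iteratedDeriv_cpow_le (s : ℝ) (n : ℕ) {ρ : ℝ} (hρ : 0 < ρ) (hsn : s ≤ n) :
    ∃ C : ℝ, 0 ≤ C ∧ ∀ w : ℂ, 0 < w.re → ρ ≤ |w.im| →
      ‖iteratedDeriv n (fun w : ℂ => w ^ (s : ℂ)) w‖ ≤ C * (1 + |w.im|) ^ (s - n) := by
  refine ⟨‖∏ i ∈ Finset.range n, ((s : ℂ) - i)‖ * (ρ / (1 + ρ)) ^ (s - n), by positivity,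
    fun w hw hwρ => ?_⟩
  have hle : ρ / (1 + ρ) * (1 + |w.im|) ≤ ‖w‖ := by
    refine le_trans ?_ (Complex.abs_im_le_norm w)
    rw [div_mul_eq_mul_div, div_le_iff₀ (by positivity)]
    nlinarith
  have hcast : (s : ℂ) - n = ((s - n : ℝ) : ℂ) := by push_cast; rfl
  rw [iteratedDeriv_cpow_const _ _ (Or.inl hw), norm_mul, hcast, Complex.norm_cpow_real, mul_assoc,
    ← Real.mul_rpow (by positivity) (by positivity)]
  refine mul_le_mul_of_nonneg_left ?_ (norm_nonneg _)
  exact Real.rpow_le_rpow_of_nonpos (by positivity) hle (by linarith)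

lemma Gamma_add_natCast_eq_prod {z : ℝ} (hz : 0 < z) (n : ℕ) :
    Real.Gamma (z + n) = (∏ i ∈ Finset.range n, (z + i)) * Real.Gamma z := by
  induction n with
  | zero => simp
  | succ n ih =>
    push_cast
    rw [← add_assoc, Real.Gamma_add_one (by positivity), ih, Finset.prod_range_succ]
    ring

/-- The coefficient with which `w ^ (j - z)` in a Laplace transform contributes `u ^ (z - j - 1)`
to the original function. It equals `1 / Γ(z - j)`, written so that `Γ` is evaluated at a positive
argument when `j < z + J`. -/
noncomputable def singularCoeff (z : ℝ) (J j : ℕ) : ℝ :=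
  (∏ i ∈ Finset.range J, (z - j + i)) / Real.Gamma (z - j + J)

lemma singularCoeff_zero {z : ℝ} (hz : 0 < z) (J : ℕ) :
    singularCoeff z J 0 = (Real.Gamma z)⁻¹ := by
  have hprod : ∏ i ∈ Finset.range J, (z + (i : ℝ)) ≠ 0 :=
    Finset.prod_ne_zero_iff.mpr fun i _ => by positivity
  have hΓ := (Real.Gamma_pos_of_pos hz).ne'
  rw [singularCoeff, Nat.cast_zero, sub_zero, Gamma_add_natCast_eq_prod hz]
  field_simp

lemma singularCoeff_one {z : ℝ} (hz : 0 < z) (J : ℕ) :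
    singularCoeff z (J + 1) 1 = (z - 1) * (Real.Gamma z)⁻¹ := by
  have hprod : ∏ i ∈ Finset.range J, (z + (i : ℝ)) ≠ 0 :=
    Finset.prod_ne_zero_iff.mpr fun i _ => by positivity
  have hΓ := (Real.Gamma_pos_of_pos hz).ne'
  have hsplit : ∏ i ∈ Finset.range (J + 1), (z - (1 : ℕ) + (i : ℝ)) =
      (∏ i ∈ Finset.range J, (z + (i : ℝ))) * (z - 1) := by
    rw [Finset.prod_range_succ']
    congr 1
    · exact Finset.prod_congr rfl fun i _ => by push_cast; ring
    · push_cast; ring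
  have harg : z - (1 : ℕ) + ((J + 1 : ℕ) : ℝ) = z + J := by push_cast; ring
  rw [singularCoeff, hsplit, harg, Gamma_add_natCast_eq_prod hz]
  field_simp

lemma singularCoeff_mul_laplace {z : ℝ} {J j : ℕ} (hj : 0 < z - j + J) {w : ℂ} (hw : 0 < w.re) :
    singularCoeff z J j * laplace (fun u => (u : ℂ) ^ ((z - j + J - 1 : ℝ) : ℂ)) w =
      (-1) ^ J * iteratedDeriv J (fun w : ℂ => w ^ ((j - z : ℝ) : ℂ)) w := by
  have hΓ : (Real.Gamma (z - j + J) : ℂ) ≠ 0 := by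
    exact_mod_cast (Real.Gamma_pos_of_pos hj).ne'
  rw [laplace_cpow hj hw, iteratedDeriv_cpow_const _ _ (Or.inl hw), singularCoeff,
    Complex.ofReal_div, ← mul_assoc, div_mul_cancel₀ _ hΓ, ← mul_assoc]
  congr 1
  · push_cast
    rw [show (-1 : ℂ) ^ J = ∏ _i ∈ Finset.range J, (-1) by simp, ← Finset.prod_mul_distrib]
    exact Finset.prod_congr rfl fun i _ => by ring
  · congr 1
    push_cast
    ring

lemma contDiffAt_cpow_const (s : ℂ) (n : ℕ) {w : ℂ} (hw : 0 < w.re) :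
    ContDiffAt ℂ n (fun w : ℂ => w ^ s) w := by
  have h : DifferentiableOn ℂ (fun w : ℂ => w ^ s) {w | 0 < w.re} := fun v (hv : 0 < v.re) =>
    (differentiableAt_id.cpow_const (Or.inl hv)).differentiableWithinAt
  exact (h.contDiffOn (Complex.isOpen_re_gt 0)).contDiffAt ((Complex.isOpen_re_gt 0).mem_nhds hw)

/-- `w ^ (-z)` times a polynomial with coefficients `c`: what a Laplace transform with an algebraic
singularity at the origin has to be freed from before its inversion integral converges. -/
noncomputable def singularPart (z : ℝ) (J : ℕ) (c : ℕ → ℂ) (w : ℂ) : ℂ :=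
  ∑ j ∈ Finset.range J, c j * w ^ ((j - z : ℝ) : ℂ)

lemma cpow_natCast_sub {w : ℂ} (hw : w ≠ 0) (z : ℝ) (j : ℕ) :
    w ^ ((j - z : ℝ) : ℂ) = w ^ (-(z : ℂ)) * w ^ j := by
  rw [← Complex.cpow_natCast, ← Complex.cpow_add _ _ hw]
  congr 1
  push_cast
  ring

lemma contDiffAt_mul_cpow_natCast_sub (z : ℝ) (J j : ℕ) (a : ℂ) {w : ℂ} (hw : 0 < w.re) :
    ContDiffAt ℂ J (fun w : ℂ => a * w ^ ((j - z : ℝ) : ℂ)) w :=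
  contDiffAt_const.mul (contDiffAt_cpow_const _ _ hw)

lemma contDiffAt_singularPart (z : ℝ) (J : ℕ) (c : ℕ → ℂ) {w : ℂ} (hw : 0 < w.re) :
    ContDiffAt ℂ J (singularPart z J c) w :=
  ContDiffAt.sum fun j _ => contDiffAt_mul_cpow_natCast_sub z J j (c j) hw

lemma iteratedDeriv_singularPart (z : ℝ) (J : ℕ) (c : ℕ → ℂ) {w : ℂ} (hw : 0 < w.re) :
    iteratedDeriv J (singularPart z J c) w =
      ∑ j ∈ Finset.range J, c j * iteratedDeriv J (fun w : ℂ => w ^ ((j - z : ℝ) : ℂ)) w := by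
  unfold singularPart
  rw [iteratedDeriv_fun_sum fun j _ => contDiffAt_mul_cpow_natCast_sub z J j (c j) hw]
  simp only [iteratedDeriv_const_mul_field]

lemma exists_norm_iteratedDeriv_singularPart_le {z : ℝ} (hz : 0 ≤ z) (J : ℕ) (c : ℕ → ℂ) {ρ : ℝ}
    (hρ : 0 < ρ) : ∃ C : ℝ, 0 ≤ C ∧ ∀ w : ℂ, 0 < w.re → ρ ≤ |w.im| →
      ‖iteratedDeriv J (singularPart z J c) w‖ ≤ C * (1 + |w.im|) ^ (-(1 + z)) := by
  have hlt : ∀ j < J, (j : ℝ) + 1 ≤ J := fun j hj => by exact_mod_cast hj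
  choose! C hC0 hC using fun j (hj : j < J) =>
    exists_norm_iteratedDeriv_cpow_le (j - z) J hρ (by linarith [hlt j hj])
  refine ⟨∑ j ∈ Finset.range J, ‖c j‖ * C j, Finset.sum_nonneg fun j hj =>
    mul_nonneg (norm_nonneg _) (hC0 j (Finset.mem_range.mp hj)), fun w hw hwρ => ?_⟩
  rw [iteratedDeriv_singularPart z J c hw, Finset.sum_mul]
  refine (norm_sum_le _ _).trans (Finset.sum_le_sum fun j hj => ?_)
  rw [Finset.mem_range] at hj
  have hCj := hC0 j hj
  rw [norm_mul, mul_assoc]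
  refine mul_le_mul_of_nonneg_left ((hC j hj w hw hwρ).trans ?_) (norm_nonneg _)
  gcongr
  · linarith [abs_nonneg w.im]
  · linarith [hlt j hj]

-- The `J`-th derivative of the remainder `w ^ (J - z) * E w` is only of size `‖w‖ ^ (-z)`.
lemma exists_norm_iteratedDeriv_sub_singularPart_le {f : ℂ → ℂ} {z R : ℝ} {J : ℕ} (hR : 0 < R)
    (hzJ : z ≤ J) {c : ℕ → ℂ} {E : ℂ → ℂ} (hE : DifferentiableOn ℂ E (Metric.ball 0 R))
    (hf : ∀ w ∈ Metric.ball (0 : ℂ) R, 0 < w.re →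
      f w = w ^ (-(z : ℂ)) * (∑ j ∈ Finset.range J, c j * w ^ j + w ^ J * E w)) :
    ∃ C : ℝ, 0 ≤ C ∧ ∀ w : ℂ, 0 < w.re → ‖w‖ ≤ R / 4 →
      ‖iteratedDeriv J f w - iteratedDeriv J (singularPart z J c) w‖ ≤ C * ‖w‖ ^ (-z) := by
  obtain ⟨C, hC0, hC⟩ :=
    exists_norm_iteratedDeriv_cpow_mul_le (s := J - z) (sub_nonneg.mpr hzJ) hR hE J
  refine ⟨C, hC0, fun w hw hwR => ?_⟩
  have hmem : w ∈ Metric.ball (0 : ℂ) R := by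
    rw [mem_ball_zero_iff]
    linarith
  have hev : f =ᶠ[𝓝 w] fun w => singularPart z J c w + w ^ ((J - z : ℝ) : ℂ) * E w := by
    filter_upwards [(Complex.isOpen_re_gt 0).mem_nhds hw, Metric.isOpen_ball.mem_nhds hmem]
      with v hv hvR
    have hv0 : v ≠ 0 := fun h0 => by simp [h0] at hv
    simp only [hf v hvR hv, singularPart, cpow_natCast_sub hv0, mul_add, Finset.mul_sum, mul_assoc,
      mul_left_comm]
  have hEw : ContDiffAt ℂ J E w :=
    (hE.contDiffOn Metric.isOpen_ball).contDiffAt (Metric.isOpen_ball.mem_nhds hmem)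
  rw [hev.iteratedDeriv_eq J, iteratedDeriv_fun_add (contDiffAt_singularPart z J c hw)
    ((contDiffAt_cpow_const _ _ hw).mul hEw), add_sub_cancel_left]
  simpa using hC w hw hwR

lemma integrable_indicator_abs_rpow {s : ℝ} (hs : -1 < s) :
    Integrable ((Set.Icc (-1) 1).indicator fun t : ℝ => |t| ^ s) := by
  rw [integrable_indicator_iff measurableSet_Icc,
    ← intervalIntegrable_iff_integrableOn_Icc_of_le (by norm_num)]
  have hpos : IntervalIntegrable (fun t : ℝ => |t| ^ s) volume 0 1 := by
    refine (intervalIntegral.intervalIntegrable_rpow' hs).congr fun t ht => ?_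
    rw [Set.uIoc_of_le zero_le_one] at ht
    rw [abs_of_pos ht.1]
  have hneg := hpos.comp_mul_left (c := -1)
  simp only [neg_mul, one_mul, abs_neg, zero_div, one_div, inv_neg, inv_one] at hneg
  exact hneg.symm.trans hpos

lemma integrable_one_add_abs_rpow {s : ℝ} (hs : 1 < s) :
    Integrable fun t : ℝ => (1 + |t|) ^ (-s) :=
  integrable_one_add_norm (by simpa using hs)

lemma exists_mul_rieszFactor_eq_sum_add {K : ℂ → ℂ} {R : ℝ} (hR : 0 < R) (hR1 : R ≤ 1)
    (hK : DifferentiableOn ℂ K (Metric.ball 0 R)) (n : ℕ) :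
    ∃ (c : ℕ → ℂ) (E : ℂ → ℂ), c 0 = K 0 / 2 ∧ c 1 = deriv K 0 / 2 - 3 / 4 * K 0 ∧
      DifferentiableOn ℂ E (Metric.ball 0 R) ∧
        ∀ w, K w * rieszFactor w = ∑ j ∈ Finset.range n, c j * w ^ j + w ^ n * E w := by
  have hdiff : DifferentiableOn ℂ (fun w => K w * rieszFactor w) (Metric.ball 0 R) := by
    refine hK.mul fun w hw => (differentiableAt_rieszFactor ?_).differentiableWithinAt
    rw [mem_ball_zero_iff] at hw
    linarith [(abs_le.mp (Complex.abs_re_le_norm w)).1]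
  obtain ⟨c, E, hc0, hc1, hE⟩ := exists_eq_sum_add_pow_mul hR hdiff
  have hKd : HasDerivAt K (deriv K 0) 0 :=
    (hK.differentiableAt (Metric.ball_mem_nhds 0 hR)).hasDerivAt
  refine ⟨c, E n, ?_, ?_, hE n⟩
  · rw [hc0]
    norm_num [rieszFactor]
    ring
  · rw [hc1, (hKd.fun_mul hasDerivAt_rieszFactor_zero).deriv]
    norm_num [rieszFactor]
    ring

section AlgebraicSingularity

variable {F K : ℂ → ℂ} {J : ℕ} {z ρ : ℝ}

lemma exists_integrable_majorant (hF : SlowUpTo J F) (hz : 0 < z) (hz1 : z < 1)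
    (hJ : 1 ≤ J) (hρ : 0 < ρ) (hK : DifferentiableOn ℂ K (Metric.ball 0 ρ))
    (hFK : ∀ w ∈ Metric.ball (0 : ℂ) ρ, 0 < w.re → F (1 + w) = w ^ (-(z : ℂ)) * K w) :
    ∃ (c : ℕ → ℂ) (G : ℝ → ℝ) (σ₀ : ℝ), c 0 = K 0 / 2 ∧ c 1 = deriv K 0 / 2 - 3 / 4 * K 0 ∧
      Integrable G ∧ 0 < σ₀ ∧ ∀ w : ℂ, 0 < w.re → w.re < σ₀ → w.im ≠ 0 →
      ‖iteratedDeriv J (fun w => F (1 + w) * rieszFactor w) w -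
        iteratedDeriv J (singularPart z J c) w‖ ≤ G w.im := by
  set R := min ρ 1
  have hR : 0 < R := lt_min hρ one_pos
  have hR1 : R ≤ 1 := min_le_right ρ 1
  have hsub : Metric.ball (0 : ℂ) R ⊆ Metric.ball 0 ρ := Metric.ball_subset_ball (min_le_left _ _)
  obtain ⟨c, E, hc0, hc1, hE, hKE⟩ := exists_mul_rieszFactor_eq_sum_add hR hR1 (hK.mono hsub) J
  have hzJ : z ≤ J := hz1.le.trans (by exact_mod_cast hJ)
  obtain ⟨C₁, hC₁, hnear⟩ := exists_norm_iteratedDeriv_sub_singularPart_le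
    (f := fun w => F (1 + w) * rieszFactor w) hR hzJ hE fun w hw hw0 => by
      rw [hFK w (hsub hw) hw0, mul_assoc, hKE]
  obtain ⟨C₂, hC₂, hfar⟩ := hF.exists_norm_iteratedDeriv_le (ρ := R / 8) (by positivity)
  obtain ⟨C₃, hC₃, hsing⟩ :=
    exists_norm_iteratedDeriv_singularPart_le hz.le J c (ρ := R / 8) (by positivity)
  set G₁ : ℝ → ℝ := (Set.Icc (-1) 1).indicator fun t => |t| ^ (-z)
  set G₂ : ℝ → ℝ := fun t => C₂ * (1 + |t|) ^ (-(3 / 2) : ℝ) + C₃ * (1 + |t|) ^ (-(1 + z))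
  have hG₁ : Integrable G₁ := integrable_indicator_abs_rpow (neg_lt_neg hz1)
  have hG₂ : Integrable G₂ := ((integrable_one_add_abs_rpow (by norm_num)).const_mul C₂).add
    ((integrable_one_add_abs_rpow (by linarith)).const_mul C₃)
  have hG₁0 : ∀ t, 0 ≤ G₁ t := fun t => Set.indicator_nonneg (fun t _ => by positivity) t
  have hG₂0 : ∀ t, 0 ≤ G₂ t := fun t => by positivity
  refine ⟨c, fun t => C₁ * G₁ t + G₂ t, R / 8, hc0, hc1, (hG₁.const_mul C₁).add hG₂,
    by positivity, fun w hw hwσ hwim => ?_⟩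
  rcases lt_or_ge |w.im| (R / 8) with hsmall | hbig
  · have hwn : ‖w‖ ≤ R / 4 := by
      have hnorm := Complex.norm_le_abs_re_add_abs_im w
      rw [abs_of_pos hw] at hnorm
      linarith
    have him : w.im ∈ Set.Icc (-1 : ℝ) 1 := abs_le.mp (by linarith)
    refine (hnear w hw hwn).trans (le_add_of_le_of_nonneg ?_ (hG₂0 _))
    simp only [G₁, Set.indicator_of_mem him]
    refine mul_le_mul_of_nonneg_left ?_ hC₁
    exact Real.rpow_le_rpow_of_nonpos (abs_pos.mpr hwim) (Complex.abs_im_le_norm w) (by linarith)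
  · refine le_add_of_nonneg_of_le (mul_nonneg hC₁ (hG₁0 _)) ((norm_sub_le _ _).trans ?_)
    exact add_le_add (hfar w hw (by linarith) hbig) (hsing w hw hbig)

/-- The function on `(0, ∞)` whose Laplace transform is the `J`-th derivative of
`singularPart z J c`, up to sign. -/
noncomputable def singularOriginal (z : ℝ) (J : ℕ) (c : ℕ → ℂ) (u : ℝ) : ℂ :=
  ∑ j ∈ Finset.range J, c j * singularCoeff z J j * (u : ℂ) ^ ((z - j + J - 1 : ℝ) : ℂ)

lemma laplaceAdmissible_singularOriginal_term (hz : 0 < z) (c : ℕ → ℂ) {j : ℕ} (hj : j < J) :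
    LaplaceAdmissible
      (fun u => c j * singularCoeff z J j * (u : ℂ) ^ ((z - j + J - 1 : ℝ) : ℂ)) := by
  have hjJ : (j : ℝ) + 1 ≤ J := by exact_mod_cast hj
  exact (laplaceAdmissible_cpow (by linarith)).const_mul _

lemma laplaceAdmissible_singularOriginal (hz : 0 < z) (c : ℕ → ℂ) :
    LaplaceAdmissible (singularOriginal z J c) :=
  LaplaceAdmissible.finset_sum _ fun _ hj =>
    laplaceAdmissible_singularOriginal_term hz c (Finset.mem_range.mp hj)

lemma laplace_singularOriginal (hz : 0 < z) (c : ℕ → ℂ) {w : ℂ} (hw : 0 < w.re) :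
    laplace (singularOriginal z J c) w = (-1) ^ J * iteratedDeriv J (singularPart z J c) w := by
  rw [laplace, iteratedDeriv_singularPart z J c hw, Finset.mul_sum]
  simp only [singularOriginal, Finset.sum_mul]
  rw [integral_finsetSum _ fun j hj =>
    (laplaceAdmissible_singularOriginal_term hz c (Finset.mem_range.mp hj)).integrable hw]
  refine Finset.sum_congr rfl fun j hj => ?_
  have hjJ : (j : ℝ) + 1 ≤ J := by exact_mod_cast Finset.mem_range.mp hj
  rw [mul_left_comm, ← singularCoeff_mul_laplace (by linarith) hw, laplace, ← mul_assoc,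
    ← integral_const_mul]
  simp only [mul_assoc]

lemma continuousOn_singularOriginal (z : ℝ) (J : ℕ) (c : ℕ → ℂ) :
    ContinuousOn (singularOriginal z J c) (Set.Ioi 0) :=
  continuousOn_finsetSum _ fun _ _ => continuousOn_const.mul fun _ hu =>
    (Complex.continuousAt_ofReal_cpow_const _ _ (Or.inr (ne_of_gt hu))).continuousWithinAt

/- Integrability of the inversion integral after `J` differentiations and removal of the singular
terms bounds `u ^ J` times the error, i.e. saves `J` powers of `u`. -/
theorem exists_norm_pow_mul_sub_singularOriginal_le (hF : SlowUpTo J F) (hz : 0 < z) (hz1 : z < 1)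
    (hJ : 1 ≤ J) (hρ : 0 < ρ) (hK : DifferentiableOn ℂ K (Metric.ball 0 ρ))
    (hFK : ∀ w ∈ Metric.ball (0 : ℂ) ρ, 0 < w.re → F (1 + w) = w ^ (-(z : ℂ)) * K w)
    {A : ℝ → ℂ} (hA : LaplaceAdmissible A) (hAc : ContinuousOn A (Set.Ioi 0))
    (hAF : ∀ w : ℂ, 0 < w.re → laplace A w = F (1 + w) * rieszFactor w) :
    ∃ (c : ℕ → ℂ) (M : ℝ), c 0 = K 0 / 2 ∧ c 1 = deriv K 0 / 2 - 3 / 4 * K 0 ∧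
      ∀ u : ℝ, 0 < u → ‖(u : ℂ) ^ J * A u - singularOriginal z J c u‖ ≤ M := by
  obtain ⟨c, G, σ₀, hc0, hc1, hG, hσ₀, hmajorant⟩ :=
    exists_integrable_majorant hF hz hz1 hJ hρ hK hFK
  have hsing := laplaceAdmissible_singularOriginal (J := J) hz c
  have hlaplace : ∀ w : ℂ, 0 < w.re →
      laplace (fun u : ℝ => (u : ℂ) ^ J * A u - singularOriginal z J c u) w =
        (-1) ^ J * (iteratedDeriv J (fun w => F (1 + w) * rieszFactor w) w -
          iteratedDeriv J (singularPart z J c) w) := fun w hw => by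
    have hev : laplace A =ᶠ[𝓝 w] fun w => F (1 + w) * rieszFactor w := by
      filter_upwards [(Complex.isOpen_re_gt 0).mem_nhds hw] with v hv using hAF v hv
    rw [(hA.pow_mul J).laplace_sub hsing hw, laplace_singularOriginal hz c hw, mul_sub,
      ← hev.iteratedDeriv_eq J, hA.iteratedDeriv_laplace J hw, ← mul_assoc, ← mul_pow, neg_one_mul,
      neg_neg, one_pow, one_mul]
  obtain ⟨M, hM⟩ := ((hA.pow_mul J).sub hsing).exists_norm_le
    ((ContinuousOn.mul (by fun_prop) hAc).sub (continuousOn_singularOriginal z J c)) hG hσ₀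
    fun σ t hσ hσσ₀ ht => by
      have hre : (σ + t * Complex.I : ℂ).re = σ := by simp
      have him : (σ + t * Complex.I : ℂ).im = t := by simp
      rw [hlaplace _ (by rwa [hre]), norm_mul, norm_pow, norm_neg, norm_one, one_pow, one_mul]
      exact (hmajorant _ (by rwa [hre]) (by rwa [hre]) (by rwa [him])).trans_eq (by rw [him])
  exact ⟨c, M, hc0, hc1, hM⟩

end AlgebraicSingularity

end RieszSmoothing

/-! ### From Riesz sums to summatory functions -/

section RieszSum

open MeasureTheory

/-- The first Riesz sum of `a`, a smoothed version of `summatory a`. -/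
noncomputable def rieszSum (a : ℕ → ℝ) (x : ℝ) : ℝ := ∑ n ∈ Finset.range (⌊x⌋₊ + 1), a n * (x - n)

lemma rieszSum_eq_sum_max (a : ℕ → ℝ) {x : ℝ} (hx : 0 ≤ x) {N : ℕ} (hN : x < N) :
    rieszSum a x = ∑ n ∈ Finset.range N, a n * max (x - n) 0 := by
  have hfloor : ⌊x⌋₊ + 1 ≤ N := (Nat.floor_lt hx).mpr hN
  rw [rieszSum, ← Finset.sum_subset (Finset.range_subset_range.mpr hfloor)]
  · refine Finset.sum_congr rfl fun n hn => ?_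
    have hnx : (n : ℝ) ≤ x := (Nat.le_floor_iff hx).mp (Finset.mem_range_succ_iff.mp hn)
    rw [max_eq_left (by linarith)]
  · intro n _ hn
    have hxn : x < n := (Nat.floor_lt hx).mp (by simpa using hn)
    rw [max_eq_right (by linarith), mul_zero]

lemma continuousOn_rieszSum (a : ℕ → ℝ) : ContinuousOn (rieszSum a) (Set.Ioi 0) := by
  intro x hx
  obtain ⟨N, hN⟩ := exists_nat_gt x
  have hcont : ContinuousAt (fun x : ℝ => ∑ n ∈ Finset.range N, a n * max (x - n) 0) x := by
    fun_prop
  refine (hcont.congr ?_).continuousWithinAt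
  filter_upwards [Ioo_mem_nhds hx hN] with y hy
  exact (rieszSum_eq_sum_max a hy.1.le hy.2).symm

lemma rieszSum_mem_Icc {a : ℕ → ℝ} (ha0 : a 0 = 0) (ha : ∀ n, a n ∈ Set.Icc (0 : ℝ) 1) {x : ℝ}
    (hx : 0 ≤ x) : rieszSum a x ∈ Set.Icc 0 (x ^ 2) := by
  have hle : ∀ n ∈ Finset.range (⌊x⌋₊ + 1), 0 ≤ x - n := fun _ hn => by
    have := (Nat.le_floor_iff hx).mp (Finset.mem_range_succ_iff.mp hn)
    linarith
  refine ⟨Finset.sum_nonneg fun _ hn => mul_nonneg (ha _).1 (hle _ hn), ?_⟩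
  rw [rieszSum, Finset.sum_range_succ']
  simp only [ha0, zero_mul, add_zero]
  calc _ ≤ ∑ _ ∈ Finset.range ⌊x⌋₊, x := by
        refine Finset.sum_le_sum fun n hn => ?_
        have hsub := hle (n + 1) (by simpa using hn)
        calc a (n + 1) * (x - (n + 1 : ℕ)) ≤ 1 * (x - (n + 1 : ℕ)) := by
              gcongr
              exact (ha _).2
          _ ≤ x := by linarith [Nat.cast_nonneg (α := ℝ) (n + 1)]
    _ ≤ x ^ 2 := by
        rw [Finset.sum_const, Finset.card_range, nsmul_eq_mul, sq]
        gcongr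
        exact Nat.floor_le hx

/-- The first Riesz sum in the logarithmic variable `u = log x`, normalised by `x ^ 2`. -/
noncomputable def rieszLog (a : ℕ → ℝ) (u : ℝ) : ℂ :=
  (Real.exp (-(2 * u)) * rieszSum a (Real.exp u) : ℝ)

lemma continuousOn_rieszLog (a : ℕ → ℝ) : ContinuousOn (rieszLog a) (Set.Ioi 0) := by
  refine Complex.continuous_ofReal.comp_continuousOn (ContinuousOn.mul (by fun_prop) ?_)
  exact (continuousOn_rieszSum a).comp (by fun_prop) fun u _ => Real.exp_pos u

lemma norm_rieszLog_le {a : ℕ → ℝ} (ha0 : a 0 = 0) (ha : ∀ n, a n ∈ Set.Icc (0 : ℝ) 1) (u : ℝ) :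
    ‖rieszLog a u‖ ≤ 1 := by
  obtain ⟨hnonneg, hle⟩ := rieszSum_mem_Icc ha0 ha (Real.exp_pos u).le
  rw [rieszLog, Complex.norm_real, Real.norm_of_nonneg (by positivity)]
  calc _ ≤ Real.exp (-(2 * u)) * Real.exp u ^ 2 := by gcongr
    _ = 1 := by
      rw [← Real.exp_nat_mul, ← Real.exp_add]
      simp

lemma laplaceAdmissible_of_norm_le {g : ℝ → ℂ} (hg : ContinuousOn g (Set.Ioi 0)) {C : ℝ}
    (hC : ∀ u, 0 < u → ‖g u‖ ≤ C) : LaplaceAdmissible g := by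
  intro σ hσ
  refine ((integrableOn_exp_mul_Ioi (neg_lt_zero.mpr hσ) 0).const_mul C).mono' ?_ ?_
  · exact (hg.mul (by fun_prop)).aestronglyMeasurable measurableSet_Ioi
  · rw [ae_restrict_iff' measurableSet_Ioi]
    refine ae_of_all _ fun u hu => ?_
    rw [norm_mul, Complex.norm_exp, Complex.neg_re, Complex.ofReal_re, neg_mul]
    exact mul_le_mul_of_nonneg_right (hC u hu) (Real.exp_pos _).le

lemma laplaceAdmissible_rieszLog {a : ℕ → ℝ} (ha0 : a 0 = 0)
    (ha : ∀ n, a n ∈ Set.Icc (0 : ℝ) 1) : LaplaceAdmissible (rieszLog a) :=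
  laplaceAdmissible_of_norm_le (continuousOn_rieszLog a) fun u _ => norm_rieszLog_le ha0 ha u

/-- The contribution of the coefficient `a n = 1` to `rieszLog a u`. -/
noncomputable def rieszKernel (n : ℕ) (u : ℝ) : ℝ := Real.exp (-(2 * u)) * max (Real.exp u - n) 0

lemma rieszKernel_nonneg (n : ℕ) (u : ℝ) : 0 ≤ rieszKernel n u :=
  mul_nonneg (Real.exp_pos _).le (le_max_right _ _)

lemma hasSum_mul_rieszKernel (a : ℕ → ℝ) (u : ℝ) :
    HasSum (fun n => (a n * rieszKernel n u : ℂ)) (rieszLog a u) := by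
  obtain ⟨N, hN⟩ := exists_nat_gt (Real.exp u)
  have hval : rieszLog a u = ∑ n ∈ Finset.range N, (a n * rieszKernel n u : ℂ) := by
    rw [rieszLog, rieszSum_eq_sum_max a (Real.exp_pos u).le hN, Finset.mul_sum]
    push_cast [rieszKernel]
    exact Finset.sum_congr rfl fun n _ => by ring
  rw [hval]
  refine hasSum_sum_of_ne_finset_zero fun n hn => ?_
  have hNn : (N : ℝ) ≤ n := by simpa using hn
  rw [rieszKernel, max_eq_right (by linarith), mul_zero, Complex.ofReal_zero, mul_zero]

lemma rieszKernel_eq_indicator (n : ℕ) {u : ℝ} (hu : 0 < u) :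
    (rieszKernel n u : ℂ) = (Set.Ioi (Real.log n)).indicator
      (fun u : ℝ => Complex.exp (-u) - n * Complex.exp (-(2 * u))) u := by
  by_cases hlog : Real.log n < u
  · have hn : (n : ℝ) ≤ Real.exp u :=
      (Real.le_exp_log _).trans (Real.exp_le_exp.mpr hlog.le)
    have hexp : Complex.exp (-u) = Complex.exp (-(2 * u)) * Complex.exp u := by
      rw [← Complex.exp_add]
      ring_nf
    rw [Set.indicator_of_mem (Set.mem_Ioi.mpr hlog), rieszKernel, max_eq_left (by linarith), hexp]
    push_cast
    ring
  · have hn : 0 < (n : ℝ) := Nat.cast_pos.mpr (Nat.pos_of_ne_zero fun h0 => hlog (by simpa [h0]))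
    have hexp : Real.exp u ≤ n := (Real.le_log_iff_exp_le hn).mp (not_lt.mp hlog)
    rw [Set.indicator_of_notMem (Set.notMem_Ioi.mpr (not_lt.mp hlog)),
      rieszKernel, max_eq_right (by linarith), mul_zero,
      Complex.ofReal_zero]

lemma laplaceAdmissible_rieszKernel (n : ℕ) :
    LaplaceAdmissible fun u => (rieszKernel n u : ℂ) := by
  refine laplaceAdmissible_of_norm_le (C := 1) (Continuous.continuousOn ?_) fun u hu => ?_
  · unfold rieszKernel
    fun_prop
  · rw [Complex.norm_real, Real.norm_of_nonneg (rieszKernel_nonneg n u)]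
    calc Real.exp (-(2 * u)) * max (Real.exp u - n) 0 ≤ Real.exp (-(2 * u)) * Real.exp u := by
          gcongr
          exact max_le (by linarith [n.cast_nonneg (α := ℝ)]) (Real.exp_pos u).le
      _ = Real.exp (-u) := by
          rw [← Real.exp_add]
          ring_nf
      _ ≤ 1 := Real.exp_le_one_iff.mpr (by linarith)

lemma integral_exp_sub_mul_exp {n : ℕ} (hn : n ≠ 0) {w : ℂ} (hw : 0 < w.re) :
    ∫ u : ℝ in Set.Ioi (Real.log n), (Complex.exp (-u) - n * Complex.exp (-(2 * u))) *
      Complex.exp (-(w * u)) = ((n : ℂ) ^ (1 + w))⁻¹ * rieszFactor w := by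
  have hre : ∀ a : ℝ, 0 ≤ a → (-(a + w)).re < 0 := fun a ha => by
    simp only [Complex.neg_re, Complex.add_re, Complex.ofReal_re]
    linarith
  have hne : ∀ a : ℝ, 0 ≤ a → a + w ≠ 0 := fun a ha h0 => by simpa [h0] using hre a ha
  have hre1 := hre 1 zero_le_one
  have hre2 := hre 2 zero_le_two
  have hw1 := hne 1 zero_le_one
  have hw2 := hne 2 zero_le_two
  push_cast at hre1 hre2 hw1 hw2
  have hexp : ∀ u : ℝ, (Complex.exp (-u) - n * Complex.exp (-(2 * u))) * Complex.exp (-(w * u)) =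
      Complex.exp (-(1 + w) * u) - n * Complex.exp (-(2 + w) * u) := fun u => by
    simp only [sub_mul, mul_assoc, ← Complex.exp_add]
    ring_nf
  have hnC : (n : ℂ) ≠ 0 := by exact_mod_cast hn
  have hpow1 : Complex.exp (-(1 + w) * Complex.log n) = ((n : ℂ) ^ (1 + w))⁻¹ := by
    rw [← Complex.cpow_neg, Complex.cpow_def_of_ne_zero hnC]
    ring_nf
  have hpow2 : (n : ℂ) * Complex.exp (-(2 + w) * Complex.log n) = ((n : ℂ) ^ (1 + w))⁻¹ := by
    rw [← hpow1, show -(1 + w) * Complex.log n = Complex.log n + -(2 + w) * Complex.log n by ring,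
      Complex.exp_add, Complex.exp_log hnC]
  simp only [hexp]
  rw [integral_sub (integrableOn_exp_mul_complex_Ioi hre1 _)
    ((integrableOn_exp_mul_complex_Ioi hre2 _).const_mul (n : ℂ)), integral_const_mul,
    integral_exp_mul_complex_Ioi hre1, integral_exp_mul_complex_Ioi hre2, Complex.natCast_log,
    mul_div_assoc', mul_neg, hpow1, hpow2, rieszFactor]
  field_simp
  ring

lemma laplace_rieszKernel {n : ℕ} (hn : n ≠ 0) {w : ℂ} (hw : 0 < w.re) :
    laplace (fun u => (rieszKernel n u : ℂ)) w = ((n : ℂ) ^ (1 + w))⁻¹ * rieszFactor w := by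
  have hsub : Set.Ioi (Real.log n) ⊆ Set.Ioi 0 := Set.Ioi_subset_Ioi (Real.log_natCast_nonneg n)
  rw [← integral_exp_sub_mul_exp hn hw, ← Set.inter_eq_right.mpr hsub,
    ← setIntegral_indicator measurableSet_Ioi]
  refine setIntegral_congr_fun measurableSet_Ioi fun u hu => ?_
  rw [Set.indicator_mul_left]
  exact congrArg (· * _) (rieszKernel_eq_indicator n hu)

lemma laplace_mul_rieszKernel {a : ℕ → ℝ} (ha0 : a 0 = 0) (n : ℕ) {w : ℂ} (hw : 0 < w.re) :
    laplace (fun u => (a n * rieszKernel n u : ℂ)) w =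
      LSeries.term (fun n => (a n : ℂ)) (1 + w) n * rieszFactor w := by
  rcases eq_or_ne n 0 with rfl | hn
  · simp [laplace, ha0]
  · have hmul : laplace (fun u => (a n * rieszKernel n u : ℂ)) w =
        a n * laplace (fun u => (rieszKernel n u : ℂ)) w := by
      simp only [laplace, mul_assoc, integral_const_mul]
    rw [hmul, laplace_rieszKernel hn hw, LSeries.term_of_ne_zero hn]
    ring

lemma LSeriesSummable_of_mem_Icc {a : ℕ → ℝ} (ha : ∀ n, a n ∈ Set.Icc (0 : ℝ) 1) {s : ℂ}
    (hs : 1 < s.re) : LSeriesSummable (fun n => (a n : ℂ)) s :=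
  LSeriesSummable_of_bounded_of_one_lt_re (m := 1) (fun n _ => by
    rw [Complex.norm_real, Real.norm_of_nonneg (ha n).1]
    exact (ha n).2) hs

lemma laplace_rieszLog {a : ℕ → ℝ} (ha0 : a 0 = 0) (ha : ∀ n, a n ∈ Set.Icc (0 : ℝ) 1) {w : ℂ}
    (hw : 0 < w.re) :
    laplace (rieszLog a) w = LSeries (fun n => (a n : ℂ)) (1 + w) * rieszFactor w := by
  set f : ℂ → ℕ → ℝ → ℂ := fun w n u => a n * rieszKernel n u * Complex.exp (-(w * u))
  have hint : ∀ n, Integrable (f w n) (volume.restrict (Set.Ioi 0)) := fun n =>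
    ((laplaceAdmissible_rieszKernel n).const_mul (a n)).integrable hw
  have hterm : ∀ {w : ℂ}, 0 < w.re → ∀ n, ∫ u in Set.Ioi 0, f w n u =
      LSeries.term (fun n => (a n : ℂ)) (1 + w) n * rieszFactor w := fun hw n =>
    laplace_mul_rieszKernel ha0 n hw
  have hre : 0 < (w.re : ℂ).re := by rwa [Complex.ofReal_re]
  have hnorm : ∀ n u, (‖f w n u‖ : ℂ) = f w.re n u := fun n u => by
    simp only [f]
    rw [norm_mul, norm_mul, Complex.norm_real, Complex.norm_real, Complex.norm_exp,
      Real.norm_of_nonneg (rieszKernel_nonneg n u), Real.norm_of_nonneg (ha n).1]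
    push_cast
    simp
  have hsummable : Summable fun n => ∫ u in Set.Ioi 0, ‖f w n u‖ := by
    rw [← Complex.summable_ofReal]
    simp only [← integral_complex_ofReal, hnorm, hterm hre]
    exact Summable.mul_right _ (LSeriesSummable_of_mem_Icc ha (by simpa using hw))
  have hsum := hasSum_integral_of_summable_integral_norm hint hsummable
  simp only [hterm hw] at hsum
  have hL := (LSeriesSummable_of_mem_Icc ha (s := 1 + w) (by simpa using hw)).hasSum.mul_right
    (rieszFactor w)
  rw [LSeries, ← hsum.unique hL, laplace]
  exact integral_congr_ae (ae_of_all _ fun u =>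
    ((hasSum_mul_rieszKernel a u).mul_right _).tsum_eq.symm)

/-- The summatory function of `a` over `n ≤ x`; the sum includes `n = 0`. -/
noncomputable def summatory (a : ℕ → ℝ) (x : ℝ) : ℝ := ∑ n ∈ Finset.range (⌊x⌋₊ + 1), a n

lemma summatory_eq_sum_ite (a : ℕ → ℝ) {x : ℝ} (hx : 0 ≤ x) {N : ℕ} (hN : x < N) :
    summatory a x = ∑ n ∈ Finset.range N, if (n : ℝ) ≤ x then a n else 0 := by
  have hfloor : ⌊x⌋₊ + 1 ≤ N := (Nat.floor_lt hx).mpr hN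
  rw [summatory, ← Finset.sum_subset (Finset.range_subset_range.mpr hfloor)]
  · refine Finset.sum_congr rfl fun n hn => ?_
    rw [if_pos ((Nat.le_floor_iff hx).mp (Finset.mem_range_succ_iff.mp hn))]
  · intro n _ hn
    rw [if_neg (not_le.mpr ((Nat.floor_lt hx).mp (by simpa using hn)))]

lemma mul_summatory_le {a : ℕ → ℝ} (ha : ∀ n, 0 ≤ a n) {x h : ℝ} (hx : 0 ≤ x) (hh : 0 ≤ h) :
    h * summatory a x ≤ rieszSum a (x + h) - rieszSum a x := by
  obtain ⟨N, hN⟩ := exists_nat_gt (x + h)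
  rw [summatory_eq_sum_ite a hx (by linarith), rieszSum_eq_sum_max a (by linarith) hN,
    rieszSum_eq_sum_max a hx (by linarith), ← Finset.sum_sub_distrib, Finset.mul_sum]
  refine Finset.sum_le_sum fun n _ => ?_
  rw [← mul_sub]
  split_ifs with hn
  · rw [mul_comm, max_eq_left (by linarith), max_eq_left (by linarith)]
    exact mul_le_mul_of_nonneg_left (by linarith) (ha n)
  · rw [mul_zero]
    exact mul_nonneg (ha n) (sub_nonneg.mpr (max_le_max (by linarith) le_rfl))

lemma le_mul_summatory {a : ℕ → ℝ} (ha : ∀ n, 0 ≤ a n) {x h : ℝ} (hh : 0 ≤ h) (hhx : h ≤ x) :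
    rieszSum a x - rieszSum a (x - h) ≤ h * summatory a x := by
  obtain ⟨N, hN⟩ := exists_nat_gt x
  have hx : 0 ≤ x := hh.trans hhx
  rw [summatory_eq_sum_ite a hx hN, rieszSum_eq_sum_max a hx hN,
    rieszSum_eq_sum_max a (by linarith) (N := N) (by linarith), ← Finset.sum_sub_distrib,
    Finset.mul_sum]
  refine Finset.sum_le_sum fun n _ => ?_
  rw [← mul_sub]
  split_ifs with hn
  · rw [mul_comm h, max_eq_left (by linarith)]
    refine mul_le_mul_of_nonneg_left ?_ (ha n)
    linarith [le_max_left (x - h - n) 0]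
  · rw [max_eq_right (by linarith), max_eq_right (by linarith)]
    simp

end RieszSum

section Tauberian

/-- The model function for the terms of the expansion of a first Riesz sum. -/
noncomputable def sqLogPow (s x : ℝ) : ℝ := x ^ 2 * Real.log x ^ s

/-- The derivative of `sqLogPow s`, valid for `1 < x`. -/
noncomputable def sqLogPowDeriv (s x : ℝ) : ℝ :=
  2 * (x * Real.log x ^ s) + s * (x * Real.log x ^ (s - 1))

lemma hasDerivAt_log_rpow (s : ℝ) {x : ℝ} (hx : 1 < x) :
    HasDerivAt (fun x => Real.log x ^ s) (s * Real.log x ^ (s - 1) / x) x := by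
  have h := (Real.hasDerivAt_log (by linarith : x ≠ 0)).rpow_const (p := s)
    (Or.inl (Real.log_pos hx).ne')
  exact h.congr_deriv (by field_simp)

lemma hasDerivAt_sqLogPow (s : ℝ) {x : ℝ} (hx : 1 < x) :
    HasDerivAt (sqLogPow s) (sqLogPowDeriv s x) x := by
  have hderiv : HasDerivAt (sqLogPow s) _ x := (hasDerivAt_pow 2 x).mul (hasDerivAt_log_rpow s hx)
  refine hderiv.congr_deriv ?_
  rw [sqLogPowDeriv]
  field_simp
  norm_num
  ring

lemma hasDerivAt_sqLogPowDeriv (s : ℝ) {x : ℝ} (hx : 1 < x) :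
    HasDerivAt (sqLogPowDeriv s) (2 * Real.log x ^ s + 3 * s * Real.log x ^ (s - 1) +
      s * (s - 1) * Real.log x ^ (s - 1 - 1)) x := by
  have hderiv : HasDerivAt (sqLogPowDeriv s) _ x :=
    (((hasDerivAt_id x).mul (hasDerivAt_log_rpow s hx)).const_mul 2).add
      (((hasDerivAt_id x).mul (hasDerivAt_log_rpow (s - 1) hx)).const_mul s)
  refine hderiv.congr_deriv ?_
  simp only [id]
  field_simp
  ring

lemma log_rpow_le_of_half_le {s r x y : ℝ} (hsr : s ≤ r) (hr : r ≤ 0) (hx : 4 ≤ x)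
    (hy : x / 2 ≤ y) : Real.log y ^ s ≤ 2 ^ (-s) * Real.log x ^ r := by
  have hlog4 : 2 * Real.log 2 ≤ Real.log x := by
    have hlog := Real.log_le_log (by norm_num) hx
    rwa [show (4 : ℝ) = 2 ^ 2 by norm_num, Real.log_pow, Nat.cast_ofNat] at hlog
  have hL1 : 1 ≤ Real.log x := by
    have := Real.log_two_gt_d9
    linarith
  have hle : Real.log x / 2 ≤ Real.log y := by
    have hlog := Real.log_le_log (by linarith) hy
    rw [Real.log_div (by linarith) two_ne_zero] at hlog
    linarith
  calc Real.log y ^ s ≤ (Real.log x / 2) ^ s :=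
        Real.rpow_le_rpow_of_nonpos (by linarith) hle (by linarith)
    _ = 2 ^ (-s) * Real.log x ^ s := by
        rw [Real.div_rpow (by linarith) two_pos.le, Real.rpow_neg two_pos.le]
        field_simp
    _ ≤ _ := by gcongr

lemma abs_sub_sub_mul_le_mul_sq {f f' f'' : ℝ → ℝ} {x h B : ℝ}
    (hf : ∀ y ∈ Set.Icc (x - |h|) (x + |h|), HasDerivAt f (f' y) y)
    (hf' : ∀ y ∈ Set.Icc (x - |h|) (x + |h|), HasDerivAt f' (f'' y) y)
    (hB : ∀ y ∈ Set.Icc (x - |h|) (x + |h|), |f'' y| ≤ B) :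
    |f (x + h) - f x - h * f' x| ≤ B * h ^ 2 := by
  have hconv : Convex ℝ (Set.Icc (x - |h|) (x + |h|)) := convex_Icc _ _
  have hx : x ∈ Set.Icc (x - |h|) (x + |h|) :=
    ⟨by linarith [abs_nonneg h], by linarith [abs_nonneg h]⟩
  have hxh : x + h ∈ Set.Icc (x - |h|) (x + |h|) :=
    ⟨by linarith [neg_abs_le h], by linarith [le_abs_self h]⟩
  have hderiv : ∀ y ∈ Set.Icc (x - |h|) (x + |h|), |f' y - f' x| ≤ B * |h| := fun y hy => by
    refine (hconv.norm_image_sub_le_of_norm_hasDerivWithin_le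
      (fun y hy => (hf' y hy).hasDerivWithinAt) hB hx hy).trans ?_
    refine mul_le_mul_of_nonneg_left ?_ ((abs_nonneg _).trans (hB x hx))
    rw [Real.norm_eq_abs, abs_le]
    constructor <;> linarith [hy.1, hy.2]
  have hmean := hconv.norm_image_sub_le_of_norm_hasDerivWithin_le
    (f := fun y => f y - f' x * y)
    (fun y hy => ((hf y hy).sub ((hasDerivAt_id y).const_mul (f' x))).hasDerivWithinAt)
    (fun y hy => by simpa using hderiv y hy) hx hxh
  rw [add_sub_cancel_left, Real.norm_eq_abs, Real.norm_eq_abs, mul_assoc, abs_mul_abs_self,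
    ← sq] at hmean
  calc _ = |f (x + h) - f' x * (x + h) - (f x - f' x * x)| := by congr 1; ring
    _ ≤ _ := hmean

lemma exists_abs_sqLogPow_taylor_le {s r : ℝ} (hsr : s ≤ r) (hr : r ≤ 0) :
    ∃ C : ℝ, 0 ≤ C ∧ ∀ x h : ℝ, 4 ≤ x → |h| ≤ x / 2 →
      |sqLogPow s (x + h) - sqLogPow s x - h * sqLogPowDeriv s x| ≤
        C * Real.log x ^ r * h ^ 2 := by
  set C := 2 * 2 ^ (-s) + |3 * s| * 2 ^ (-(s - 1)) + |s * (s - 1)| * 2 ^ (-(s - 1 - 1)) with hC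
  refine ⟨C, by positivity, fun x h hx hh => ?_⟩
  have hhalf : ∀ y ∈ Set.Icc (x - |h|) (x + |h|), x / 2 ≤ y := fun y hy => by linarith [hy.1]
  have hone : ∀ y ∈ Set.Icc (x - |h|) (x + |h|), 1 < y := fun y hy => by linarith [hhalf y hy]
  refine abs_sub_sub_mul_le_mul_sq (fun y hy => hasDerivAt_sqLogPow s (hone y hy))
    (fun y hy => hasDerivAt_sqLogPowDeriv s (hone y hy)) fun y hy => ?_
  have hlog : 0 ≤ Real.log y := Real.log_nonneg (hone y hy).le
  have hterm : ∀ c t : ℝ, t ≤ r → |c * Real.log y ^ t| ≤ |c| * (2 ^ (-t) * Real.log x ^ r) :=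
    fun c t ht => by
      rw [abs_mul, abs_of_nonneg (Real.rpow_nonneg hlog t)]
      exact mul_le_mul_of_nonneg_left (log_rpow_le_of_half_le ht hr hx (hhalf y hy)) (abs_nonneg c)
  calc _ ≤ |2 * Real.log y ^ s| + |3 * s * Real.log y ^ (s - 1)| +
        |s * (s - 1) * Real.log y ^ (s - 1 - 1)| := abs_add_three _ _ _
    _ ≤ |2| * (2 ^ (-s) * Real.log x ^ r) + |3 * s| * (2 ^ (-(s - 1)) * Real.log x ^ r) +
        |s * (s - 1)| * (2 ^ (-(s - 1 - 1)) * Real.log x ^ r) := by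
      gcongr <;> exact hterm _ _ (by linarith)
    _ = C * Real.log x ^ r := by rw [hC, abs_two]; ring

lemma exists_abs_sum_sqLogPow_taylor_le {r : ℝ} (hr : r ≤ 0) {ι : Type*} (t : Finset ι)
    (b s : ι → ℝ) (hs : ∀ i ∈ t, s i ≤ r) :
    ∃ C : ℝ, ∀ x h : ℝ, 4 ≤ x → |h| ≤ x / 2 →
      |∑ i ∈ t, b i * sqLogPow (s i) (x + h) - ∑ i ∈ t, b i * sqLogPow (s i) x -
        h * ∑ i ∈ t, b i * sqLogPowDeriv (s i) x| ≤ C * Real.log x ^ r * h ^ 2 := by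
  choose! C _ hC using fun i (hi : i ∈ t) => exists_abs_sqLogPow_taylor_le (hs i hi) hr
  refine ⟨∑ i ∈ t, |b i| * C i, fun x h hx hh => ?_⟩
  rw [Finset.mul_sum, ← Finset.sum_sub_distrib, ← Finset.sum_sub_distrib, Finset.sum_mul,
    Finset.sum_mul]
  refine (Finset.abs_sum_le_sum_abs _ _).trans (Finset.sum_le_sum fun i hi => ?_)
  rw [mul_left_comm h, ← mul_sub, ← mul_sub, abs_mul, mul_assoc, mul_assoc]
  refine mul_le_mul_of_nonneg_left ?_ (abs_nonneg _)
  rw [← mul_assoc]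
  exact hC i hi x h hx hh

lemma mul_abs_summatory_sub_le {a : ℕ → ℝ} (ha : ∀ n, 0 ≤ a n) {P : ℝ → ℝ} {x h d δ ε : ℝ}
    (hh : 0 ≤ h) (hhx : h ≤ x) (hδ₁ : |P (x + h) - P x - h * d| ≤ δ)
    (hδ₂ : |P (x - h) - P x + h * d| ≤ δ) (hε : |rieszSum a x - P x| ≤ ε)
    (hε₁ : |rieszSum a (x + h) - P (x + h)| ≤ ε) (hε₂ : |rieszSum a (x - h) - P (x - h)| ≤ ε) :
    h * |summatory a x - d| ≤ δ + 2 * ε := by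
  have hupper := mul_summatory_le ha (hh.trans hhx) hh
  have hlower := le_mul_summatory ha hh hhx
  rw [abs_le] at hδ₁ hδ₂ hε hε₁ hε₂
  rw [← abs_of_nonneg hh, ← abs_mul, mul_sub, abs_le]
  constructor <;> linarith

/- The step `h = x (log x)⁻²` makes both the Taylor error `h (log x) ^ r` and the error
`x² (log x)⁻⁵ / h` coming from the Riesz sum of order at most `x (log x) ^ (r - 2)`. -/
lemma exists_abs_summatory_sub_le_of_taylor {a : ℕ → ℝ} (ha : ∀ n, 0 ≤ a n) {r : ℝ} (hr : -1 ≤ r)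
    {P P' : ℝ → ℝ} {D M : ℝ} (hP : ∀ x h : ℝ, 4 ≤ x → |h| ≤ x / 2 →
      |P (x + h) - P x - h * P' x| ≤ D * Real.log x ^ r * h ^ 2)
    (hM : ∀ x h : ℝ, 4 ≤ x → |h| ≤ x / 2 →
      |rieszSum a (x + h) - P (x + h)| ≤ M * x ^ 2 * Real.log x ^ (-5 : ℝ)) :
    ∃ C : ℝ, ∀ᶠ x : ℝ in atTop, |summatory a x - P' x| ≤ C * (x * Real.log x ^ (r - 2)) := by
  refine ⟨D + 2 * |M|, ?_⟩
  filter_upwards [eventually_ge_atTop 4, Real.tendsto_log_atTop.eventually_ge_atTop 2] with x hx hL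
  set L := Real.log x
  have hL0 : 0 < L := by linarith
  set h := x * L ^ (-2 : ℝ) with hh
  have hh0 : 0 < h := by positivity
  have hhx : h ≤ x / 2 := by
    rw [hh, Real.rpow_neg hL0.le, Real.rpow_two, ← div_eq_mul_inv]
    gcongr
    nlinarith
  have hh₁ : |h| ≤ x / 2 := by rwa [abs_of_pos hh0]
  have hh₂ : |-h| ≤ x / 2 := by rwa [abs_neg]
  have hP₂ := hP x (-h) hx hh₂
  have hM₂ := hM x (-h) hx hh₂
  rw [neg_sq, neg_mul, sub_neg_eq_add, ← sub_eq_add_neg] at hP₂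
  rw [← sub_eq_add_neg] at hM₂
  have hM₀ := hM x 0 hx (by rw [abs_zero]; linarith)
  rw [add_zero] at hM₀
  have hmain := mul_abs_summatory_sub_le ha hh0.le (by linarith) (hP x h hx hh₁) hP₂ hM₀
    (hM x h hx hh₁) hM₂
  have htaylor : D * L ^ r * h ^ 2 = h * (D * (x * L ^ (r - 2))) := by
    rw [sub_eq_add_neg, Real.rpow_add hL0, hh]
    ring
  have hriesz : M * x ^ 2 * L ^ (-5 : ℝ) ≤ h * (|M| * (x * L ^ (r - 2))) := by
    calc M * x ^ 2 * L ^ (-5 : ℝ) ≤ |M| * x ^ 2 * L ^ (-5 : ℝ) := by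
          gcongr
          exact le_abs_self M
      _ = |M| * x ^ 2 * L ^ (-2 : ℝ) * L ^ (-3 : ℝ) := by
          rw [mul_assoc (|M| * x ^ 2), ← Real.rpow_add hL0]
          norm_num
      _ ≤ |M| * x ^ 2 * L ^ (-2 : ℝ) * L ^ (r - 2) := by
          gcongr <;> linarith
      _ = _ := by rw [hh]; ring
  refine le_of_mul_le_mul_left (hmain.trans ?_) hh0
  linarith

lemma exists_abs_summatory_sub_le {a : ℕ → ℝ} (ha : ∀ n, 0 ≤ a n) {r : ℝ} (hr : r ≤ 0)
    (hr1 : -1 ≤ r) {ι : Type*} (t : Finset ι) (b s : ι → ℝ) (hs : ∀ i ∈ t, s i ≤ r) {M : ℝ}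
    (hM : ∀ x : ℝ, 1 < x → |rieszSum a x - ∑ i ∈ t, b i * sqLogPow (s i) x| ≤
      M * x ^ 2 * Real.log x ^ (-5 : ℝ)) :
    ∃ C : ℝ, ∀ᶠ x : ℝ in atTop, |summatory a x - ∑ i ∈ t, b i * sqLogPowDeriv (s i) x| ≤
      C * (x * Real.log x ^ (r - 2)) := by
  obtain ⟨D, hD⟩ := exists_abs_sum_sqLogPow_taylor_le hr t b s hs
  refine exists_abs_summatory_sub_le_of_taylor ha hr1 hD (M := |M| * (4 * 2 ^ (5 : ℝ)))
    (P := fun x => ∑ i ∈ t, b i * sqLogPow (s i) x)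
    (P' := fun x => ∑ i ∈ t, b i * sqLogPowDeriv (s i) x) fun x h hx hh => ?_
  refine (hM (x + h) (by linarith [neg_abs_le h])).trans ?_
  obtain ⟨hlower, hupper⟩ := abs_le.mp hh
  have hlog := log_rpow_le_of_half_le (s := -5) (r := -5) le_rfl (by norm_num) hx
    (y := x + h) (by linarith)
  rw [neg_neg] at hlog
  have hsq : (x + h) ^ 2 ≤ 4 * x ^ 2 := by nlinarith
  have hlog0 : 0 ≤ Real.log (x + h) := Real.log_nonneg (by linarith)
  calc _ ≤ |M| * (4 * x ^ 2) * (2 ^ (5 : ℝ) * Real.log x ^ (-5 : ℝ)) := by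
        gcongr
        exact le_abs_self M
    _ = _ := by ring

lemma abs_sqLogPowDeriv_le {s r x : ℝ} (hsr : s ≤ r) (hx : 0 ≤ x) (hL : 1 ≤ Real.log x) :
    |sqLogPowDeriv s x| ≤ (2 + |s|) * (x * Real.log x ^ r) := by
  have hterm : ∀ c t : ℝ, t ≤ r → |c * (x * Real.log x ^ t)| ≤ |c| * (x * Real.log x ^ r) :=
    fun c t ht => by
      rw [abs_mul, abs_of_nonneg (a := x * _) (by positivity)]
      gcongr
  rw [sqLogPowDeriv, add_mul]
  refine (abs_add_le _ _).trans (add_le_add ?_ (hterm s (s - 1) (by linarith)))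
  simpa using hterm 2 s hsr

lemma exists_abs_sum_sqLogPowDeriv_sub_le (b : ℕ → ℝ) (s : ℝ) (n : ℕ) :
    ∃ D : ℝ, ∀ x : ℝ, 0 ≤ x → 1 ≤ Real.log x →
      |∑ j ∈ Finset.range (n + 2), b j * sqLogPowDeriv (s - j) x -
        x * (2 * b 0 * Real.log x ^ s + (s * b 0 + 2 * b 1) * Real.log x ^ (s - 1))| ≤
      D * (x * Real.log x ^ (s - 2)) := by
  refine ⟨|(s - 1) * b 1| + ∑ j ∈ Finset.range n, |b (j + 2)| * (2 + |s - (j + 2 : ℕ)|),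
    fun x hx hL => ?_⟩
  have hsplit : ∑ j ∈ Finset.range (n + 2), b j * sqLogPowDeriv (s - j) x -
      x * (2 * b 0 * Real.log x ^ s + (s * b 0 + 2 * b 1) * Real.log x ^ (s - 1)) =
      (s - 1) * b 1 * (x * Real.log x ^ (s - 2)) +
        ∑ j ∈ Finset.range n, b (j + 2) * sqLogPowDeriv (s - (j + 2 : ℕ)) x := by
    rw [Finset.sum_range_succ', Finset.sum_range_succ']
    simp only [sqLogPowDeriv, zero_add, Nat.cast_zero, Nat.cast_one, sub_zero, add_assoc,
      one_add_one_eq_two, sub_sub]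
    ring
  rw [hsplit, add_mul, Finset.sum_mul]
  refine (abs_add_le _ _).trans (add_le_add ?_ ?_)
  · rw [abs_mul _ (x * _), abs_of_nonneg (a := x * _) (by positivity)]
  · refine (Finset.abs_sum_le_sum_abs _ _).trans (Finset.sum_le_sum fun j _ => ?_)
    rw [abs_mul, mul_assoc]
    refine mul_le_mul_of_nonneg_left (abs_sqLogPowDeriv_le ?_ hx hL) (abs_nonneg _)
    push_cast
    linarith [j.cast_nonneg (α := ℝ)]

lemma re_log_pow_mul_rieszLog_sub (a : ℕ → ℝ) (c : ℕ → ℂ) (z : ℝ) (J : ℕ) {x : ℝ} (hx : 1 < x) :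
    ((Real.log x : ℂ) ^ J * rieszLog a (Real.log x) - singularOriginal z J c (Real.log x)).re =
      Real.log x ^ J * (x ^ 2)⁻¹ * (rieszSum a x -
        ∑ j ∈ Finset.range J, (c j).re * singularCoeff z J j * sqLogPow (z - 1 - j) x) := by
  have hx0 : 0 < x := by linarith
  have hL : 0 < Real.log x := Real.log_pos hx
  have hexp : Real.exp (-(2 * Real.log x)) = (x ^ 2)⁻¹ := by
    rw [Real.exp_neg, mul_comm, Real.exp_mul, Real.exp_log hx0, Real.rpow_two]
  rw [singularOriginal, Complex.sub_re, Complex.re_sum, mul_sub, Finset.mul_sum]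
  congr 1
  · rw [rieszLog, hexp, Real.exp_log hx0, ← Complex.ofReal_pow, ← Complex.ofReal_mul,
      Complex.ofReal_re, ← mul_assoc]
  · refine Finset.sum_congr rfl fun j _ => ?_
    rw [← Complex.ofReal_cpow hL.le, mul_assoc, ← Complex.ofReal_mul, Complex.re_mul_ofReal,
      sqLogPow, show z - j + J - 1 = J + (z - 1 - j) by ring, Real.rpow_add hL, Real.rpow_natCast]
    field_simp

section AlgebraicSingularity

variable {a : ℕ → ℝ} {K : ℂ → ℂ} {z ρ : ℝ}

lemma exists_abs_rieszSum_sub_le {J : ℕ} (ha0 : a 0 = 0) (ha : ∀ n, a n ∈ Set.Icc (0 : ℝ) 1)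
    (hF : SlowUpTo J (LSeries fun n => (a n : ℂ))) (hJ : 2 ≤ J) (hz : 0 < z) (hz1 : z < 1)
    (hρ : 0 < ρ) (hK : DifferentiableOn ℂ K (Metric.ball 0 ρ))
    (hFK : ∀ w ∈ Metric.ball (0 : ℂ) ρ, 0 < w.re →
      LSeries (fun n => (a n : ℂ)) (1 + w) = w ^ (-(z : ℂ)) * K w) :
    ∃ (b : ℕ → ℝ) (M : ℝ), b 0 = (K 0).re / 2 * (Real.Gamma z)⁻¹ ∧
      b 1 = ((deriv K 0).re / 2 - 3 / 4 * (K 0).re) * ((z - 1) * (Real.Gamma z)⁻¹) ∧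
      ∀ x : ℝ, 1 < x → |rieszSum a x - ∑ j ∈ Finset.range J, b j * sqLogPow (z - 1 - j) x| ≤
        M * x ^ 2 * Real.log x ^ (-(J : ℝ)) := by
  obtain ⟨c, M, hc0, hc1, hM⟩ := exists_norm_pow_mul_sub_singularOriginal_le hF hz hz1
    (by linarith) hρ hK hFK (laplaceAdmissible_rieszLog ha0 ha) (continuousOn_rieszLog a)
    fun w hw => laplace_rieszLog ha0 ha hw
  refine ⟨fun j => (c j).re * singularCoeff z J j, M, ?_, ?_, fun x hx => ?_⟩
  · simp only [hc0, singularCoeff_zero hz, Complex.div_ofNat_re]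
  · obtain ⟨J, rfl⟩ := Nat.exists_eq_add_of_le' (one_le_two.trans hJ)
    have hcast : (3 / 4 : ℂ) = ((3 / 4 : ℝ) : ℂ) := by push_cast; rfl
    simp only [hc1, singularCoeff_one hz J, Complex.sub_re, hcast, Complex.re_ofReal_mul,
      Complex.div_ofNat_re]
  · have hL : 0 < Real.log x := Real.log_pos hx
    have hre := (Complex.abs_re_le_norm _).trans (hM (Real.log x) hL)
    rw [re_log_pow_mul_rieszLog_sub a c z J hx, abs_mul, abs_of_pos (by positivity), mul_comm,
      ← le_div_iff₀ (by positivity)] at hre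
    refine hre.trans_eq ?_
    rw [Real.rpow_neg hL.le, Real.rpow_natCast]
    field_simp

-- A Tauberian theorem of Selberg–Delange type, proved without contour integration.
theorem exists_abs_summatory_sub_two_terms_le (ha0 : a 0 = 0)
    (ha : ∀ n, a n ∈ Set.Icc (0 : ℝ) 1) (hF : SlowUpTo 5 (LSeries fun n => (a n : ℂ)))
    (hz : 0 < z) (hz1 : z < 1) (hρ : 0 < ρ) (hK : DifferentiableOn ℂ K (Metric.ball 0 ρ))
    (hFK : ∀ w ∈ Metric.ball (0 : ℂ) ρ, 0 < w.re →
      LSeries (fun n => (a n : ℂ)) (1 + w) = w ^ (-(z : ℂ)) * K w) :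
    ∃ C : ℝ, ∀ᶠ x : ℝ in atTop, |summatory a x - (Real.Gamma z)⁻¹ * x *
      ((K 0).re * Real.log x ^ (z - 1) +
        (z - 1) * (deriv K 0 - K 0).re * Real.log x ^ (z - 2))| ≤
      C * (x * Real.log x ^ (z - 3)) := by
  obtain ⟨b, M, hb0, hb1, hM⟩ :=
    exists_abs_rieszSum_sub_le ha0 ha hF (by norm_num) hz hz1 hρ hK hFK
  obtain ⟨C, hC⟩ := exists_abs_summatory_sub_le (fun n => (ha n).1) (r := z - 1)
    (by linarith) (by linarith) (Finset.range 5) b (fun j => z - 1 - j)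
    (fun j _ => by simp) (by exact_mod_cast hM)
  obtain ⟨D, hD⟩ := exists_abs_sum_sqLogPowDeriv_sub_le b (z - 1) 3
  refine ⟨C + D, ?_⟩
  filter_upwards [hC, eventually_ge_atTop 0, Real.tendsto_log_atTop.eventually_ge_atTop 1]
    with x hCx hx hL
  have hDx := hD x hx hL
  have hmain : x * (2 * b 0 * Real.log x ^ (z - 1) +
      ((z - 1) * b 0 + 2 * b 1) * Real.log x ^ (z - 1 - 1)) = (Real.Gamma z)⁻¹ * x *
        ((K 0).re * Real.log x ^ (z - 1) +
          (z - 1) * (deriv K 0 - K 0).re * Real.log x ^ (z - 2)) := by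
    rw [hb0, hb1, Complex.sub_re, sub_sub z, one_add_one_eq_two]
    ring
  rw [hmain] at hDx
  rw [show z - 1 - 2 = z - 3 by ring] at hCx hDx
  rw [add_mul]
  exact (abs_sub_le _ _ _).trans (add_le_add hCx hDx)

end AlgebraicSingularity

end Tauberian

/-! ### Partial summation and convexity bounds for `L`-functions -/

section PartialSummation

open MeasureTheory

/-- The tail `∑_{N < n ≤ t} f n` minus its expected value `m * (t - N)`, continued by `0` to
`t ≤ N`. Its Mellin transform continues the Dirichlet series of `f` to the left of `Re s = 1`. -/
noncomputable def partialSumError (f : ℕ → ℂ) (m : ℂ) (N : ℕ) (t : ℝ) : ℂ :=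
  (∑ k ∈ Finset.Icc 1 ⌊t⌋₊, if k ≤ N then 0 else f k) - m * (max (t - N) 0 : ℝ)

lemma sum_Icc_ite_le_eq (f : ℕ → ℂ) {N n : ℕ} (h : N ≤ n) :
    (∑ k ∈ Finset.Icc 1 n, if k ≤ N then 0 else f k) =
      ∑ k ∈ Finset.Icc 1 n, f k - ∑ k ∈ Finset.Icc 1 N, f k := by
  induction n, h using Nat.le_induction with
  | base =>
    rw [sub_self]
    exact Finset.sum_eq_zero fun k hk => if_pos (Finset.mem_Icc.mp hk).2
  | succ n hn ih =>
    rw [Finset.sum_Icc_succ_top (by omega), Finset.sum_Icc_succ_top (by omega), ih,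
      if_neg (by omega)]
    ring

lemma partialSumError_eq_zero (f : ℕ → ℂ) (m : ℂ) {N : ℕ} {t : ℝ} (ht : t ≤ N) :
    partialSumError f m N t = 0 := by
  rw [partialSumError, max_eq_right (by linarith), Complex.ofReal_zero, mul_zero, sub_zero]
  exact Finset.sum_eq_zero fun k hk =>
    if_pos ((Finset.mem_Icc.mp hk).2.trans (Nat.floor_le_of_le ht))

lemma norm_partialSumError_le {f : ℕ → ℂ} {m : ℂ} {B : ℝ}
    (hB : ∀ n : ℕ, ‖∑ k ∈ Finset.Icc 1 n, f k - m * n‖ ≤ B) (N : ℕ) (t : ℝ) :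
    ‖partialSumError f m N t‖ ≤ 2 * B + ‖m‖ := by
  have hB0 : 0 ≤ B := (norm_nonneg _).trans (hB 0)
  rcases lt_or_ge t N with htN | htN
  · rw [partialSumError_eq_zero f m htN.le, norm_zero]
    positivity
  have ht0 : (0 : ℝ) ≤ t := N.cast_nonneg.trans htN
  have hsplit : partialSumError f m N t = (∑ k ∈ Finset.Icc 1 ⌊t⌋₊, f k - m * (⌊t⌋₊ : ℕ)) -
      (∑ k ∈ Finset.Icc 1 N, f k - m * N) - m * ((t - ⌊t⌋₊ : ℝ) : ℂ) := by
    rw [partialSumError, max_eq_left (by linarith), sum_Icc_ite_le_eq f (Nat.le_floor htN)]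
    push_cast
    ring
  have hfract : ‖m * ((t - ⌊t⌋₊ : ℝ) : ℂ)‖ ≤ ‖m‖ := by
    rw [norm_mul, Complex.norm_real, Real.norm_eq_abs]
    refine mul_le_of_le_one_right (norm_nonneg _) (abs_le.mpr ⟨?_, ?_⟩) <;>
      linarith [Nat.floor_le ht0, Nat.lt_floor_add_one t]
  rw [hsplit]
  exact (norm_sub_le _ _).trans
    (add_le_add ((norm_sub_le _ _).trans (by linarith [hB ⌊t⌋₊, hB N])) hfract)

lemma measurable_partialSumError (f : ℕ → ℂ) (m : ℂ) (N : ℕ) :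
    Measurable (partialSumError f m N) :=
  ((measurable_from_nat (f := fun n : ℕ => ∑ k ∈ Finset.Icc 1 n, if k ≤ N then 0 else f k)).comp
    Nat.measurable_floor).sub (by fun_prop)

lemma locallyIntegrable_partialSumError {f : ℕ → ℂ} {m : ℂ} {B : ℝ}
    (hB : ∀ n : ℕ, ‖∑ k ∈ Finset.Icc 1 n, f k - m * n‖ ≤ B) (N : ℕ) :
    LocallyIntegrable (partialSumError f m N) :=
  locallyIntegrable_iff.mpr fun _ hK =>
    Measure.integrableOn_of_bounded (M := 2 * B + ‖m‖) hK.measure_lt_top.ne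
      (measurable_partialSumError f m N).aestronglyMeasurable
      (Eventually.of_forall fun t => norm_partialSumError_le hB N t)

lemma norm_partialSumError_mul_cpow_le {f : ℕ → ℂ} {m : ℂ} {B : ℝ}
    (hB : ∀ n : ℕ, ‖∑ k ∈ Finset.Icc 1 n, f k - m * n‖ ≤ B) (N : ℕ) {t : ℝ} (ht : 0 < t) (s : ℂ) :
    ‖partialSumError f m N t * (t : ℂ) ^ (-(s + 1))‖ ≤ (2 * B + ‖m‖) * t ^ (-s.re - 1) := by
  have hre : (-(s + 1)).re = -s.re - 1 := by
    rw [Complex.neg_re, Complex.add_re, Complex.one_re]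
    ring
  rw [norm_mul, Complex.norm_cpow_eq_rpow_re_of_pos ht, hre]
  gcongr
  exact norm_partialSumError_le hB N t

lemma integrableOn_partialSumError_mul_cpow {f : ℕ → ℂ} {m : ℂ} {B : ℝ}
    (hB : ∀ n : ℕ, ‖∑ k ∈ Finset.Icc 1 n, f k - m * n‖ ≤ B) (N : ℕ) {s : ℂ} (hs : 0 < s.re) :
    IntegrableOn (fun t : ℝ => partialSumError f m N t * (t : ℂ) ^ (-(s + 1))) (Set.Ioi 1) := by
  refine Integrable.mono'
    ((integrableOn_Ioi_rpow_of_lt (a := -s.re - 1) (by linarith) one_pos).const_mul (2 * B + ‖m‖))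
    ((measurable_partialSumError f m N).aestronglyMeasurable.mul
      (Complex.measurable_ofReal.pow_const _).aestronglyMeasurable) ?_
  filter_upwards [ae_restrict_mem measurableSet_Ioi] with t ht
  exact norm_partialSumError_mul_cpow_le hB N (one_pos.trans ht) s

lemma mellin_partialSumError (f : ℕ → ℂ) (m : ℂ) {N : ℕ} {a : ℝ} (ha : 0 ≤ a) (haN : a ≤ N)
    (s : ℂ) : mellin (partialSumError f m N) (-s) =
      ∫ t in Set.Ioi a, partialSumError f m N t * (t : ℂ) ^ (-(s + 1)) := by
  rw [mellin]
  simp only [smul_eq_mul, mul_comm, neg_add, ← sub_eq_add_neg]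
  refine setIntegral_eq_of_subset_of_forall_sdiff_eq_zero measurableSet_Ioi
    (Set.Ioi_subset_Ioi ha) fun t ht => ?_
  rw [partialSumError_eq_zero f m ((not_lt.mp ht.2).trans haN), zero_mul]

lemma differentiableAt_mellin_partialSumError {f : ℕ → ℂ} {m : ℂ} {B : ℝ}
    (hB : ∀ n : ℕ, ‖∑ k ∈ Finset.Icc 1 n, f k - m * n‖ ≤ B) {N : ℕ} (hN : 1 ≤ N)
    {s : ℂ} (hs : s.re < 0) :
    DifferentiableAt ℂ (mellin (partialSumError f m N)) s := by
  refine mellin_differentiableAt_of_isBigO_rpow (a := 0) (b := s.re - 1)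
    ((locallyIntegrable_partialSumError hB N).locallyIntegrableOn _) ?_ hs ?_ (by linarith)
  · simp only [neg_zero, Real.rpow_zero]
    exact Asymptotics.IsBigO.of_bound (2 * B + ‖m‖) (Eventually.of_forall fun t => by
      simpa using norm_partialSumError_le hB N t)
  · refine Asymptotics.IsBigO.of_bound 1 ?_
    filter_upwards [nhdsWithin_le_nhds (Iio_mem_nhds one_pos)] with t ht
    rw [partialSumError_eq_zero f m (ht.le.trans (Nat.one_le_cast.mpr hN)), norm_zero]
    positivity

lemma norm_mellin_partialSumError_le {f : ℕ → ℂ} {m : ℂ} {B : ℝ}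
    (hB : ∀ n : ℕ, ‖∑ k ∈ Finset.Icc 1 n, f k - m * n‖ ≤ B) {N : ℕ} (hN : 1 ≤ N)
    {s : ℂ} (hs : 0 < s.re) :
    ‖mellin (partialSumError f m N) (-s)‖ ≤ (2 * B + ‖m‖) * (N ^ (-s.re) / s.re) := by
  have hN0 : (0 : ℝ) < N := Nat.cast_pos.mpr hN
  have hint : (N : ℝ) ^ (-s.re) / s.re = ∫ t in Set.Ioi (N : ℝ), t ^ (-s.re - 1) := by
    rw [integral_Ioi_rpow_of_lt (by linarith) hN0, sub_add_cancel, neg_div_neg_eq]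
  rw [mellin_partialSumError f m hN0.le le_rfl, hint, ← integral_const_mul]
  refine norm_integral_le_of_norm_le
    ((integrableOn_Ioi_rpow_of_lt (by linarith) hN0).const_mul _) ?_
  filter_upwards [ae_restrict_mem measurableSet_Ioi] with t ht
  exact norm_partialSumError_mul_cpow_le hB N (hN0.trans ht) s

lemma max_sub_mul_cpow {a t : ℝ} (ha : 0 < a) (ht : a < t) (s : ℂ) :
    ((max (t - a) 0 : ℝ) : ℂ) * (t : ℂ) ^ (-(s + 1)) = (t : ℂ) ^ (-s) - a * (t : ℂ) ^ (-s - 1) := by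
  have ht0 : (t : ℂ) ≠ 0 := Complex.ofReal_ne_zero.mpr (ha.trans ht).ne'
  have hpow : (t : ℂ) ^ (-s) = (t : ℂ) ^ (-s - 1) * t := by
    rw [Complex.cpow_sub _ _ ht0, Complex.cpow_one, div_mul_cancel₀ _ ht0]
  rw [max_eq_left (by linarith), hpow, neg_add, ← sub_eq_add_neg]
  push_cast
  ring

lemma integrableOn_max_sub_mul_cpow {a : ℝ} (ha : 0 < a) {s : ℂ} (hs : 1 < s.re) :
    IntegrableOn (fun t : ℝ => ((max (t - a) 0 : ℝ) : ℂ) * (t : ℂ) ^ (-(s + 1))) (Set.Ioi a) := by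
  refine IntegrableOn.congr_fun ?_ (fun t ht => (max_sub_mul_cpow ha ht s).symm) measurableSet_Ioi
  exact (integrableOn_Ioi_cpow_of_lt (by simpa using hs) ha).sub
    ((integrableOn_Ioi_cpow_of_lt (by simp; linarith) ha).const_mul (a : ℂ))

lemma integral_Ioi_max_sub_mul_cpow {a : ℝ} (ha : 0 < a) {s : ℂ} (hs : 1 < s.re) :
    ∫ t in Set.Ioi a, ((max (t - a) 0 : ℝ) : ℂ) * (t : ℂ) ^ (-(s + 1)) =
      (a : ℂ) ^ (1 - s) / (s * (s - 1)) := by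
  have hre : (-s).re < -1 := by simpa using hs
  have hre' : (-s - 1).re < -1 := by simp; linarith
  have hs0 : s ≠ 0 := Complex.ne_zero_of_re_pos (one_pos.trans hs)
  have hs1 : s - 1 ≠ 0 := Complex.ne_zero_of_re_pos (by simpa using hs)
  have hs1' : 1 - s ≠ 0 := by rwa [← neg_sub, neg_ne_zero]
  have ha0 : (a : ℂ) ≠ 0 := Complex.ofReal_ne_zero.mpr ha.ne'
  rw [setIntegral_congr_fun measurableSet_Ioi fun t ht => max_sub_mul_cpow ha ht s,
    integral_sub (integrableOn_Ioi_cpow_of_lt hre ha)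
      ((integrableOn_Ioi_cpow_of_lt hre' ha).const_mul _), integral_const_mul,
    integral_Ioi_cpow_of_lt hre ha, integral_Ioi_cpow_of_lt hre' ha, sub_add_cancel,
    neg_add_eq_sub, Complex.cpow_sub _ _ ha0, Complex.cpow_neg, Complex.cpow_one]
  field_simp
  ring

lemma lSeriesSummable_tail {f : ℕ → ℂ} {s : ℂ} (hf : LSeriesSummable f s) (N : ℕ) :
    LSeriesSummable (fun k => if k ≤ N then 0 else f k) s :=
  hf.congr' s <| (eventually_gt_atTop N).mono fun _ hn => (if_neg hn.not_ge).symm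

lemma LSeries_eq_sum_add_LSeries_tail {f : ℕ → ℂ} {s : ℂ} (hf : LSeriesSummable f s) (N : ℕ) :
    LSeries f s = ∑ n ∈ Finset.Icc 1 N, f n * (n : ℂ) ^ (-s) +
      LSeries (fun k => if k ≤ N then 0 else f k) s := by
  rw [← sub_eq_iff_eq_add, ← LSeries_sub hf (lSeriesSummable_tail hf N), LSeries,
    tsum_eq_sum (s := Finset.Icc 1 N)]
  · refine Finset.sum_congr rfl fun n hn => ?_
    obtain ⟨hn1, hnN⟩ := Finset.mem_Icc.mp hn
    rw [LSeries.term_of_ne_zero (by omega), Pi.sub_apply, if_pos hnN, sub_zero, Complex.cpow_neg,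
      div_eq_mul_inv]
  · intro n hn
    rcases eq_or_ne n 0 with rfl | hn0
    · exact LSeries.term_zero ..
    · rw [Finset.mem_Icc, not_and_or] at hn
      rw [LSeries.term_of_ne_zero hn0, Pi.sub_apply, if_neg (by omega), sub_self, zero_div]

lemma isBigO_sum_tail {f : ℕ → ℂ} {m : ℂ} {B : ℝ}
    (hB : ∀ n : ℕ, ‖∑ k ∈ Finset.Icc 1 n, f k - m * n‖ ≤ B) (N : ℕ) :
    (fun n => ∑ k ∈ Finset.Icc 1 n, if k ≤ N then 0 else f k) =O[atTop]
      fun n : ℕ => (n : ℝ) ^ (1 : ℝ) := by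
  refine Asymptotics.IsBigO.of_bound (2 * B + ‖m‖ + ‖m‖) ?_
  filter_upwards [eventually_ge_atTop 1] with n hn
  have hn1 : (1 : ℝ) ≤ n := Nat.one_le_cast.mpr hn
  have herror := norm_partialSumError_le hB N n
  rw [partialSumError, Nat.floor_natCast] at herror
  have hmain : ‖m * (max ((n : ℝ) - N) 0 : ℝ)‖ ≤ ‖m‖ * n := by
    rw [norm_mul, Complex.norm_real, Real.norm_of_nonneg (le_max_right _ _)]
    gcongr
    exact max_le (by linarith [N.cast_nonneg (α := ℝ)]) (by linarith)
  rw [Real.rpow_one, Real.norm_of_nonneg (by linarith), add_mul]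
  refine (norm_le_norm_sub_add _ (m * (max ((n : ℝ) - N) 0 : ℝ))).trans (add_le_add ?_ hmain)
  exact herror.trans (le_mul_of_one_le_right ((norm_nonneg _).trans herror) hn1)

lemma LSeries_eq_sum_add_mellin {f : ℕ → ℂ} {m : ℂ} {B : ℝ}
    (hB : ∀ n : ℕ, ‖∑ k ∈ Finset.Icc 1 n, f k - m * n‖ ≤ B) {N : ℕ} (hN : 1 ≤ N)
    {s : ℂ} (hs : 1 < s.re) (hf : LSeriesSummable f s) :
    LSeries f s = ∑ n ∈ Finset.Icc 1 N, f n * (n : ℂ) ^ (-s) + m * (N : ℂ) ^ (1 - s) / (s - 1) +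
      s * mellin (partialSumError f m N) (-s) := by
  have hN0 : (0 : ℝ) < N := Nat.cast_pos.mpr hN
  have hN1 : (1 : ℝ) ≤ N := Nat.one_le_cast.mpr hN
  have hs0 : s ≠ 0 := Complex.ne_zero_of_re_pos (one_pos.trans hs)
  have hs1 : s - 1 ≠ 0 := Complex.ne_zero_of_re_pos (by simpa using hs)
  have hzero : ∀ t ∈ Set.Ioi (1 : ℝ) \ Set.Ioi (N : ℝ),
      ((max (t - N) 0 : ℝ) : ℂ) * (t : ℂ) ^ (-(s + 1)) = 0 := fun t ht => by
    rw [max_eq_right (by linarith [Set.notMem_Ioi.mp ht.2]), Complex.ofReal_zero, zero_mul]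
  have hint : IntegrableOn (fun t : ℝ => ((max (t - N) 0 : ℝ) : ℂ) * (t : ℂ) ^ (-(s + 1)))
      (Set.Ioi 1) :=
    (integrableOn_max_sub_mul_cpow hN0 hs).of_forall_sdiff_eq_zero measurableSet_Ioi hzero
  have htail : ∫ t in Set.Ioi (1 : ℝ), (∑ k ∈ Finset.Icc 1 ⌊t⌋₊, if k ≤ N then 0 else f k) *
      (t : ℂ) ^ (-(s + 1)) =
      mellin (partialSumError f m N) (-s) + m * ((N : ℂ) ^ (1 - s) / (s * (s - 1))) := by
    rw [← Complex.ofReal_natCast, ← integral_Ioi_max_sub_mul_cpow hN0 hs,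
      ← setIntegral_eq_of_subset_of_forall_sdiff_eq_zero measurableSet_Ioi
        (Set.Ioi_subset_Ioi hN1) hzero,
      mellin_partialSumError f m zero_le_one hN1, ← integral_const_mul,
      ← integral_add (integrableOn_partialSumError_mul_cpow hB N (one_pos.trans hs))
        (hint.const_mul m)]
    refine setIntegral_congr_fun measurableSet_Ioi fun t _ => ?_
    simp only [partialSumError]
    ring
  rw [LSeries_eq_sum_add_LSeries_tail hf N, LSeries_eq_mul_integral _ zero_le_one hs
    (lSeriesSummable_tail hf N) (isBigO_sum_tail hB N), htail]
  field_simp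
  ring

end PartialSummation

section LFunctionBounds

variable {q : ℕ} [NeZero q]

lemma exists_norm_sum_sub_mul_le (Φ : ZMod q → ℂ) :
    ∃ (m : ℂ) (B : ℝ), ∀ n : ℕ, ‖∑ k ∈ Finset.Icc 1 n, Φ k - m * n‖ ≤ B := by
  have hq0 : (q : ℂ) ≠ 0 := NeZero.ne _
  set S : ℂ := ∑ k ∈ Finset.Icc 1 q, Φ k
  set W : ℕ → ℂ := fun n => ∑ k ∈ Finset.Icc 1 n, Φ k - S / q * n with hW
  have hshift : ∀ n, ∑ k ∈ Finset.Icc 1 (n + q), Φ (k : ℕ) =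
      ∑ k ∈ Finset.Icc 1 n, Φ k + S := by
    intro n
    induction n with
    | zero => simp [S]
    | succ n ih =>
      rw [show n + 1 + q = (n + q) + 1 by ring, Finset.sum_Icc_succ_top (by omega),
        Finset.sum_Icc_succ_top (by omega), ih]
      push_cast
      rw [ZMod.natCast_self, add_zero]
      ring
  have hperiodic : Function.Periodic W q := fun n => by
    simp only [hW, hshift]
    push_cast
    field_simp
    ring
  refine ⟨S / q, ∑ j ∈ Finset.range q, ‖W j‖, fun n => ?_⟩
  change ‖W n‖ ≤ _
  rw [← hperiodic.map_mod_nat n]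
  exact Finset.single_le_sum (f := fun j => ‖W j‖) (fun _ _ => norm_nonneg _)
    (Finset.mem_range.mpr (Nat.mod_lt _ (NeZero.pos q)))

lemma differentiableAt_sum_add_mellin {f : ℕ → ℂ} {m : ℂ} {B : ℝ}
    (hB : ∀ n : ℕ, ‖∑ k ∈ Finset.Icc 1 n, f k - m * n‖ ≤ B) {N : ℕ} (hN : 1 ≤ N)
    {s : ℂ} (hs : 0 < s.re) (hs1 : s ≠ 1) :
    DifferentiableAt ℂ (fun s => ∑ n ∈ Finset.Icc 1 N, f n * (n : ℂ) ^ (-s) +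
      m * (N : ℂ) ^ (1 - s) / (s - 1) + s * mellin (partialSumError f m N) (-s)) s := by
  have hcast : ∀ n : ℕ, 1 ≤ n → (n : ℂ) ≠ 0 := fun n hn => Nat.cast_ne_zero.mpr (by omega)
  refine ((DifferentiableAt.fun_sum fun n hn => ?_).add ?_).add ?_
  · exact (differentiableAt_id.neg.const_cpow
      (Or.inl (hcast n (Finset.mem_Icc.mp hn).1))).const_mul _
  · exact (((differentiableAt_id.const_sub 1).const_cpow (Or.inl (hcast N hN))).const_mul _).div
      (differentiableAt_id.sub_const 1) (sub_ne_zero.mpr hs1)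
  · exact differentiableAt_id.mul ((differentiableAt_mellin_partialSumError hB hN
      (s := -s) (by simpa using hs)).comp s differentiableAt_id.neg)

/- Both sides are analytic, and they agree for `1 < Re s`. The identity theorem is applied on the
convex quarter plane containing `s`, which avoids the pole at `1`. -/
lemma LFunction_eq_sum_add_mellin (χ : DirichletCharacter ℂ q) {m : ℂ} {B : ℝ}
    (hB : ∀ n : ℕ, ‖∑ k ∈ Finset.Icc 1 n, χ k - m * n‖ ≤ B) {N : ℕ} (hN : 1 ≤ N)
    {s : ℂ} (hs : 0 < s.re) (him : s.im ≠ 0) :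
    χ.LFunction s = ∑ n ∈ Finset.Icc 1 N, χ n * (n : ℂ) ^ (-s) + m * (N : ℂ) ^ (1 - s) / (s - 1) +
      s * mellin (partialSumError (fun n => χ n) m N) (-s) := by
  set U : Set ℂ := {w | 0 < w.re} ∩ {w | 0 < w.im * s.im} with hU
  have hopen : IsOpen U := (Complex.isOpen_re_gt 0).inter
    (isOpen_lt continuous_const (Complex.continuous_im.mul continuous_const))
  have hconvex : Convex ℝ U := (convex_halfSpace_re_gt 0).inter
    (convex_halfSpace_gt ⟨fun w z => by rw [Complex.add_im, add_mul], fun c w => by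
      rw [Complex.smul_im, smul_mul_assoc]⟩ 0)
  have hne : ∀ w ∈ U, w ≠ 1 := by
    rintro w hw rfl
    simp [hU] at hw
  have hL : DifferentiableOn ℂ χ.LFunction U := fun w hw =>
    (χ.differentiableAt_LFunction w (Or.inl (hne w hw))).differentiableWithinAt
  have hR := fun w (hw : w ∈ U) =>
    (differentiableAt_sum_add_mellin hB hN hw.1 (hne w hw)).differentiableWithinAt (s := U)
  refine (hL.analyticOnNhd hopen).eqOn_of_preconnected_of_eventuallyEq
    (DifferentiableOn.analyticOnNhd hR hopen) hconvex.isPreconnected (z₀ := ⟨2, s.im⟩)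
    ⟨show (0 : ℝ) < 2 from two_pos, mul_self_pos.mpr him⟩ ?_ ⟨hs, mul_self_pos.mpr him⟩
  filter_upwards [(Complex.isOpen_re_gt 1).mem_nhds
    (show (⟨2, s.im⟩ : ℂ) ∈ {w : ℂ | 1 < w.re} from one_lt_two (α := ℝ))] with w hw
  rw [χ.LFunction_eq_LSeries hw]
  exact LSeries_eq_sum_add_mellin hB hN hw (χ.LSeriesSummable_of_one_lt_re hw)

lemma norm_sum_mul_cpow_le {f : ℕ → ℂ} (hf : ∀ n, ‖f n‖ ≤ 1) {ε : ℝ} (hε : 0 < ε) {N : ℕ}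
    (hN : 1 ≤ N) {s : ℂ} (hs : 1 - ε ≤ s.re) :
    ‖∑ n ∈ Finset.Icc 1 N, f n * (n : ℂ) ^ (-s)‖ ≤ (1 + 1 / ε) * (N : ℝ) ^ (2 * ε) := by
  have hN0 : (0 : ℝ) < N := Nat.cast_pos.mpr hN
  have hterm : ∀ n ∈ Finset.Icc 1 N, ‖f n * (n : ℂ) ^ (-s)‖ ≤ (N : ℝ) ^ ε * (n : ℝ)⁻¹ := by
    intro n hn
    obtain ⟨hn1, hnN⟩ := Finset.mem_Icc.mp hn
    have hn0 : (0 : ℝ) < n := Nat.cast_pos.mpr hn1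
    rw [norm_mul, Complex.norm_natCast_cpow_of_pos hn1, Complex.neg_re]
    calc ‖f n‖ * (n : ℝ) ^ (-s.re) ≤ 1 * (n : ℝ) ^ (ε + -1) := by
          gcongr
          · exact hf n
          · exact Nat.one_le_cast.mpr hn1
          · linarith
      _ = (n : ℝ) ^ ε * (n : ℝ)⁻¹ := by rw [one_mul, Real.rpow_add hn0, Real.rpow_neg_one]
      _ ≤ _ := by gcongr
  have hharmonic : ∑ n ∈ Finset.Icc 1 N, (n : ℝ)⁻¹ ≤ 1 + Real.log N := by
    have hle := harmonic_le_one_add_log N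
    rw [harmonic_eq_sum_Icc] at hle
    push_cast at hle
    exact hle
  calc _ ≤ ∑ n ∈ Finset.Icc 1 N, (N : ℝ) ^ ε * (n : ℝ)⁻¹ := norm_sum_le_of_le _ hterm
    _ ≤ (N : ℝ) ^ ε * (1 + Real.log N) := by
      rw [← Finset.mul_sum]
      gcongr
    _ ≤ (N : ℝ) ^ ε * ((N : ℝ) ^ ε + (N : ℝ) ^ ε / ε) := by
      gcongr
      · exact Real.one_le_rpow (Nat.one_le_cast.mpr hN) hε.le
      · exact Real.log_le_rpow_div hN0.le hε
    _ = _ := by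
      rw [two_mul, Real.rpow_add hN0]
      ring

lemma norm_mul_mellin_partialSumError_le {f : ℕ → ℂ} {m : ℂ} {B ε : ℝ}
    (hB : ∀ n : ℕ, ‖∑ k ∈ Finset.Icc 1 n, f k - m * n‖ ≤ B) (hε : ε ≤ 1 / 2) {N : ℕ} (hN : 1 ≤ N)
    {s : ℂ} (hs : 1 - ε ≤ s.re) (hs4 : s.re ≤ 4) (him : |s.im| ≤ N) :
    ‖s * mellin (partialSumError f m N) (-s)‖ ≤ 10 * (2 * B + ‖m‖) * (N : ℝ) ^ ε := by
  have hre : 1 / 2 ≤ s.re := by linarith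
  have hN1 : (1 : ℝ) ≤ N := Nat.one_le_cast.mpr hN
  have hB0 : 0 ≤ B := (norm_nonneg _).trans (hB 0)
  have hnorm : ‖s‖ ≤ 5 * N := by
    refine (Complex.norm_le_abs_re_add_abs_im s).trans ?_
    rw [abs_of_pos (by linarith)]
    linarith
  have hpow : (N : ℝ) ^ (-s.re) / s.re ≤ (N : ℝ) ^ (ε - 1) / (1 / 2) := by
    gcongr
    linarith
  calc _ ≤ 5 * N * ((2 * B + ‖m‖) * ((N : ℝ) ^ (ε - 1) / (1 / 2))) := by
        rw [norm_mul]
        gcongr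
        exact (norm_mellin_partialSumError_le hB hN (by linarith)).trans (by gcongr)
    _ = _ := by
        rw [Real.rpow_sub_one (by linarith)]
        field_simp
        ring

lemma exists_norm_LFunction_le_rpow (χ : DirichletCharacter ℂ q) {ε : ℝ}
    (hε : 0 < ε) (hε2 : ε ≤ 1 / 2) :
    ∃ C, 0 < C ∧ ∀ s : ℂ, 1 - ε ≤ s.re → s.re ≤ 4 → 1 ≤ |s.im| →
      ‖χ.LFunction s‖ ≤ C * |s.im| ^ (2 * ε) := by
  obtain ⟨m, B, hB⟩ := exists_norm_sum_sub_mul_le (χ : ZMod q → ℂ)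
  have hB0 : 0 ≤ B := (norm_nonneg _).trans (hB 0)
  set M := (1 + 1 / ε) + ‖m‖ + 10 * (2 * B + ‖m‖) with hM
  refine ⟨M * 2 ^ (2 * ε), by positivity, fun s hs hs4 him => ?_⟩
  have him0 : 0 < |s.im| := one_pos.trans_le him
  set N := ⌈|s.im|⌉₊
  have hN : 1 ≤ N := Nat.one_le_ceil_iff.mpr him0
  have hN1 : (1 : ℝ) ≤ N := Nat.one_le_cast.mpr hN
  have hmono : (N : ℝ) ^ ε ≤ (N : ℝ) ^ (2 * ε) :=
    Real.rpow_le_rpow_of_exponent_le hN1 (by linarith)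
  have hpole : ‖m * (N : ℂ) ^ (1 - s) / (s - 1)‖ ≤ ‖m‖ * (N : ℝ) ^ (2 * ε) := by
    have hden : 1 ≤ ‖s - 1‖ := him.trans (by simpa using Complex.abs_im_le_norm (s - 1))
    rw [norm_div, norm_mul, Complex.norm_natCast_cpow_of_pos hN, Complex.sub_re, Complex.one_re]
    refine (div_le_self (by positivity) hden).trans ?_
    gcongr
    linarith
  have hmellin := norm_mul_mellin_partialSumError_le hB hε2 hN hs hs4 (Nat.le_ceil _)
  rw [LFunction_eq_sum_add_mellin χ hB hN (by linarith) (abs_pos.mp him0)]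
  calc _ ≤ (1 + 1 / ε) * (N : ℝ) ^ (2 * ε) + ‖m‖ * (N : ℝ) ^ (2 * ε) +
        10 * (2 * B + ‖m‖) * (N : ℝ) ^ (2 * ε) := by
        refine (norm_add₃_le).trans (add_le_add_three
          (norm_sum_mul_cpow_le (fun n => χ.norm_le_one n) hε hN hs) hpole (hmellin.trans ?_))
        gcongr
    _ = M * (N : ℝ) ^ (2 * ε) := by rw [hM]; ring
    _ ≤ M * (2 * |s.im|) ^ (2 * ε) := by
        gcongr
        linarith [Nat.ceil_lt_add_one him0.le]
    _ = _ := by rw [Real.mul_rpow zero_le_two him0.le, mul_assoc]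

end LFunctionBounds

lemma isCompact_strip (ρ R : ℝ) :
    IsCompact {s : ℂ | 1 ≤ s.re ∧ s.re ≤ 2 ∧ ρ ≤ |s.im| ∧ |s.im| ≤ R} := by
  refine ((isCompact_Icc (a := (1 : ℝ)) (b := 2)).reProdIm
    (isCompact_Icc (a := -R) (b := R))).of_isClosed_subset ?_ ?_
  · exact (isClosed_le continuous_const Complex.continuous_re).inter
      ((isClosed_le Complex.continuous_re continuous_const).inter
      ((isClosed_le continuous_const Complex.continuous_im.abs).inter
      (isClosed_le Complex.continuous_im.abs continuous_const)))
  · rintro s ⟨hs1, hs2, -, him⟩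
    exact ⟨⟨hs1, hs2⟩, abs_le.mp him⟩

lemma SlowGrowth.of_continuousOn {f : ℂ → ℂ} (hf : ContinuousOn f ({s | 1 ≤ s.re} \ {1})) {R : ℝ}
    (hbound : ∀ ε > (0 : ℝ), ∃ C, ∀ s : ℂ, 1 < s.re → s.re ≤ 2 → R ≤ |s.im| →
      ‖f s‖ ≤ C * (1 + |s.im|) ^ ε) : SlowGrowth f := by
  intro ε hε ρ hρ
  obtain ⟨C, hC⟩ := hbound ε hε
  obtain ⟨D, hD⟩ := (isCompact_strip ρ R).exists_bound_of_continuousOn (f := f) (hf.mono (by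
    rintro s ⟨hs1, -, him, -⟩
    refine ⟨hs1, ?_⟩
    rintro rfl
    rw [Complex.one_im, abs_zero] at him
    linarith))
  refine ⟨max C (max D 0), fun s hs1 hs2 him => ?_⟩
  have hone : 1 ≤ (1 + |s.im|) ^ ε := Real.one_le_rpow (by linarith [abs_nonneg s.im]) hε.le
  rcases le_total |s.im| R with hR | hR
  · calc ‖f s‖ ≤ max C (max D 0) := by simp [hD s ⟨hs1.le, hs2, him, hR⟩]
      _ ≤ _ := le_mul_of_one_le_right (by simp) hone
  · refine (hC s hs1 hs2 hR).trans ?_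
    gcongr
    exact le_max_left _ _

section LFunctionGrowth

variable {q : ℕ} [NeZero q] (χ : DirichletCharacter ℂ q)

lemma differentiableOn_LFunction_compl_one : DifferentiableOn ℂ χ.LFunction {1}ᶜ :=
  fun s hs => (χ.differentiableAt_LFunction s (Or.inl hs)).differentiableWithinAt

lemma continuousOn_iteratedDeriv_LFunction (j : ℕ) :
    ContinuousOn (iteratedDeriv j χ.LFunction) {1}ᶜ := fun s hs => by
  rw [iteratedDeriv_eq_iterate]
  exact (((differentiableOn_LFunction_compl_one χ).analyticAt
    (isOpen_compl_singleton.mem_nhds hs)).iterated_deriv j).continuousAt.continuousWithinAt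

lemma mem_closedBall_bounds {s w : ℂ} {δ : ℝ} (hw : w ∈ Metric.closedBall s δ) :
    |w.re - s.re| ≤ δ ∧ |s.im| - δ ≤ |w.im| ∧ |w.im| ≤ |s.im| + δ := by
  rw [Metric.mem_closedBall, dist_eq_norm] at hw
  have him : |w.im - s.im| ≤ δ := (Complex.abs_im_le_norm (w - s)).trans hw
  have hlower := abs_sub_abs_le_abs_sub s.im w.im
  rw [abs_sub_comm] at hlower
  exact ⟨(Complex.abs_re_le_norm (w - s)).trans hw, by linarith,
    by linarith [abs_sub_abs_le_abs_sub w.im s.im]⟩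

lemma exists_norm_iteratedDeriv_LFunction_le (j : ℕ) {ε : ℝ} (hε : 0 < ε) :
    ∃ C, ∀ s : ℂ, 1 < s.re → s.re ≤ 2 → 2 ≤ |s.im| →
      ‖iteratedDeriv j χ.LFunction s‖ ≤ C * (1 + |s.im|) ^ ε := by
  set δ : ℝ := min (ε / 2) (1 / 4)
  have hδ0 : 0 < δ := by positivity
  have hδ1 : δ ≤ 1 / 4 := min_le_right _ _
  have hδε : 2 * δ ≤ ε := by linarith [min_le_left (ε / 2) (1 / 4 : ℝ)]
  obtain ⟨C, hC0, hC⟩ := exists_norm_LFunction_le_rpow χ hδ0 (by linarith)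
  refine ⟨j.factorial * C / δ ^ j, fun s hs1 hs2 him => ?_⟩
  have hball : ∀ w ∈ Metric.closedBall s δ, 1 - δ ≤ w.re ∧ w.re ≤ 4 ∧ 1 ≤ |w.im| ∧
      |w.im| ≤ 1 + |s.im| := fun w hw => by
    obtain ⟨hre, hlower, hupper⟩ := mem_closedBall_bounds hw
    obtain ⟨hre1, hre2⟩ := abs_le.mp hre
    exact ⟨by linarith, by linarith, by linarith, by linarith⟩
  have hdiff : DiffContOnCl ℂ χ.LFunction (Metric.ball s δ) := by
    refine DifferentiableOn.diffContOnCl ?_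
    rw [closure_ball _ hδ0.ne']
    refine (differentiableOn_LFunction_compl_one χ).mono fun w hw => ?_
    rintro rfl
    simpa using zero_lt_one.trans_le (hball 1 hw).2.2.1
  calc _ ≤ j.factorial * (C * (1 + |s.im|) ^ ε) / δ ^ j := by
        refine Complex.norm_iteratedDeriv_le_of_forall_mem_sphere_norm_le j hδ0 hdiff fun w hw => ?_
        obtain ⟨hre1, hre4, hw1, hws⟩ := hball w (Metric.sphere_subset_closedBall hw)
        refine (hC w hre1 hre4 hw1).trans ?_
        gcongr
        exact (Real.rpow_le_rpow_of_exponent_le hw1 hδε).trans (by gcongr)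
    _ = _ := by ring

lemma slowUpTo_LFunction (n : ℕ) : SlowUpTo n χ.LFunction where
  differentiableOn := (differentiableOn_LFunction_compl_one χ).mono <| by
    rintro _ hs rfl
    simp at hs
  slow j _ := SlowGrowth.of_continuousOn
    ((continuousOn_iteratedDeriv_LFunction χ j).mono fun _ hs => hs.2)
    fun _ hε => exists_norm_iteratedDeriv_LFunction_le χ j hε

lemma exists_norm_LFunctionTrivChar_le : ∃ C, 0 < C ∧ ∀ x : ℝ, 0 < x → x ≤ 1 →
    ‖DirichletCharacter.LFunctionTrivChar q (1 + x)‖ ≤ C / x := by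
  obtain ⟨C, hC⟩ := (isCompact_Icc (a := (0 : ℝ)) (b := 1)).exists_bound_of_continuousOn
    (f := fun x : ℝ => DirichletCharacter.LFunctionTrivChar₁ q (1 + x))
    ((DirichletCharacter.differentiable_LFunctionTrivChar₁ q).continuous.comp
      (by fun_prop)).continuousOn
  refine ⟨max C 1, by positivity, fun x hx hx1 => ?_⟩
  have hle := hC x ⟨hx.le, hx1⟩
  have hne : (1 : ℂ) + x ≠ 1 := by simp [hx.ne']
  rw [DirichletCharacter.LFunctionTrivChar₁, Function.update_of_ne hne, norm_mul,
    add_sub_cancel_left, Complex.norm_real, Real.norm_of_nonneg hx.le] at hle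
  rw [le_div_iff₀ hx, mul_comm]
  exact hle.trans (le_max_left _ _)

lemma le_of_one_le_mul {A C D c U x a : ℝ} (hC : 0 < C) (hD : 0 < D) (hc : 0 < c)
    (hcle : c * (A ^ 4 * C ^ 3 * D) ≤ 1) (hU : 0 < U) (ha : 0 ≤ a) (hx : c / U ^ 5 ≤ x)
    (hone : 1 ≤ (C / x) ^ 3 * a ^ 4 * (D * U)) : A * c / U ^ 4 ≤ a := by
  have hcube : c ^ 3 ≤ C ^ 3 * D * (a * U ^ 4) ^ 4 := by
    have hx0 : 0 < x := lt_of_lt_of_le (by positivity) hx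
    have hle : 1 ≤ (C / (c / U ^ 5)) ^ 3 * a ^ 4 * (D * U) := hone.trans (by gcongr)
    have heq : (C / (c / U ^ 5)) ^ 3 * a ^ 4 * (D * U) = C ^ 3 * D * (a * U ^ 4) ^ 4 / c ^ 3 := by
      field_simp
    rwa [heq, le_div_iff₀ (by positivity), one_mul] at hle
  rw [div_le_iff₀ (by positivity)]
  refine le_of_pow_le_pow_left₀ (n := 4) (by norm_num) (by positivity) ?_
  refine le_of_mul_le_mul_left ?_ (show 0 < C ^ 3 * D by positivity)
  calc C ^ 3 * D * (A * c) ^ 4 = c * (A ^ 4 * C ^ 3 * D) * c ^ 3 := by ring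
    _ ≤ 1 * c ^ 3 := by gcongr
    _ ≤ _ := by rwa [one_mul]

/- The classical inequality `1 ≤ |L(1+x, 1)³ L(1+x+it, χ)⁴ L(1+x+2it, χ²)|`, in which the first
factor is of order `x⁻³` and the last one is `O(U)`. -/
lemma exists_le_norm_LFunction_of_le (A : ℝ) {δ : ℝ} (hδ : 0 < δ) : ∃ c, 0 < c ∧ c ≤ 1 ∧
    ∀ x t : ℝ, 1 ≤ |t| → x ≤ 1 → c / ((1 + |t|) ^ δ) ^ 5 ≤ x →
      A * c / ((1 + |t|) ^ δ) ^ 4 ≤ ‖χ.LFunction (1 + x + Complex.I * t)‖ := by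
  obtain ⟨C, hC0, hC⟩ := exists_norm_LFunctionTrivChar_le (q := q)
  obtain ⟨D, hD0, hD⟩ := ((slowUpTo_LFunction (χ ^ 2) 0).slow 0 le_rfl).exists_pos hδ one_pos
  simp only [iteratedDeriv_zero] at hD
  set M := |A| ^ 4 * C ^ 3 * (D * 2 ^ δ) + 1 with hM
  have hM1 : 1 ≤ M := le_add_of_nonneg_left (by positivity)
  have hM0 : 0 < M := by positivity
  refine ⟨M⁻¹, by positivity, inv_le_one_of_one_le₀ hM1, fun x t ht hx1 hx => ?_⟩
  have hU0 : 0 < (1 + |t|) ^ δ := by positivity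
  have hx0 : 0 < x := lt_of_lt_of_le (by positivity) hx
  refine le_of_one_le_mul hC0 (show 0 < D * 2 ^ δ by positivity) (inv_pos.mpr hM0) ?_ hU0
    (norm_nonneg _) hx ((χ.norm_LFunction_product_ge_one hx0 t).le.trans ?_)
  · rw [inv_mul_le_iff₀ hM0, mul_one, hM, pow_abs, abs_of_nonneg (by positivity)]
    linarith
  have him : (1 + x + 2 * Complex.I * t : ℂ).im = 2 * t := by simp
  have hre : (1 + x + 2 * Complex.I * t : ℂ).re = 1 + x := by simp
  have habs : |2 * t| = 2 * |t| := by rw [abs_mul, abs_two]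
  have hsq : ‖(χ ^ 2).LFunction (1 + x + 2 * Complex.I * t)‖ ≤ D * 2 ^ δ * (1 + |t|) ^ δ := by
    refine (hD _ (by rw [hre]; linarith) (by rw [hre]; linarith)
      (by rw [him, habs]; linarith)).trans ?_
    rw [him, habs, mul_assoc, ← Real.mul_rpow zero_le_two (by positivity)]
    gcongr
    linarith
  rw [norm_mul, norm_mul, norm_pow, norm_pow]
  gcongr
  exact hC x hx0 hx1

lemma exists_norm_LFunction_sub_le {δ : ℝ} (hδ : 0 < δ) : ∃ C, 0 < C ∧ ∀ s w : ℂ, 1 < s.re →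
    s.re ≤ 2 → 1 < w.re → w.re ≤ 2 → w.im = s.im → 1 ≤ |s.im| →
      ‖χ.LFunction w - χ.LFunction s‖ ≤ C * (1 + |s.im|) ^ δ * ‖w - s‖ := by
  obtain ⟨C, hC0, hC⟩ := ((slowUpTo_LFunction χ 1).slow 1 le_rfl).exists_pos hδ one_pos
  simp only [iteratedDeriv_one] at hC
  refine ⟨C, hC0, fun s w hs1 hs2 hw1 hw2 him ht => ?_⟩
  have hconvex : Convex ℝ {v : ℂ | 1 < v.re ∧ v.re ≤ 2 ∧ v.im = s.im} :=
    (convex_halfSpace_re_gt 1).inter ((convex_halfSpace_re_le 2).inter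
      (convex_hyperplane (𝕜 := ℝ) Complex.imLm.isLinear s.im))
  refine hconvex.norm_image_sub_le_of_norm_deriv_le (𝕜 := ℂ) ?_ ?_ ⟨hs1, hs2, rfl⟩ ⟨hw1, hw2, him⟩
  · rintro v ⟨hv1, -, -⟩
    exact χ.differentiableAt_LFunction v (Or.inl (by rintro rfl; exact hv1.ne rfl))
  · rintro v ⟨hv1, hv2, hv⟩
    rw [← hv] at ht ⊢
    exact hC v hv1 hv2 ht

/- To the right of `Re s = 1 + η`, where `η = c / U⁵`, use the previous lower bound. To the left of
it, move to the line `Re s = 1 + η`; the constant `A = 2 * C` in the lower bound there is chosen so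
that the change of `L` is at most half of it. -/
lemma exists_le_norm_LFunction {ε : ℝ} (hε : 0 < ε) : ∃ c, 0 < c ∧ ∀ s : ℂ, 1 < s.re → s.re ≤ 2 →
    1 ≤ |s.im| → c / (1 + |s.im|) ^ ε ≤ ‖χ.LFunction s‖ := by
  have hδ : 0 < ε / 4 := by positivity
  obtain ⟨C, hC0, hC⟩ := exists_norm_LFunction_sub_le χ hδ
  obtain ⟨c, hc0, hc1, hc⟩ := exists_le_norm_LFunction_of_le χ (2 * C) hδ
  refine ⟨C * c, by positivity, fun s hs1 hs2 ht => ?_⟩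
  have hT : 1 ≤ 1 + |s.im| := by linarith
  have hUε : (1 + |s.im|) ^ ε = ((1 + |s.im|) ^ (ε / 4)) ^ 4 := by
    rw [← Real.rpow_mul_natCast (by linarith)]
    norm_num
  rw [hUε]
  set U := (1 + |s.im|) ^ (ε / 4)
  have hU1 : 1 ≤ U := Real.one_le_rpow hT hδ.le
  set η := c / U ^ 5 with hη
  have hη0 : 0 < η := by positivity
  have hη1 : η ≤ 1 := (div_le_one (by positivity)).mpr (hc1.trans (one_le_pow₀ hU1))
  have hdouble : 2 * C * c / U ^ 4 = C * c / U ^ 4 + C * c / U ^ 4 := by ring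
  have hhalf : 0 ≤ C * c / U ^ 4 := by positivity
  rcases le_total η (s.re - 1) with hle | hle
  · have hs : (1 + (s.re - 1 : ℝ) + Complex.I * s.im : ℂ) = s := by
      apply Complex.ext <;> simp
    have hlower := hc (s.re - 1) s.im ht (by linarith) hle
    rw [hs] at hlower
    linarith
  · set w : ℂ := 1 + η + Complex.I * s.im with hw
    have hwre : w.re = 1 + η := by simp [hw]
    have hdist : ‖w - s‖ ≤ η := by
      have hreal : w - s = ((1 + η - s.re : ℝ) : ℂ) := by
        apply Complex.ext <;> simp [hw]
      rw [hreal, Complex.norm_of_nonneg (by linarith)]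
      linarith
    have hclose : ‖χ.LFunction w - χ.LFunction s‖ ≤ C * c / U ^ 4 :=
      calc _ ≤ C * U * ‖w - s‖ :=
            hC s w hs1 hs2 (by rw [hwre]; linarith) (by rw [hwre]; linarith) (by simp [hw]) ht
        _ ≤ C * U * η := by gcongr
        _ = _ := by rw [hη]; field_simp
    linarith [hc η s.im ht hη1 le_rfl, norm_sub_norm_le (χ.LFunction w) (χ.LFunction s)]

lemma LFunction_ne_zero_of_one_lt_re {s : ℂ} (hs : 1 < s.re) : χ.LFunction s ≠ 0 :=
  χ.LFunction_ne_zero_of_one_le_re (Or.inr (by rintro rfl; exact hs.ne rfl)) hs.le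

lemma slowGrowth_inv_LFunction : SlowGrowth fun s => (χ.LFunction s)⁻¹ := by
  refine SlowGrowth.of_continuousOn (R := 1) (fun s hs => ?_) fun ε hε => ?_
  · exact ((χ.differentiableAt_LFunction s (Or.inl hs.2)).continuousAt.inv₀
      (χ.LFunction_ne_zero_of_one_le_re (Or.inr hs.2) hs.1)).continuousWithinAt
  · obtain ⟨c, hc0, hc⟩ := exists_le_norm_LFunction χ hε
    refine ⟨c⁻¹, fun s hs1 hs2 him => ?_⟩
    rw [norm_inv]
    calc ‖χ.LFunction s‖⁻¹ ≤ (c / (1 + |s.im|) ^ ε)⁻¹ := by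
          gcongr
          exact hc s hs1 hs2 him
      _ = c⁻¹ * (1 + |s.im|) ^ ε := by rw [inv_div, div_eq_inv_mul]

lemma slowUpTo_logDeriv_LFunction (n : ℕ) :
    SlowUpTo n fun s => deriv χ.LFunction s / χ.LFunction s := by
  simpa only [div_eq_mul_inv] using (slowUpTo_LFunction χ (n + 1)).deriv.mul
    ((slowUpTo_LFunction χ n).inv (fun s hs => LFunction_ne_zero_of_one_lt_re χ hs)
      (slowGrowth_inv_LFunction χ))

end LFunctionGrowth

/-! ### The Euler product over `q ∤ σ_k(n)` -/

section Characters

variable {q : ℕ} [Fact q.Prime]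

/-- The characters in the set `X_m` of the paper: those trivial on the `m`-th roots of unity mod
`q`. -/
def TrivialOnRoots (m : ℕ) (χ : DirichletCharacter ℂ q) : Prop :=
  ∀ a : ZMod q, a ^ m = 1 → χ a = 1

open Classical in
lemma sum_trivialOnRoots_eq_zero {m : ℕ} {a : ZMod q} (ha : a ^ m ≠ 1) :
    ∑ χ : DirichletCharacter ℂ q with TrivialOnRoots m χ, χ a = 0 := by
  obtain ⟨ψ, hψ⟩ := DirichletCharacter.exists_apply_ne_one_of_hasEnoughRootsOfUnity ℂ ha
  have hm : m ≠ 0 := fun hm => ha (by rw [hm, pow_zero])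
  have hpow : ∀ b, (ψ ^ m) b = ψ (b ^ m) := fun b => by rw [ψ.pow_apply' hm, map_pow]
  have htrans : ∀ χ, TrivialOnRoots m χ ↔ TrivialOnRoots m (ψ ^ m * χ) := fun χ =>
    forall₂_congr fun b hb => by rw [MulChar.mul_apply, hpow, hb, map_one, one_mul]
  have hsum : ∑ χ with TrivialOnRoots m χ, χ a =
      ψ (a ^ m) * ∑ χ with TrivialOnRoots m χ, χ a := by
    rw [Finset.mul_sum]
    refine (Finset.sum_equiv (Equiv.mulLeft (ψ ^ m)) (fun χ => ?_) fun χ _ => ?_).symm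
    · simpa using htrans χ
    · rw [Equiv.coe_mulLeft, MulChar.mul_apply, hpow]
  have hzero : (1 - ψ (a ^ m)) * ∑ χ with TrivialOnRoots m χ, χ a = 0 := by
    rw [sub_mul, one_mul, ← hsum, sub_self]
  exact (mul_eq_zero.mp hzero).resolve_left (sub_ne_zero.mpr hψ.symm)

lemma card_filter_pow_eq_one {m : ℕ} (hm : m ∣ q - 1) :
    (Finset.univ.filter fun a : ZMod q => a ^ m = 1).card = m := by
  have hq0 : 0 < q - 1 := Nat.sub_pos_of_lt (Fact.out : q.Prime).one_lt
  obtain ⟨g, hg⟩ := IsCyclic.exists_ofOrder_eq_natCard (α := (ZMod q)ˣ)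
  have hgen : IsPrimitiveRoot g (q - 1) := by
    rw [← ZMod.card_units q, ← Nat.card_eq_fintype_card, ← hg]
    exact IsPrimitiveRoot.orderOf g
  have hprim := (IsPrimitiveRoot.coe_units_iff.mpr hgen).pow hq0 (Nat.div_mul_cancel hm).symm
  refine Eq.trans (congrArg Finset.card ?_) hprim.card_nthRootsFinset
  ext a
  simp [Polynomial.mem_nthRootsFinset (Nat.pos_of_dvd_of_pos hm hq0)]

open Classical in
lemma sum_trivialOnRoots_eq_card {m : ℕ} {a : ZMod q} (ha : a ^ m = 1) :
    ∑ χ : DirichletCharacter ℂ q with TrivialOnRoots m χ, χ a =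
      (Finset.univ.filter fun χ : DirichletCharacter ℂ q => TrivialOnRoots m χ).card := by
  rw [← nsmul_one, ← Finset.sum_const]
  exact Finset.sum_congr rfl fun χ hχ => (Finset.mem_filter.mp hχ).2 a ha

open Classical in
/- Evaluate `∑ χ a`, over all `a` and all characters `χ` in question, in both orders. -/
lemma card_trivialOnRoots {m : ℕ} (hm : m ∣ q - 1) :
    ((Finset.univ.filter fun χ : DirichletCharacter ℂ q => TrivialOnRoots m χ).card : ℂ) =
      ((q - 1) / m : ℕ) := by
  have hm0 : m ≠ 0 := ne_zero_of_dvd_ne_zero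
    (Nat.sub_pos_of_lt (Fact.out : q.Prime).one_lt).ne' hm
  have hm' : (m : ℂ) ≠ 0 := Nat.cast_ne_zero.mpr hm0
  rw [Nat.cast_div hm hm', eq_div_iff hm']
  calc _ = ∑ a : ZMod q with a ^ m = 1,
        ∑ χ : DirichletCharacter ℂ q with TrivialOnRoots m χ, χ a := by
        rw [Finset.sum_congr rfl fun a ha =>
          sum_trivialOnRoots_eq_card (Finset.mem_filter.mp ha).2, Finset.sum_const,
          card_filter_pow_eq_one hm, nsmul_eq_mul, mul_comm]
    _ = ∑ a : ZMod q, ∑ χ : DirichletCharacter ℂ q with TrivialOnRoots m χ, χ a :=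
        Finset.sum_filter_of_ne fun a _ ha => by_contra fun h => ha (sum_trivialOnRoots_eq_zero h)
    _ = ((q - 1 : ℕ) : ℂ) := by
        rw [Finset.sum_comm, Finset.sum_eq_single_of_mem 1]
        · rw [MulChar.sum_one_eq_card_units, ZMod.card_units]
        · exact Finset.mem_filter.mpr ⟨Finset.mem_univ _, fun a ha =>
            MulChar.one_apply (IsUnit.of_pow_eq_one ha hm0)⟩
        · exact fun χ _ hχ => MulChar.sum_eq_zero_of_ne_one hχ

open Classical in
lemma sum_trivialOnRoots {m : ℕ} (hm : m ∣ q - 1) (a : ZMod q) :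
    ∑ χ : DirichletCharacter ℂ q with TrivialOnRoots m χ, χ a =
      if a ^ m = 1 then (((q - 1) / m : ℕ) : ℂ) else 0 := by
  split_ifs with ha
  · rw [sum_trivialOnRoots_eq_card ha, card_trivialOnRoots hm]
  · exact sum_trivialOnRoots_eq_zero ha

open Classical in
/-- The exponent with which `L(s, χ)` occurs in the generating Dirichlet series of the integers
`n` with `q ∤ σ_k(n)`, where `r = gcd(k, q - 1)`. -/
noncomputable def charExponent (r : ℕ) (χ : DirichletCharacter ℂ q) : ℝ :=
  (if χ = 1 then 1 else 0) - 2 / ((q - 1) / r : ℕ) * (if TrivialOnRoots (2 * r) χ then 1 else 0)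
    + 1 / ((q - 1) / r : ℕ) * (if TrivialOnRoots r χ then 1 else 0)

open Classical in
lemma sum_charExponent_mul (r : ℕ) (f : DirichletCharacter ℂ q → ℂ) :
    ∑ χ, (charExponent r χ : ℂ) * f χ = f 1
      - 2 / ((q - 1) / r : ℕ) * ∑ χ with TrivialOnRoots (2 * r) χ, f χ
      + 1 / ((q - 1) / r : ℕ) * ∑ χ with TrivialOnRoots r χ, f χ := by
  have hone : f 1 = ∑ χ, if χ = 1 then f χ else 0 := by simp
  rw [hone, Finset.sum_filter, Finset.sum_filter, Finset.mul_sum, Finset.mul_sum,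
    ← Finset.sum_sub_distrib, ← Finset.sum_add_distrib]
  refine Finset.sum_congr rfl fun χ _ => ?_
  rw [charExponent]
  split_ifs <;> push_cast <;> ring

open Classical in
/- With `h = (q - 1) / r` characters trivial on `C_r` and `h / 2` trivial on `C_{2r}`, the
denominators in `charExponent` turn the two sums into averages. -/
lemma sum_charExponent_mul_of_average {r : ℕ} (hr : 2 * r ∣ q - 1) {f : DirichletCharacter ℂ q → ℂ}
    {A B : ℂ} (hA : ∑ χ with TrivialOnRoots (2 * r) χ, f χ = ((q - 1) / (2 * r) : ℕ) * A)
    (hB : ∑ χ with TrivialOnRoots r χ, f χ = ((q - 1) / r : ℕ) * B) :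
    ∑ χ, (charExponent r χ : ℂ) * f χ = f 1 - A + B := by
  obtain ⟨c, hc⟩ := hr
  have hrc : 2 * r * c ≠ 0 := hc ▸ (Nat.sub_pos_of_lt (Fact.out : q.Prime).one_lt).ne'
  obtain ⟨hr0, hc0⟩ : 0 < r ∧ c ≠ 0 := by
    rw [mul_ne_zero_iff] at hrc
    omega
  have hdiv1 : (q - 1) / r = 2 * c := Nat.div_eq_of_eq_mul_right hr0 (by rw [hc]; ring)
  have hdiv2 : (q - 1) / (2 * r) = c := Nat.div_eq_of_eq_mul_right (by omega) hc
  have hc0' : (c : ℂ) ≠ 0 := Nat.cast_ne_zero.mpr hc0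
  rw [sum_charExponent_mul, hA, hB, hdiv1, hdiv2]
  push_cast
  field_simp

end Characters

lemma one_sub_mem_slitPlane {Y : ℂ} (hY : ‖Y‖ < 1) : 1 - Y ∈ Complex.slitPlane := by
  rw [sub_eq_add_neg]
  exact Complex.mem_slitPlane_of_norm_lt_one (by rwa [norm_neg])

lemma one_sub_ne_zero_of_norm_lt_one {Y : ℂ} (hY : ‖Y‖ < 1) : 1 - Y ≠ 0 :=
  Complex.slitPlane_ne_zero (one_sub_mem_slitPlane hY)

lemma norm_pow_lt_one {X : ℂ} (hX : ‖X‖ < 1) {n : ℕ} (hn : n ≠ 0) : ‖X ^ n‖ < 1 := by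
  rw [norm_pow]
  exact pow_lt_one₀ (norm_nonneg _) hX hn

lemma norm_log_one_sub_add_le {X Y : ℂ} (hX : ‖X‖ ≤ 2 / 3) (hY : ‖Y‖ ≤ ‖X‖) :
    ‖Complex.log (1 - Y) + Y‖ ≤ 3 / 2 * ‖X‖ ^ 2 := by
  have hlog := Complex.norm_log_one_add_sub_self_le (z := -Y) (by rw [norm_neg]; linarith)
  rw [norm_neg, sub_neg_eq_add, ← sub_eq_add_neg] at hlog
  have hinv : (1 - ‖Y‖)⁻¹ ≤ 3 := by
    rw [inv_le_comm₀ (by linarith) (by norm_num)]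
    linarith
  calc _ ≤ ‖Y‖ ^ 2 * (1 - ‖Y‖)⁻¹ / 2 := hlog
    _ ≤ ‖Y‖ ^ 2 * 3 / 2 := by gcongr
    _ ≤ ‖X‖ ^ 2 * 3 / 2 := by gcongr
    _ = _ := by ring

lemma hasSum_ite_dvd_succ_pow {g : ℕ} (hg : g ≠ 0) {X : ℂ} (hX : ‖X‖ < 1) :
    HasSum (fun e : ℕ => if g ∣ e + 1 then X ^ e else 0) (X ^ (g - 1) * (1 - X ^ g)⁻¹) := by
  have hinj : Function.Injective fun j : ℕ => g - 1 + g * j := fun a b hab =>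
    Nat.eq_of_mul_eq_mul_left (Nat.pos_of_ne_zero hg) (Nat.add_left_cancel hab)
  rw [← hinj.hasSum_iff]
  · refine ((hasSum_geometric_of_norm_lt_one (norm_pow_lt_one hX hg)).mul_left
      (X ^ (g - 1))).congr_fun fun j => ?_
    have hdvd : g ∣ g - 1 + g * j + 1 := ⟨j + 1, by rw [mul_add]; omega⟩
    simp only [Function.comp_apply, hdvd, if_true, pow_add, pow_mul]
  · intro e he
    refine if_neg ?_
    rintro ⟨_ | c, hc⟩
    · omega
    · exact he ⟨c, by rw [mul_add] at hc; dsimp only; omega⟩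

lemma hasSum_not_dvd_succ_mul_pow {g : ℕ} (hg : g ≠ 0) {X : ℂ} (hX : ‖X‖ < 1) :
    HasSum (fun e : ℕ => (if g ∣ e + 1 then 0 else 1) * X ^ e)
      ((1 - X ^ (g - 1)) / ((1 - X) * (1 - X ^ g))) := by
  have hX1 := one_sub_ne_zero_of_norm_lt_one hX
  have hXg := one_sub_ne_zero_of_norm_lt_one (norm_pow_lt_one hX hg)
  have hvalue : (1 - X ^ (g - 1)) / ((1 - X) * (1 - X ^ g)) =
      (1 - X)⁻¹ - X ^ (g - 1) * (1 - X ^ g)⁻¹ := by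
    field_simp
    rw [mul_sub, mul_one, pow_sub_one_mul hg]
    ring
  rw [hvalue]
  refine ((hasSum_geometric_of_norm_lt_one hX).sub (hasSum_ite_dvd_succ_pow hg hX)).congr_fun
    fun e => ?_
  split_ifs <;> simp

lemma norm_apply_mul_le {q : ℕ} (χ : DirichletCharacter ℂ q) (a : ZMod q) (X : ℂ) :
    ‖χ a * X‖ ≤ ‖X‖ := by
  rw [norm_mul]
  exact mul_le_of_le_one_left (norm_nonneg _) (χ.norm_le_one _)

section SigmaIndicator

/-- The indicator function of the integers `n` with `q ∤ σ_k(n)`. -/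
noncomputable def sigmaIndicator (q k n : ℕ) : ℝ := if q ∣ sigmak k n then 0 else 1

lemma sigmaIndicator_zero (q k : ℕ) : sigmaIndicator q k 0 = 0 := by
  simp [sigmaIndicator, sigmak]

lemma sigmaIndicator_mem_Icc (q k n : ℕ) : sigmaIndicator q k n ∈ Set.Icc (0 : ℝ) 1 := by
  rw [sigmaIndicator]
  split_ifs <;> simp

/-- The generating Dirichlet series of the integers `n` with `q ∤ σ_k(n)`. -/
noncomputable def sigmaSeries (q k : ℕ) : ℂ → ℂ := LSeries fun n => (sigmaIndicator q k n : ℂ)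

lemma sigmak_eq_sigma (k n : ℕ) : sigmak k n = ArithmeticFunction.sigma k n := by
  rw [sigmak, ArithmeticFunction.sigma_apply]

variable {q : ℕ} [Fact q.Prime]

lemma sigmaIndicator_one (k : ℕ) : sigmaIndicator q k 1 = 1 := by
  simp [sigmaIndicator, sigmak, (Fact.out : q.Prime).ne_one]

lemma sigmaIndicator_mul (k : ℕ) {m n : ℕ} (h : m.Coprime n) :
    sigmaIndicator q k (m * n) = sigmaIndicator q k m * sigmaIndicator q k n := by
  simp only [sigmaIndicator, sigmak_eq_sigma,
    ArithmeticFunction.isMultiplicative_sigma.map_mul_of_coprime h,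
    (Fact.out : q.Prime).dvd_mul]
  split_ifs <;> simp_all

lemma natCast_ne_zero_of_prime_ne {p : ℕ} (hp : p.Prime) (hpq : p ≠ q) : (p : ZMod q) ≠ 0 := by
  rw [Ne, ZMod.natCast_eq_zero_iff]
  exact fun h => hpq ((Nat.prime_dvd_prime_iff_eq Fact.out hp).mp h).symm

lemma gp_gcd_eq_orderOf {k p : ℕ} (hk : k ≠ 0) (hp : (p : ZMod q) ≠ 0) :
    gp q (Nat.gcd k (q - 1)) p = orderOf ((p : ZMod q) ^ k) := by
  have hdvd : orderOf (p : ZMod q) ∣ q - 1 :=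
    orderOf_dvd_of_pow_eq_one (ZMod.pow_card_sub_one_eq_one hp)
  rw [gp, orderOf_pow' _ hk, orderOf_pow' _ (Nat.gcd_ne_zero_left hk), Nat.gcd_comm k,
    ← Nat.gcd_assoc, Nat.gcd_eq_left hdvd]

lemma gp_pos {m p : ℕ} (hp : (p : ZMod q) ≠ 0) : 0 < gp q m p := by
  obtain ⟨u, hu⟩ := (isUnit_iff_ne_zero.mpr hp).pow m
  rw [gp, ← hu, orderOf_units]
  exact orderOf_pos u

/-- The period in `e` of the condition `q ∣ σ_k(p ^ e)`, expressed through `r = gcd(k, q - 1)`. -/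
noncomputable def period (q r p : ℕ) : ℕ := if gp q r p = 1 then q else gp q r p

lemma two_le_period {r p : ℕ} (hp : (p : ZMod q) ≠ 0) : 2 ≤ period q r p := by
  have hpos := gp_pos (m := r) hp
  rw [period]
  split_ifs
  · exact (Fact.out : q.Prime).two_le
  · omega

lemma geom_sum_eq_zero_iff (x : ZMod q) (n : ℕ) :
    ∑ i ∈ Finset.range n, x ^ i = 0 ↔ (if orderOf x = 1 then q else orderOf x) ∣ n := by
  split_ifs with h <;> rw [orderOf_eq_one_iff] at h
  · subst h
    simp [ZMod.natCast_eq_zero_iff]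
  · rw [orderOf_dvd_iff_pow_eq_one, ← sub_eq_zero (a := x ^ n), ← geom_sum_mul, mul_eq_zero,
      or_iff_left (sub_ne_zero.mpr h)]

lemma dvd_sigmak_prime_pow_iff {k p : ℕ} (hk : k ≠ 0) (hp : p.Prime) (hpq : p ≠ q) (e : ℕ) :
    q ∣ sigmak k (p ^ e) ↔ period q (Nat.gcd k (q - 1)) p ∣ e + 1 := by
  rw [period, gp_gcd_eq_orderOf hk (natCast_ne_zero_of_prime_ne hp hpq), ← geom_sum_eq_zero_iff,
    ← ZMod.natCast_eq_zero_iff, sigmak, Nat.sum_divisors_prime_pow hp]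
  push_cast
  simp only [← pow_mul, mul_comm k]

lemma not_dvd_sigmak_self_pow {k : ℕ} (hk : k ≠ 0) (e : ℕ) : ¬ q ∣ sigmak k (q ^ e) := by
  rw [sigmak, Nat.sum_divisors_prime_pow Fact.out, ← ZMod.natCast_eq_zero_iff,
    Finset.sum_range_succ']
  simp [hk]

end SigmaIndicator

section EulerFactor

variable (q r p : ℕ)

/-- The logarithm of the Euler factor at `p` of `∑ n ^ (-s)` over `q ∤ σ_k(n)`, where
`r = gcd(k, q - 1)`, as a function of `X = p ^ (-s)`. -/
noncomputable def logEulerFactor (X : ℂ) : ℂ :=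
  if p = q then -Complex.log (1 - X) else
    -Complex.log (1 - X) - Complex.log (1 - X ^ period q r p)
      + Complex.log (1 - X ^ (period q r p - 1))

variable [Fact q.Prime]

/-- The logarithm of the quotient of the Euler factor at `p` by the Euler factor of
`∏ L(s, χ) ^ charExponent r χ`, as a function of `X = p ^ (-s)`. -/
noncomputable def logCorrection (X : ℂ) : ℂ :=
  logEulerFactor q r p X +
    ∑ χ : DirichletCharacter ℂ q, (charExponent r χ : ℂ) * Complex.log (1 - χ p * X)

variable {q r p}

lemma exp_logEulerFactor {k : ℕ} (hk : k ≠ 0) (hp : p.Prime) {X : ℂ} (hX : ‖X‖ < 1) :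
    Complex.exp (logEulerFactor q (Nat.gcd k (q - 1)) p X) =
      ∑' e : ℕ, (sigmaIndicator q k (p ^ e) : ℂ) * X ^ e := by
  have hX1 := one_sub_ne_zero_of_norm_lt_one hX
  rw [logEulerFactor]
  split_ifs with hpq
  · subst hpq
    simp only [sigmaIndicator, not_dvd_sigmak_self_pow hk, if_false, Complex.ofReal_one, one_mul]
    rw [Complex.exp_neg, Complex.exp_log hX1, tsum_geometric_of_norm_lt_one hX]
  · have hg := two_le_period (r := Nat.gcd k (q - 1)) (natCast_ne_zero_of_prime_ne hp hpq)
    have hXn : ∀ n ≠ 0, 1 - X ^ n ≠ 0 := fun n hn =>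
      one_sub_ne_zero_of_norm_lt_one (norm_pow_lt_one hX hn)
    simp only [sigmaIndicator, dvd_sigmak_prime_pow_iff hk hp hpq, apply_ite ((↑) : ℝ → ℂ),
      Complex.ofReal_zero, Complex.ofReal_one]
    rw [(hasSum_not_dvd_succ_mul_pow (by omega) hX).tsum_eq, Complex.exp_add, Complex.exp_sub,
      Complex.exp_neg, Complex.exp_log hX1, Complex.exp_log (hXn _ (by omega)),
      Complex.exp_log (hXn _ (by omega)), div_eq_mul_inv, div_eq_mul_inv, mul_inv, mul_comm]

lemma sum_charExponent_mul_apply (hr : 2 * r ∣ q - 1) {a : ZMod q} (ha : a ≠ 0) :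
    ∑ χ : DirichletCharacter ℂ q, (charExponent r χ : ℂ) * χ a =
      1 - if orderOf (a ^ r) = 2 then 1 else 0 := by
  have hone : a ^ r = 1 → a ^ (2 * r) = 1 := fun h => by rw [mul_comm, pow_mul, h, one_pow]
  have horder : orderOf (a ^ r) = 2 ↔ a ^ (2 * r) = 1 ∧ a ^ r ≠ 1 := by
    rw [mul_comm 2 r, pow_mul]
    exact ⟨fun h => ⟨by rw [← h, pow_orderOf_eq_one], by rw [Ne, ← orderOf_eq_one_iff]; omega⟩,
      fun h => orderOf_eq_prime h.1 h.2⟩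
  rw [sum_charExponent_mul_of_average hr (A := if a ^ (2 * r) = 1 then 1 else 0)
    (B := if a ^ r = 1 then 1 else 0) (by simp [sum_trivialOnRoots hr])
    (by simp [sum_trivialOnRoots ((Dvd.intro_left 2 rfl).trans hr)]),
    MulChar.one_apply (isUnit_iff_ne_zero.mpr ha)]
  split_ifs <;> simp_all

lemma differentiableAt_log_one_sub_mul_pow {X : ℂ} (hX : ‖X‖ < 1) {a : ℂ} (ha : ‖a‖ ≤ 1) {n : ℕ}
    (hn : n ≠ 0) : DifferentiableAt ℂ (fun X : ℂ => Complex.log (1 - a * X ^ n)) X := by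
  refine DifferentiableAt.clog (by fun_prop) (one_sub_mem_slitPlane ?_)
  rw [norm_mul]
  exact mul_lt_one_of_nonneg_of_lt_one_right ha (norm_nonneg _) (norm_pow_lt_one hX hn)

lemma differentiableAt_logCorrection {X : ℂ} (hX : ‖X‖ < 1) (hp : p.Prime) :
    DifferentiableAt ℂ (logCorrection q r p) X := by
  have hpow : ∀ n ≠ 0, DifferentiableAt ℂ (fun X : ℂ => Complex.log (1 - X ^ n)) X := fun n hn => by
    simpa only [one_mul] using differentiableAt_log_one_sub_mul_pow hX (a := 1) (by simp) hn
  have hlog : DifferentiableAt ℂ (fun X : ℂ => Complex.log (1 - X)) X := by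
    simpa only [pow_one] using hpow 1 one_ne_zero
  have heuler : DifferentiableAt ℂ (logEulerFactor q r p) X := by
    unfold logEulerFactor
    split_ifs with hpq
    · exact hlog.neg
    · have hg := two_le_period (r := r) (natCast_ne_zero_of_prime_ne hp hpq)
      exact (hlog.neg.sub (hpow _ (by omega))).add (hpow _ (by omega))
  refine heuler.add (DifferentiableAt.fun_sum fun χ _ => DifferentiableAt.const_mul ?_ _)
  simpa only [pow_one] using
    differentiableAt_log_one_sub_mul_pow hX (χ.norm_le_one (p : ZMod q)) one_ne_zero

lemma norm_sum_charExponent_mul_log_le {X : ℂ} (hX : ‖X‖ ≤ 2 / 3) (a : ZMod q) :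
    ‖∑ χ : DirichletCharacter ℂ q, (charExponent r χ : ℂ) *
        (Complex.log (1 - χ a * X) + χ a * X)‖ ≤
      (∑ χ : DirichletCharacter ℂ q, |charExponent r χ|) * (3 / 2 * ‖X‖ ^ 2) := by
  rw [Finset.sum_mul]
  refine norm_sum_le_of_le _ fun χ _ => ?_
  rw [norm_mul, Complex.norm_real, Real.norm_eq_abs]
  gcongr
  exact norm_log_one_sub_add_le hX (norm_apply_mul_le χ a X)

lemma norm_ite_sub_pow_period_le (hr : 2 * r ∣ q - 1) (hp : (p : ZMod q) ≠ 0) {X : ℂ}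
    (hX : ‖X‖ ≤ 1) :
    ‖(if gp q r p = 2 then X else 0) - X ^ (period q r p - 1)‖ ≤ ‖X‖ ^ 2 := by
  split_ifs with hgp
  · simp [period, hgp]
  · have hperiod : 3 ≤ period q r p := by
      have hq1 := (Fact.out : q.Prime).one_lt
      have heven : 2 ∣ q - 1 := (dvd_mul_right 2 r).trans hr
      have hpos := gp_pos (m := r) hp
      rw [period]
      split_ifs <;> omega
    rw [zero_sub, norm_neg, norm_pow]
    exact pow_le_pow_of_le_one (norm_nonneg _) hX (by omega)

/- The terms of first order in `X` cancel: this is what determines `charExponent`. -/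
lemma norm_logCorrection_le_of_ne (hr : 2 * r ∣ q - 1) (hp : p.Prime) (hpq : p ≠ q) {X : ℂ}
    (hX : ‖X‖ ≤ 2 / 3) : ‖logCorrection q r p X‖ ≤
      (7 + 3 / 2 * ∑ χ : DirichletCharacter ℂ q, |charExponent r χ|) * ‖X‖ ^ 2 := by
  have hp0 := natCast_ne_zero_of_prime_ne hp hpq
  have hX1 : ‖X‖ ≤ 1 := by linarith
  have hg := two_le_period (r := r) hp0
  have hpow : ‖X ^ period q r p‖ ≤ ‖X‖ ^ 2 := by
    rw [norm_pow]
    exact pow_le_pow_of_le_one (norm_nonneg _) hX1 hg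
  have hpow1 : ∀ n ≠ 0, ‖X ^ n‖ ≤ ‖X‖ := fun n hn => by
    rw [norm_pow]
    exact pow_le_of_le_one (norm_nonneg _) hX1 hn
  have hexpand : logCorrection q r p X =
      (if gp q r p = 2 then X else 0) - X ^ (period q r p - 1) + X ^ period q r p
      - (Complex.log (1 - X) + X)
      - (Complex.log (1 - X ^ period q r p) + X ^ period q r p)
      + (Complex.log (1 - X ^ (period q r p - 1)) + X ^ (period q r p - 1))
      + ∑ χ : DirichletCharacter ℂ q, (charExponent r χ : ℂ) *
          (Complex.log (1 - χ p * X) + χ p * X) := by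
    simp only [logCorrection, logEulerFactor, if_neg hpq, mul_add, Finset.sum_add_distrib,
      ← mul_assoc, ← Finset.sum_mul]
    rw [sum_charExponent_mul_apply hr hp0, gp]
    split_ifs <;> ring
  rw [hexpand]
  refine (norm_add_le_of_le (norm_add_le_of_le (norm_sub_le_of_le (norm_sub_le_of_le
    (norm_add_le_of_le (norm_ite_sub_pow_period_le hr hp0 hX1) hpow)
    (norm_log_one_sub_add_le hX le_rfl)) (norm_log_one_sub_add_le hX (hpow1 _ (by omega))))
    (norm_log_one_sub_add_le hX (hpow1 _ (by omega))))
    (norm_sum_charExponent_mul_log_le (r := r) hX (p : ZMod q))).trans ?_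
  nlinarith [sq_nonneg ‖X‖]

lemma exists_norm_logCorrection_le (hr : 2 * r ∣ q - 1) : ∃ C, 0 < C ∧ ∀ (p : ℕ) (X : ℂ), p.Prime →
    ‖X‖ ≤ 2 / 3 → ‖logCorrection q r p X‖ ≤ C ∧
      (p ≠ q → ‖logCorrection q r p X‖ ≤ C * ‖X‖ ^ 2) := by
  set D := ∑ χ : DirichletCharacter ℂ q, |charExponent r χ|
  have hD0 : 0 ≤ D := Finset.sum_nonneg fun _ _ => abs_nonneg _
  refine ⟨7 + 3 / 2 * D, by positivity, fun p X hp hX =>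
    ⟨?_, fun hpq => norm_logCorrection_le_of_ne hr hp hpq hX⟩⟩
  rcases eq_or_ne p q with rfl | hpq
  · have hzero : ∀ χ : DirichletCharacter ℂ p, χ 0 = 0 := fun χ => χ.map_zero
    have hself : logCorrection p r p X = X - (Complex.log (1 - X) + X) := by
      simp [logCorrection, logEulerFactor, hzero]
    rw [hself]
    refine (norm_sub_le_of_le le_rfl (norm_log_one_sub_add_le hX le_rfl)).trans ?_
    nlinarith [norm_nonneg X]
  · exact (norm_logCorrection_le_of_ne hr hp hpq hX).trans
      (mul_le_of_le_one_right (by positivity) (pow_le_one₀ (norm_nonneg _) (by linarith)))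

end EulerFactor

lemma hasDerivAt_log_one_sub_mul_cpow_pow {p n : ℕ} (hp : 1 < p) (hn : n ≠ 0) {a : ℂ}
    (ha : ‖a‖ ≤ 1) : HasDerivAt (fun s : ℂ => Complex.log (1 - a * ((p : ℂ) ^ (-s)) ^ n))
      (n * Real.log p * (a / ((p : ℂ) ^ n - a))) 1 := by
  have hp0 : (p : ℂ) ≠ 0 := Nat.cast_ne_zero.mpr (by omega)
  have hcpow : (p : ℂ) ^ (-1 : ℂ) = (p : ℂ)⁻¹ := Complex.cpow_neg_one _
  have hinv : ‖(p : ℂ)⁻¹‖ < 1 := by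
    rw [norm_inv, Complex.norm_natCast]
    exact inv_lt_one_of_one_lt₀ (Nat.one_lt_cast.mpr hp)
  have hlt : ‖a * (p : ℂ)⁻¹ ^ n‖ < 1 := by
    rw [norm_mul]
    exact mul_lt_one_of_nonneg_of_lt_one_right ha (norm_nonneg _) (norm_pow_lt_one hinv hn)
  have hslit : 1 - a * ((p : ℂ) ^ (-1 : ℂ)) ^ n ∈ Complex.slitPlane := by
    rw [hcpow]
    exact one_sub_mem_slitPlane hlt
  have hderiv : HasDerivAt (fun s : ℂ => (p : ℂ) ^ (-s))
      ((p : ℂ) ^ (-1 : ℂ) * Complex.log p * (-1)) 1 :=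
    (hasDerivAt_neg (1 : ℂ)).const_cpow (Or.inl hp0)
  convert (((hderiv.fun_pow n).const_mul a).const_sub 1).clog hslit using 1
  have hsub : (p : ℂ) ^ n - a = (p : ℂ) ^ n * (1 - a * (p : ℂ)⁻¹ ^ n) := by
    rw [mul_sub, mul_one, mul_left_comm, inv_pow, mul_inv_cancel₀ (pow_ne_zero n hp0), mul_one]
  rw [hcpow, hsub, Complex.ofReal_log (Nat.cast_nonneg p), Complex.ofReal_natCast,
    div_mul_eq_div_div, div_eq_mul_inv a, ← inv_pow, ← pow_sub_one_mul hn (p : ℂ)⁻¹]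
  ring

section DerivLogCorrection

variable {q r p : ℕ}

lemma div_sub_eq_sum_of_pow_eq_one {K : Type*} [Field K] {ω P : K} {g : ℕ} (hω : ω ^ g = 1)
    (hPω : P - ω ≠ 0) (hPg : P ^ g - 1 ≠ 0) :
    ω / (P - ω) = (∑ j ∈ Finset.range g, ω ^ (j + 1) * P ^ (g - 1 - j)) / (P ^ g - 1) := by
  have hgeom := (Commute.all ω P).geom_sum₂_mul g
  rw [hω] at hgeom
  simp only [pow_succ', mul_assoc, ← Finset.mul_sum]
  rw [div_eq_div_iff hPω hPg]
  linear_combination ω * hgeom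

lemma gp_two_mul (q r p : ℕ) :
    gp q (2 * r) p = if 2 ∣ gp q r p then gp q r p / 2 else gp q r p := by
  rw [gp, mul_comm, pow_mul, orderOf_pow' _ two_ne_zero, gp]
  split_ifs with h
  · rw [Nat.gcd_eq_right h]
  · rw [((Nat.prime_two.coprime_iff_not_dvd).mpr h).symm.gcd_eq_one, Nat.div_one]

lemma inv_sub_inv_self {y : ℝ} (hy : 1 < y) :
    (y - y⁻¹)⁻¹ = (y - 1)⁻¹ - (y ^ 2 - 1)⁻¹ := by
  have hy1 : y - 1 ≠ 0 := (sub_pos.mpr hy).ne'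
  have hy2 : y + 1 ≠ 0 := by positivity
  have hsq : y ^ 2 - 1 = (y - 1) * (y + 1) := by ring
  have hinv : y - y⁻¹ = (y - 1) * (y + 1) / y := by
    field_simp
    ring
  rw [hinv, hsq]
  field_simp
  ring

variable [Fact q.Prime]

open Classical in
lemma sum_trivialOnRoots_div {m : ℕ} (hm : m ∣ q - 1) (hp : (p : ZMod q) ≠ 0) {P : ℂ}
    (hP : 1 < ‖P‖) :
    ∑ χ : DirichletCharacter ℂ q with TrivialOnRoots m χ, χ p / (P - χ p) =
      ((q - 1) / m : ℕ) * (P ^ gp q m p - 1)⁻¹ := by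
  have hg0 : 0 < gp q m p := gp_pos hp
  have hPg : P ^ gp q m p - 1 ≠ 0 := fun h => by
    have hlt : 1 < ‖P ^ gp q m p‖ := by
      rw [norm_pow]
      exact one_lt_pow₀ hP hg0.ne'
    simp [sub_eq_zero.mp h] at hlt
  have hgeom : ∀ χ : DirichletCharacter ℂ q, TrivialOnRoots m χ → χ p / (P - χ p) =
      (∑ j ∈ Finset.range (gp q m p), χ (p ^ (j + 1)) * P ^ (gp q m p - 1 - j)) /
        (P ^ gp q m p - 1) := fun χ hχ => by
    simp only [map_pow]
    refine div_sub_eq_sum_of_pow_eq_one ?_ (fun h => ?_) hPg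
    · rw [← map_pow]
      exact hχ _ (by rw [← pow_mul, mul_comm, pow_mul, gp, pow_orderOf_eq_one])
    · rw [sub_eq_zero.mp h] at hP
      exact hP.not_ge (χ.norm_le_one _)
  rw [Finset.sum_congr rfl fun χ hχ => hgeom χ (Finset.mem_filter.mp hχ).2, ← Finset.sum_div,
    Finset.sum_comm, div_eq_mul_inv]
  congr 1
  simp only [← Finset.sum_mul, sum_trivialOnRoots hm]
  have hpow : ∀ j : ℕ, ((p : ZMod q) ^ (j + 1)) ^ m = 1 ↔ gp q m p ∣ j + 1 := fun j => by
    rw [gp, orderOf_dvd_iff_pow_eq_one, ← pow_mul, ← pow_mul, mul_comm]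
  rw [Finset.sum_eq_single_of_mem (gp q m p - 1) (Finset.mem_range.mpr (by omega))]
  · rw [if_pos ((hpow _).mpr (by rw [Nat.sub_add_cancel hg0])), Nat.sub_self, pow_zero, mul_one]
  · intro j hj hne
    rw [if_neg, zero_mul]
    rw [hpow]
    intro hdvd
    have hle := Nat.le_of_dvd j.succ_pos hdvd
    have hlt := Finset.mem_range.mp hj
    omega

lemma sum_charExponent_mul_div (hr : 2 * r ∣ q - 1) (hp : (p : ZMod q) ≠ 0) {P : ℂ}
    (hP : 1 < ‖P‖) :
    ∑ χ : DirichletCharacter ℂ q, (charExponent r χ : ℂ) * (χ p / (P - χ p)) =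
      (P - 1)⁻¹ - (P ^ gp q (2 * r) p - 1)⁻¹ + (P ^ gp q r p - 1)⁻¹ := by
  rw [sum_charExponent_mul_of_average hr (sum_trivialOnRoots_div hr hp hP)
    (sum_trivialOnRoots_div ((Dvd.intro_left 2 rfl).trans hr) hp hP),
    MulChar.one_apply (isUnit_iff_ne_zero.mpr hp), one_div]

lemma Sterm_eq (r : ℕ) (hp : p.Prime) (hpq : p ≠ q) :
    Sterm q r p = Real.log p * (period q r p * ((p : ℝ) ^ period q r p - 1)⁻¹
      - (period q r p - 1) * ((p : ℝ) ^ (period q r p - 1) - 1)⁻¹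
      + ((p : ℝ) ^ gp q (2 * r) p - 1)⁻¹ - ((p : ℝ) ^ gp q r p - 1)⁻¹) := by
  have hp1 : (1 : ℝ) < p := Nat.one_lt_cast.mpr hp.one_lt
  have hpos := gp_pos (q := q) (m := r) (natCast_ne_zero_of_prime_ne hp hpq)
  rw [Sterm, if_neg hpq, gp_two_mul, period]
  obtain h | h | h : gp q r p = 1 ∨ gp q r p = 2 ∨ 3 ≤ gp q r p := by omega
  · norm_num [h]
    ring
  · norm_num [h]
    ring
  have hne1 : gp q r p ≠ 1 := by omega
  have hne2 : gp q r p ≠ 2 := by omega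
  by_cases heven : 2 ∣ gp q r p
  · have hfour : 4 ≤ gp q r p := by omega
    have hhalf : 1 < (p : ℝ) ^ (gp q r p / 2) := one_lt_pow₀ hp1 (by omega)
    have hsq : (p : ℝ) ^ gp q r p = ((p : ℝ) ^ (gp q r p / 2)) ^ 2 := by
      rw [← pow_mul, Nat.div_mul_cancel heven]
    simp only [hne1, hne2, h, hfour, heven, and_self, if_true, if_false, div_eq_mul_inv,
      inv_sub_inv_self hhalf, ← hsq]
    ring
  · simp only [hne1, hne2, h, heven, and_false, if_true, if_false]
    ring

/-- The derivative at `s = 1` of `logCorrection q r p (p ^ (-s))`. -/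
noncomputable def derivLogCorrection (q r p : ℕ) : ℝ :=
  if p = q then -(Real.log q / (q - 1)) else -Sterm q r p

lemma hasDerivAt_log_one_sub_cpow_pow {n : ℕ} (hp : 1 < p) (hn : n ≠ 0) :
    HasDerivAt (fun s : ℂ => Complex.log (1 - ((p : ℂ) ^ (-s)) ^ n))
      (n * Real.log p * ((p : ℂ) ^ n - 1)⁻¹) 1 := by
  simpa using hasDerivAt_log_one_sub_mul_cpow_pow hp hn (a := 1) (by simp)

lemma hasDerivAt_sum_charExponent_mul_log (hp : 1 < p) :
    HasDerivAt (fun s : ℂ => ∑ χ : DirichletCharacter ℂ q, (charExponent r χ : ℂ) *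
        Complex.log (1 - χ p * (p : ℂ) ^ (-s)))
      (Real.log p * ∑ χ : DirichletCharacter ℂ q,
        (charExponent r χ : ℂ) * (χ p / ((p : ℂ) - χ p))) 1 := by
  simp only [Finset.mul_sum, mul_left_comm]
  refine HasDerivAt.fun_sum fun χ _ => HasDerivAt.const_mul _ ?_
  simpa using hasDerivAt_log_one_sub_mul_cpow_pow hp one_ne_zero (χ.norm_le_one (p : ZMod q))

lemma hasDerivAt_logCorrection (hr : 2 * r ∣ q - 1) (hp : p.Prime) :
    HasDerivAt (fun s : ℂ => logCorrection q r p ((p : ℂ) ^ (-s)))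
      (derivLogCorrection q r p : ℂ) 1 := by
  have hlog : HasDerivAt (fun s : ℂ => Complex.log (1 - (p : ℂ) ^ (-s)))
      (Real.log p * ((p : ℂ) - 1)⁻¹) 1 := by
    simpa using hasDerivAt_log_one_sub_cpow_pow hp.one_lt one_ne_zero
  have hsum := hasDerivAt_sum_charExponent_mul_log (q := q) (r := r) hp.one_lt
  unfold logCorrection logEulerFactor derivLogCorrection
  split_ifs with hpq
  · subst hpq
    refine (hlog.fun_neg.fun_add hsum).congr_deriv ?_
    rw [Finset.sum_eq_zero fun χ _ => ?_]
    · push_cast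
      ring
    · rw [ZMod.natCast_self, MulChar.map_zero, zero_div, mul_zero]
  · have hp0 := natCast_ne_zero_of_prime_ne hp hpq
    have hperiod := two_le_period (r := r) hp0
    refine (((hlog.fun_neg.fun_sub (hasDerivAt_log_one_sub_cpow_pow hp.one_lt (by omega))).fun_add
      (hasDerivAt_log_one_sub_cpow_pow hp.one_lt (by omega))).fun_add hsum).congr_deriv ?_
    rw [sum_charExponent_mul_div hr hp0 (by simpa using hp.one_lt), Sterm_eq r hp hpq,
      Nat.cast_sub (by omega : 1 ≤ period q r p)]
    push_cast
    ring

end DerivLogCorrection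

lemma Sterm_eq_neg_derivLogCorrection_sub (q r p : ℕ) : Sterm q r p =
    -derivLogCorrection q r p - if p = q then Real.log q / (q - 1) else 0 := by
  by_cases hpq : p = q <;> simp [derivLogCorrection, Sterm, hpq]

section Correction

variable {q r : ℕ} [Fact q.Prime]

variable (q r) in
/-- The logarithm of the quotient of `sigmaSeries` by `∏ L(s, χ) ^ charExponent r χ`. It is
holomorphic beyond the line `Re s = 1`, so all singularities on that line come from the product. -/
noncomputable def correction (s : ℂ) : ℂ :=
  ∑' p : Nat.Primes, logCorrection q r p ((p : ℂ) ^ (-s))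

lemma norm_prime_cpow_neg (p : Nat.Primes) (s : ℂ) : ‖(p : ℂ) ^ (-s)‖ = (p : ℝ) ^ (-s.re) := by
  rw [Complex.norm_natCast_cpow_of_pos p.2.pos, Complex.neg_re]

lemma norm_prime_cpow_neg_le (p : Nat.Primes) {s : ℂ} (hs : 3 / 4 ≤ s.re) :
    ‖(p : ℂ) ^ (-s)‖ ≤ 2 / 3 := by
  have hp : (2 : ℝ) ≤ p := Nat.ofNat_le_cast.mpr p.2.two_le
  have htwo : (2 : ℝ) ^ (-(3 / 4) : ℝ) ≤ 2 / 3 := by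
    rw [← pow_le_pow_iff_left₀ (by positivity) (by norm_num) (n := 4) (by norm_num),
      ← Real.rpow_mul_natCast (by norm_num)]
    norm_num
  calc ‖(p : ℂ) ^ (-s)‖ = (p : ℝ) ^ (-s.re) := norm_prime_cpow_neg p s
    _ ≤ (p : ℝ) ^ (-(3 / 4) : ℝ) :=
        Real.rpow_le_rpow_of_exponent_le (by linarith) (by linarith)
    _ ≤ 2 ^ (-(3 / 4) : ℝ) := Real.rpow_le_rpow_of_nonpos (by norm_num) hp (by norm_num)
    _ ≤ 2 / 3 := htwo

lemma exists_summable_logCorrection_bound (hr : 2 * r ∣ q - 1) : ∃ u : Nat.Primes → ℝ, Summable u ∧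
    ∀ (p : Nat.Primes) (s : ℂ), 3 / 4 ≤ s.re → ‖logCorrection q r p ((p : ℂ) ^ (-s))‖ ≤ u p := by
  obtain ⟨C, hC0, hC⟩ := exists_norm_logCorrection_le hr
  have hq : (1 : ℝ) ≤ q := Nat.one_le_cast.mpr (Fact.out : q.Prime).one_le
  have hqpow : 1 ≤ (q : ℝ) ^ (3 / 2 : ℝ) := Real.one_le_rpow hq (by norm_num)
  refine ⟨fun p => C * (q : ℝ) ^ (3 / 2 : ℝ) * (p : ℝ) ^ (-(3 / 2) : ℝ),
    (Nat.Primes.summable_rpow.mpr (by norm_num)).mul_left _, fun p s hs => ?_⟩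
  have hp : (1 : ℝ) ≤ p := Nat.one_le_cast.mpr p.2.one_le
  obtain ⟨hbound, hbound_of_ne⟩ := hC p _ p.2 (norm_prime_cpow_neg_le p hs)
  by_cases hpq : (p : ℕ) = q
  · refine hbound.trans_eq ?_
    dsimp only
    rw [hpq, mul_assoc, ← Real.rpow_add (by linarith)]
    norm_num
  · have hsq : ‖(p : ℂ) ^ (-s)‖ ^ 2 ≤ (p : ℝ) ^ (-(3 / 2) : ℝ) := by
      rw [norm_prime_cpow_neg, ← Real.rpow_mul_natCast (by linarith)]
      exact Real.rpow_le_rpow_of_exponent_le hp (by push_cast; linarith)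
    calc _ ≤ C * ‖(p : ℂ) ^ (-s)‖ ^ 2 := hbound_of_ne hpq
      _ ≤ C * (p : ℝ) ^ (-(3 / 2) : ℝ) := by gcongr
      _ ≤ C * (q : ℝ) ^ (3 / 2 : ℝ) * (p : ℝ) ^ (-(3 / 2) : ℝ) := by
          gcongr
          exact le_mul_of_one_le_right hC0.le hqpow

lemma exists_norm_correction_le (hr : 2 * r ∣ q - 1) :
    ∃ C, ∀ s : ℂ, 3 / 4 ≤ s.re → ‖correction q r s‖ ≤ C := by
  obtain ⟨u, hu, hbound⟩ := exists_summable_logCorrection_bound hr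
  exact ⟨∑' p, u p, fun s hs => tsum_of_norm_bounded hu.hasSum fun p => hbound p s hs⟩

lemma differentiableOn_logCorrection_cpow (p : Nat.Primes) :
    DifferentiableOn ℂ (fun s : ℂ => logCorrection q r p ((p : ℂ) ^ (-s)))
      {s | 3 / 4 < s.re} := by
  intro s hs
  have hlog : DifferentiableAt ℂ (logCorrection q r p) ((p : ℂ) ^ (-s)) :=
    differentiableAt_logCorrection
      ((norm_prime_cpow_neg_le p hs.le).trans_lt (by norm_num)) p.2
  have hcpow : DifferentiableAt ℂ (fun s : ℂ => (p : ℂ) ^ (-s)) s :=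
    differentiableAt_id.neg.const_cpow (Or.inl (Nat.cast_ne_zero.mpr p.2.ne_zero))
  exact (hlog.comp s hcpow).differentiableWithinAt

lemma differentiableOn_correction (hr : 2 * r ∣ q - 1) :
    DifferentiableOn ℂ (correction q r) {s | 3 / 4 < s.re} := by
  obtain ⟨u, hu, hbound⟩ := exists_summable_logCorrection_bound hr
  exact Complex.differentiableOn_tsum_of_summable_norm hu differentiableOn_logCorrection_cpow
    (Complex.isOpen_re_gt _) fun p s (hs : 3 / 4 < s.re) => hbound p s hs.le

lemma differentiableAt_correction (hr : 2 * r ∣ q - 1) {s : ℂ} (hs : 3 / 4 < s.re) :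
    DifferentiableAt ℂ (correction q r) s :=
  (differentiableOn_correction hr).differentiableAt ((Complex.isOpen_re_gt _).mem_nhds hs)

lemma hasSum_derivLogCorrection (hr : 2 * r ∣ q - 1) :
    HasSum (fun p : Nat.Primes => (derivLogCorrection q r p : ℂ)) (deriv (correction q r) 1) := by
  obtain ⟨u, hu, hbound⟩ := exists_summable_logCorrection_bound hr
  have hsum := Complex.hasSum_deriv_of_summable_norm hu
    (differentiableOn_logCorrection_cpow (q := q) (r := r))
    (Complex.isOpen_re_gt _) (fun p s (hs : 3 / 4 < s.re) => hbound p s hs.le)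
    (show (1 : ℂ) ∈ {s : ℂ | 3 / 4 < s.re} by norm_num)
  exact hsum.congr_fun fun p => (hasDerivAt_logCorrection hr p.2).deriv.symm

lemma deriv_correction_one (hr : 2 * r ∣ q - 1) :
    deriv (correction q r) 1 = ((-(Real.log q / (q - 1)) - Smq q r : ℝ) : ℂ) := by
  have hsum := hasSum_derivLogCorrection hr
  have hreal := (Complex.summable_ofReal.mp hsum.summable).hasSum
  have hq : HasSum (fun p : Nat.Primes => if (p : ℕ) = q then Real.log q / (q - 1) else 0)
      (Real.log q / (q - 1)) := by
    simpa using hasSum_single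
      (f := fun p : Nat.Primes => if (p : ℕ) = q then Real.log q / (q - 1) else 0)
      ⟨q, Fact.out⟩ fun p hp => if_neg (mt Subtype.ext hp)
  have hSmq : Smq q r =
      -∑' p : Nat.Primes, derivLogCorrection q r p - Real.log q / (q - 1) :=
    ((hreal.neg.sub hq).congr_fun fun p =>
      Sterm_eq_neg_derivLogCorrection_sub q r p).tsum_eq
  rw [hsum.unique (Complex.hasSum_ofReal.mpr hreal), hSmq]
  congr 1
  ring

lemma slowUpTo_correction (hr : 2 * r ∣ q - 1) (n : ℕ) : SlowUpTo n (correction q r) := by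
  obtain ⟨C, hC⟩ := exists_norm_correction_le hr
  exact SlowUpTo.of_norm_le (by norm_num) (differentiableOn_correction hr)
    (fun s hs => hC s hs.le) n

end Correction

/-! ### Factorization at `s = 1` -/

section LogL

variable {q : ℕ} (χ : DirichletCharacter ℂ q)

/-- The logarithm of `L(s, χ)` given by the Euler product. -/
noncomputable def logL (s : ℂ) : ℂ :=
  ∑' p : Nat.Primes, -Complex.log (1 - χ p * (p : ℂ) ^ (-s))

lemma differentiableAt_logL {s : ℂ} (hs : 1 < s.re) : DifferentiableAt ℂ (logL χ) s := by
  set f : ℕ → ℂ := fun n => χ n * ArithmeticFunction.vonMangoldt n / Real.log n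
  have hf : ∀ n ≠ 0, ‖f n‖ ≤ 1 := fun n _ => by
    have hlog : 0 ≤ Real.log n := Real.log_natCast_nonneg n
    have hΛ : |ArithmeticFunction.vonMangoldt n| / |Real.log n| ≤ 1 := by
      rw [abs_of_nonneg ArithmeticFunction.vonMangoldt_nonneg, abs_of_nonneg hlog]
      exact div_le_one_of_le₀ ArithmeticFunction.vonMangoldt_le_log hlog
    rw [norm_div, norm_mul, Complex.norm_real, Complex.norm_real, mul_div_assoc]
    exact mul_le_one₀ (χ.norm_le_one _) (by positivity) hΛ
  have hconv : LSeries.abscissaOfAbsConv f < s.re :=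
    (LSeries.abscissaOfAbsConv_le_of_le_const ⟨1, hf⟩).trans_lt (by exact_mod_cast hs)
  refine (LSeries_hasDerivAt hconv).differentiableAt.congr_of_eventuallyEq ?_
  filter_upwards [(Complex.isOpen_re_gt 1).mem_nhds hs] with w hw
    using DirichletCharacter.eulerProduct_log_eq_LSeries χ hw

variable [NeZero q]

lemma exp_logL {s : ℂ} (hs : 1 < s.re) : Complex.exp (logL χ s) = χ.LFunction s := by
  rw [DirichletCharacter.LFunction_eq_LSeries χ hs]
  exact DirichletCharacter.LSeries_eulerProduct_exp_log χ hs

lemma deriv_logL {s : ℂ} (hs : 1 < s.re) :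
    deriv (logL χ) s = deriv χ.LFunction s / χ.LFunction s := by
  have hexp : (fun w => Complex.exp (logL χ w)) =ᶠ[𝓝 s] χ.LFunction :=
    Filter.eventuallyEq_of_mem ((Complex.isOpen_re_gt 1).mem_nhds hs) fun w hw => exp_logL χ hw
  rw [← hexp.deriv_eq, ((differentiableAt_logL χ hs).hasDerivAt.cexp).deriv, exp_logL χ hs,
    mul_div_cancel_left₀ _ (LFunction_ne_zero_of_one_lt_re χ hs)]

lemma slowGrowth_exp_mul_logL (c : ℝ) : SlowGrowth fun s => Complex.exp (c * logL χ s) := by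
  have hnorm : ∀ s : ℂ, 1 < s.re → ‖Complex.exp (c * logL χ s)‖ = ‖χ.LFunction s‖ ^ c :=
    fun s hs => by
      rw [← exp_logL χ hs, Complex.norm_exp, Complex.norm_exp, ← Real.exp_mul,
        Complex.re_ofReal_mul, mul_comm]
  rcases le_total 0 c with hc | hc
  · have hL : SlowGrowth χ.LFunction := by simpa using (slowUpTo_LFunction χ 0).slow 0 le_rfl
    exact hL.of_norm_le_rpow hc fun s hs => (hnorm s hs).le
  · refine (slowGrowth_inv_LFunction χ).of_norm_le_rpow (neg_nonneg.mpr hc) fun s hs => ?_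
    rw [hnorm s hs, norm_inv, Real.inv_rpow (norm_nonneg _), Real.rpow_neg (norm_nonneg _), inv_inv]

end LogL

lemma LSeries_hasProd_of_multiplicative {a : ℕ → ℂ} (hone : a 1 = 1)
    (hmul : ∀ {m n : ℕ}, m.Coprime n → a (m * n) = a m * a n) {s : ℂ}
    (hs : LSeriesSummable a s) :
    HasProd (fun p : Nat.Primes => ∑' e : ℕ, a ((p : ℕ) ^ e) * ((p : ℂ) ^ (-s)) ^ e)
      (LSeries a s) := by
  have hterm_mul : ∀ {m n : ℕ}, m.Coprime n →
      LSeries.term a s (m * n) = LSeries.term a s m * LSeries.term a s n := fun {m n} hmn => by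
    rcases eq_or_ne m 0 with rfl | hm
    · simp
    rcases eq_or_ne n 0 with rfl | hn
    · simp
    rw [LSeries.term_of_ne_zero hm, LSeries.term_of_ne_zero hn,
      LSeries.term_of_ne_zero (mul_ne_zero hm hn), hmul hmn, Nat.cast_mul,
      Complex.natCast_mul_natCast_cpow, mul_div_mul_comm]
  have hterm_pow : ∀ (p : Nat.Primes) (e : ℕ),
      a ((p : ℕ) ^ e) * ((p : ℂ) ^ (-s)) ^ e = LSeries.term a s ((p : ℕ) ^ e) := fun p e => by
    rw [LSeries.term_of_ne_zero (pow_ne_zero _ p.2.ne_zero), div_eq_mul_inv, ← Complex.cpow_neg,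
      Nat.cast_pow, ← Complex.natCast_cpow_natCast_mul, mul_comm (e : ℂ), Complex.cpow_mul_nat]
  simp only [hterm_pow]
  exact EulerProduct.eulerProduct_hasProd (f := LSeries.term a s)
    (by rw [LSeries.term_of_ne_zero one_ne_zero, hone, Nat.cast_one, Complex.one_cpow, div_one])
    hterm_mul hs.norm (LSeries.term_zero _ _)

section LogSeries

variable {q : ℕ} [Fact q.Prime] {r : ℕ}

variable (q r) in
/-- The logarithm of `sigmaSeries q k`, where `r = gcd(k, q - 1)`. -/
noncomputable def logSeries (s : ℂ) : ℂ :=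
  ∑ χ : DirichletCharacter ℂ q, (charExponent r χ : ℂ) * logL χ s + correction q r s

lemma differentiableAt_logSeries (hr : 2 * r ∣ q - 1) {s : ℂ} (hs : 1 < s.re) :
    DifferentiableAt ℂ (logSeries q r) s :=
  (DifferentiableAt.fun_sum fun χ _ => (differentiableAt_logL χ hs).const_mul _).fun_add
    (differentiableAt_correction hr (by linarith))

lemma deriv_logSeries (hr : 2 * r ∣ q - 1) {s : ℂ} (hs : 1 < s.re) :
    deriv (logSeries q r) s = ∑ χ : DirichletCharacter ℂ q,
      (charExponent r χ : ℂ) * (deriv χ.LFunction s / χ.LFunction s) +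
        deriv (correction q r) s := by
  have hderiv := (HasDerivAt.fun_sum fun (χ : DirichletCharacter ℂ q) (_ : χ ∈ Finset.univ) =>
    (differentiableAt_logL χ hs).hasDerivAt.const_mul (charExponent r χ : ℂ)).fun_add
      (differentiableAt_correction hr (by linarith)).hasDerivAt
  simp only [deriv_logL _ hs] at hderiv
  exact hderiv.deriv

lemma hasSum_logEulerFactor (hr : 2 * r ∣ q - 1) {s : ℂ} (hs : 1 < s.re) :
    HasSum (fun p : Nat.Primes => logEulerFactor q r p ((p : ℂ) ^ (-s))) (logSeries q r s) := by
  obtain ⟨u, hu, hbound⟩ := exists_summable_logCorrection_bound hr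
  have hcorrection : HasSum (fun p : Nat.Primes => logCorrection q r p ((p : ℂ) ^ (-s)))
      (correction q r s) :=
    (Summable.of_norm_bounded hu fun p => hbound p s (by linarith)).hasSum
  have hlogL : HasSum (fun p : Nat.Primes => ∑ χ : DirichletCharacter ℂ q,
      (charExponent r χ : ℂ) * -Complex.log (1 - χ p * (p : ℂ) ^ (-s)))
      (∑ χ : DirichletCharacter ℂ q, (charExponent r χ : ℂ) * logL χ s) :=
    hasSum_sum fun χ _ =>
      (DirichletCharacter.summable_neg_log_one_sub_mul_prime_cpow χ hs).hasSum.mul_left _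
  refine (hlogL.add hcorrection).congr_fun fun p => ?_
  simp only [logCorrection, mul_neg, Finset.sum_neg_distrib]
  ring

lemma slowGrowth_exp_logSeries (hr : 2 * r ∣ q - 1) :
    SlowGrowth fun s => Complex.exp (logSeries q r s) := by
  obtain ⟨C, hC⟩ := exists_norm_correction_le hr
  have hcorrection : SlowGrowth fun s => Complex.exp (correction q r s) :=
    SlowGrowth.of_bound (Real.exp C) fun s hs _ => by
      rw [Complex.norm_exp, Real.exp_le_exp]
      exact (Complex.re_le_norm _).trans (hC s (by linarith))
  refine ((SlowGrowth.prod Finset.univ fun (χ : DirichletCharacter ℂ q) _ =>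
    slowGrowth_exp_mul_logL χ (charExponent r χ)).mul hcorrection).congr fun s _ => ?_
  rw [logSeries, Complex.exp_add, Complex.exp_sum]

lemma slowUpTo_deriv_logSeries (hr : 2 * r ∣ q - 1) (n : ℕ) :
    SlowUpTo n (deriv (logSeries q r)) :=
  ((SlowUpTo.sum Finset.univ fun (χ : DirichletCharacter ℂ q) _ =>
    (slowUpTo_logDeriv_LFunction χ n).const_mul (charExponent r χ : ℂ)).add
      (slowUpTo_correction hr (n + 1)).deriv).congr fun _ hs => (deriv_logSeries hr hs).symm

end LogSeries

section SigmaSeries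

variable {q k : ℕ} [Fact q.Prime]

lemma sigmaSeries_eq_exp (hk : k ≠ 0) (hr : 2 * k.gcd (q - 1) ∣ q - 1) {s : ℂ} (hs : 1 < s.re) :
    sigmaSeries q k s = Complex.exp (logSeries q (k.gcd (q - 1)) s) := by
  have hprod : HasProd (fun p : Nat.Primes => ∑' e : ℕ, (sigmaIndicator q k ((p : ℕ) ^ e) : ℂ) *
      ((p : ℂ) ^ (-s)) ^ e) (sigmaSeries q k s) :=
    LSeries_hasProd_of_multiplicative (a := fun n => sigmaIndicator q k n)
      (by simp [sigmaIndicator_one])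
      (fun h => by simp [sigmaIndicator_mul k h])
      (LSeriesSummable_of_mem_Icc (sigmaIndicator_mem_Icc q k) hs)
  refine (hprod.congr_fun fun p => ?_).unique (hasSum_logEulerFactor hr hs).cexp
  exact exp_logEulerFactor hk p.2 ((norm_prime_cpow_neg_le p (by linarith)).trans_lt (by norm_num))

lemma hasDerivAt_sigmaSeries (hk : k ≠ 0) (hr : 2 * k.gcd (q - 1) ∣ q - 1) {s : ℂ}
    (hs : 1 < s.re) : HasDerivAt (sigmaSeries q k)
      (sigmaSeries q k s * deriv (logSeries q (k.gcd (q - 1))) s) s := by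
  have hexp : sigmaSeries q k =ᶠ[𝓝 s] fun w => Complex.exp (logSeries q (k.gcd (q - 1)) w) :=
    Filter.eventuallyEq_of_mem ((Complex.isOpen_re_gt 1).mem_nhds hs) fun w hw =>
      sigmaSeries_eq_exp hk hr hw
  rw [sigmaSeries_eq_exp hk hr hs]
  exact ((differentiableAt_logSeries hr hs).hasDerivAt.cexp).congr_of_eventuallyEq hexp

lemma slowUpTo_sigmaSeries (hk : k ≠ 0) (hr : 2 * k.gcd (q - 1) ∣ q - 1) (n : ℕ) :
    SlowUpTo n (sigmaSeries q k) :=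
  SlowUpTo.of_deriv_eq_mul
    (fun _ hs => (hasDerivAt_sigmaSeries hk hr hs).differentiableAt.differentiableWithinAt)
    ((slowGrowth_exp_logSeries hr).congr fun _ hs => (sigmaSeries_eq_exp hk hr hs).symm)
    (slowUpTo_deriv_logSeries hr n) fun _ hs => (hasDerivAt_sigmaSeries hk hr hs).deriv

end SigmaSeries

section RegularPart

variable {q : ℕ} [Fact q.Prime]

open Classical in
/-- The entire function `(s - 1) * L(s, χ)` if `χ` is principal, and `L(s, χ)` otherwise. -/
noncomputable def entireL (χ : DirichletCharacter ℂ q) : ℂ → ℂ :=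
  if χ = 1 then DirichletCharacter.LFunctionTrivChar₁ q else χ.LFunction

lemma differentiable_entireL (χ : DirichletCharacter ℂ q) : Differentiable ℂ (entireL χ) := by
  rw [entireL]
  split_ifs with hχ
  · exact DirichletCharacter.differentiable_LFunctionTrivChar₁ q
  · exact DirichletCharacter.differentiable_LFunction hχ

lemma entireL_one_ne_zero (χ : DirichletCharacter ℂ q) : entireL χ 1 ≠ 0 := by
  rw [entireL]
  split_ifs with hχ
  · exact DirichletCharacter.LFunctionTrivChar₁_apply_one_ne_zero q
  · exact DirichletCharacter.LFunction_apply_one_ne_zero hχ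

open Classical in
lemma logDeriv_LFunction_eq (χ : DirichletCharacter ℂ q) {s : ℂ} (hs : 1 < s.re) :
    deriv χ.LFunction s / χ.LFunction s =
      deriv (entireL χ) s / entireL χ s - if χ = 1 then (s - 1)⁻¹ else 0 := by
  rw [entireL]
  split_ifs with hχ
  · subst hχ
    have hs1 : s ≠ 1 := by
      rintro rfl
      exact lt_irrefl _ hs
    have hsub : s - 1 ≠ 0 := sub_ne_zero.mpr hs1
    have hL : DirichletCharacter.LFunctionTrivChar q s ≠ 0 := LFunction_ne_zero_of_one_lt_re 1 hs
    rw [DirichletCharacter.deriv_LFunctionTrivChar₁_apply_of_ne_one q hs1,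
      DirichletCharacter.LFunctionTrivChar₁, Function.update_of_ne hs1]
    change deriv (DirichletCharacter.LFunctionTrivChar q) s /
      DirichletCharacter.LFunctionTrivChar q s = _
    field_simp
    ring
  · rw [sub_zero]

lemma LFunctionTrivChar₁_eq (s : ℂ) : DirichletCharacter.LFunctionTrivChar₁ q s =
    (1 - (q : ℂ) ^ (-s)) * riemannZeta₁ s := by
  have hq : q.Prime := Fact.out
  rcases eq_or_ne s 1 with rfl | hs
  · rw [DirichletCharacter.LFunctionTrivChar₁, Function.update_self, hq.primeFactors,
      Finset.prod_singleton, riemannZeta₁_one, mul_one, Complex.cpow_neg_one]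
  · rw [DirichletCharacter.LFunctionTrivChar₁, Function.update_of_ne hs,
      DirichletCharacter.LFunctionTrivChar_eq_mul_riemannZeta hs, hq.primeFactors,
      Finset.prod_singleton, riemannZeta_eq_inv_sub_mul hs]
    have hsub : s - 1 ≠ 0 := sub_ne_zero.mpr hs
    field_simp

lemma logDeriv_entireL_one_one : deriv (entireL (1 : DirichletCharacter ℂ q)) 1 /
    entireL (1 : DirichletCharacter ℂ q) 1 =
      ((Real.eulerMascheroniConstant + Real.log q / (q - 1) : ℝ) : ℂ) := by
  have hq : q.Prime := Fact.out
  have hq0 : (q : ℂ) ≠ 0 := Nat.cast_ne_zero.mpr hq.ne_zero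
  have hq1 : (q : ℂ) - 1 ≠ 0 := sub_ne_zero.mpr (Nat.cast_ne_one.mpr hq.ne_one)
  have hentireL : entireL (1 : DirichletCharacter ℂ q) =
      fun s => (1 - (q : ℂ) ^ (-s)) * riemannZeta₁ s := by
    funext s
    rw [entireL, if_pos rfl, LFunctionTrivChar₁_eq]
  have hfactor : HasDerivAt (fun s : ℂ => 1 - (q : ℂ) ^ (-s))
      (-((q : ℂ) ^ (-1 : ℂ) * Complex.log q * (-1))) 1 :=
    ((hasDerivAt_neg (1 : ℂ)).const_cpow (Or.inl hq0)).const_sub 1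
  rw [hentireL, (hfactor.fun_mul (differentiable_riemannZeta₁ 1).hasDerivAt).deriv]
  simp only [riemannZeta₁_one, deriv_riemannZeta₁_one, Complex.cpow_neg_one]
  push_cast
  field_simp
  ring

lemma trivialOnRoots_one {m : ℕ} (hm : m ≠ 0) :
    TrivialOnRoots m (1 : DirichletCharacter ℂ q) :=
  fun _ ha => MulChar.one_apply (IsUnit.of_pow_eq_one ha hm)

lemma charExponent_one {r : ℕ} (hr : r ≠ 0) :
    charExponent r (1 : DirichletCharacter ℂ q) = 1 - 1 / ((q - 1) / r : ℕ) := by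
  rw [charExponent, if_pos rfl, if_pos (trivialOnRoots_one (mul_ne_zero two_ne_zero hr)),
    if_pos (trivialOnRoots_one hr)]
  ring

open Classical in
lemma re_sum_trivialOnRoots_logDeriv_entireL {m : ℕ} (hm : m ≠ 0) :
    (∑ χ : DirichletCharacter ℂ q with TrivialOnRoots m χ, deriv (entireL χ) 1 / entireL χ 1).re =
      Real.log q / (q - 1) + gammaK q m := by
  have hLfun : ∀ χ : DirichletCharacter ℂ q, χ ≠ 1 → Lfun χ = entireL χ := fun χ hχ => by
    funext s
    rw [Lfun, dif_neg (Fact.out : q.Prime).ne_zero, entireL, if_neg hχ]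
  have hgammaK : gammaK q m = Real.eulerMascheroniConstant +
      (∑ χ : DirichletCharacter ℂ q with χ ≠ 1 ∧ TrivialOnRoots m χ,
        deriv (entireL χ) 1 / entireL χ 1).re := by
    have hset : {χ : DirichletCharacter ℂ q | χ ≠ 1 ∧ ∀ a : ZMod q, a ^ m = 1 → χ a = 1} =
        (Finset.univ.filter fun χ : DirichletCharacter ℂ q => χ ≠ 1 ∧ TrivialOnRoots m χ) := by
      rw [Finset.coe_filter_univ]
      rfl
    rw [gammaK, hset, finsum_mem_coe_finset]
    congr 2
    refine Finset.sum_congr rfl fun χ hχ => ?_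
    rw [hLfun χ (Finset.mem_filter.mp hχ).2.1]
  have herase : (Finset.univ.filter fun χ : DirichletCharacter ℂ q => TrivialOnRoots m χ).erase 1 =
      Finset.univ.filter fun χ => χ ≠ 1 ∧ TrivialOnRoots m χ := by
    ext χ
    simp
  rw [hgammaK, ← Finset.add_sum_erase _ _ (Finset.mem_filter.mpr
    ⟨Finset.mem_univ 1, trivialOnRoots_one hm⟩), herase, Complex.add_re,
    logDeriv_entireL_one_one, Complex.ofReal_re]
  ring

variable {r : ℕ}

variable (q r) in
/-- The function which remains of the logarithmic derivative of `sigmaSeries q k`, where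
`r = gcd(k, q - 1)`, after removal of its polar part at `s = 1`. -/
noncomputable def regularPart (s : ℂ) : ℂ :=
  ∑ χ : DirichletCharacter ℂ q, (charExponent r χ : ℂ) * (deriv (entireL χ) s / entireL χ s) +
    deriv (correction q r) s

lemma deriv_logSeries_eq_regularPart_sub (hr : 2 * r ∣ q - 1) {s : ℂ} (hs : 1 < s.re) :
    deriv (logSeries q r) s =
      regularPart q r s - charExponent r (1 : DirichletCharacter ℂ q) * (s - 1)⁻¹ := by
  classical
  rw [deriv_logSeries hr hs, regularPart]
  simp only [logDeriv_LFunction_eq _ hs, mul_sub, Finset.sum_sub_distrib, mul_ite, mul_zero,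
    Finset.sum_ite_eq', Finset.mem_univ, if_true]
  ring

lemma exists_differentiableOn_regularPart (hr : 2 * r ∣ q - 1) : ∃ ρ : ℝ, 0 < ρ ∧
    DifferentiableOn ℂ (regularPart q r) (Metric.ball 1 ρ) := by
  have hne : ∀ᶠ s in 𝓝 (1 : ℂ), ∀ χ : DirichletCharacter ℂ q, entireL χ s ≠ 0 :=
    eventually_all.mpr fun χ =>
      (differentiable_entireL χ).continuous.continuousAt.eventually_ne (entireL_one_ne_zero χ)
  have hre : ∀ᶠ s in 𝓝 (1 : ℂ), 3 / 4 < s.re :=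
    (Complex.isOpen_re_gt _).mem_nhds (by norm_num : (3 : ℝ) / 4 < (1 : ℂ).re)
  obtain ⟨ρ, hρ, hball⟩ := Metric.eventually_nhds_iff_ball.mp (hne.and hre)
  refine ⟨ρ, hρ, fun s hs => ?_⟩
  obtain ⟨hne, hre⟩ := hball s hs
  have hcorrection : DifferentiableAt ℂ (deriv (correction q r)) s :=
    ((differentiableOn_correction hr).deriv (Complex.isOpen_re_gt _)).differentiableAt
      ((Complex.isOpen_re_gt _).mem_nhds hre)
  exact ((DifferentiableAt.fun_sum fun χ _ => ((((differentiable_entireL χ).deriv s).fun_div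
    (differentiable_entireL χ s) (hne χ)).const_mul _)).fun_add
      hcorrection).differentiableWithinAt

lemma re_regularPart_one {k : ℕ} (hk : k ≠ 0) (hr : 2 * k.gcd (q - 1) ∣ q - 1) :
    (regularPart q (k.gcd (q - 1)) 1).re = gammakq q k := by
  rw [gammakq, regularPart]
  have hgcd : k.gcd (q - 1) ≠ 0 := Nat.gcd_ne_zero_left hk
  generalize k.gcd (q - 1) = r at hr hgcd ⊢
  rw [deriv_correction_one hr, sum_charExponent_mul, logDeriv_entireL_one_one]
  have htwo := re_sum_trivialOnRoots_logDeriv_entireL (q := q) (mul_ne_zero two_ne_zero hgcd)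
  have hone := re_sum_trivialOnRoots_logDeriv_entireL (q := q) hgcd
  rw [div_mul_eq_mul_div, two_mul (Finset.sum _ _)]
  simp only [div_mul_eq_mul_div, one_mul, Complex.add_re, Complex.sub_re, Complex.div_natCast_re,
    Complex.ofReal_re, htwo, hone]
  simp only [div_eq_mul_inv, mul_inv]
  ring

end RegularPart

section LocalFactorization

lemma exists_exp_eq_cpow_neg_mul {l Θ : ℂ → ℂ} {z : ℂ} {ρ : ℝ}
    (hΘ : DifferentiableOn ℂ Θ (Metric.ball 0 ρ))
    (hl : ∀ w ∈ Metric.ball (0 : ℂ) ρ, 0 < w.re → HasDerivAt l (Θ w - z * w⁻¹) w) :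
    ∃ K : ℂ → ℂ, (∀ w ∈ Metric.ball (0 : ℂ) ρ, K w ≠ 0 ∧ HasDerivAt K (K w * Θ w) w) ∧
      ∀ w ∈ Metric.ball (0 : ℂ) ρ, 0 < w.re → Complex.exp (l w) = w ^ (-z) * K w := by
  obtain ⟨T, hT⟩ := hΘ.isExactOn_ball
  have hderiv : ∀ w ∈ Metric.ball (0 : ℂ) ρ ∩ {w | 0 < w.re},
      HasDerivAt (fun w => l w + z * Complex.log w - T w) 0 w := by
    rintro w ⟨hw, hre⟩
    have hlog : HasDerivAt Complex.log w⁻¹ w := Complex.hasDerivAt_log (Or.inl hre)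
    refine (((hl w hw hre).fun_add (hlog.const_mul z)).fun_sub (hT w hw)).congr_deriv ?_
    ring
  obtain ⟨c, hc⟩ := (Metric.isOpen_ball.inter
    (Complex.isOpen_re_gt 0)).exists_is_const_of_deriv_eq_zero
      ((convex_ball _ _).inter (convex_halfSpace_re_gt 0)).isPreconnected
      (fun w hw => (hderiv w hw).differentiableAt.differentiableWithinAt)
      fun w hw => (hderiv w hw).deriv
  refine ⟨fun w => Complex.exp (c + T w),
    fun w hw => ⟨Complex.exp_ne_zero _, ((hT w hw).const_add c).cexp⟩, fun w hw hre => ?_⟩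
  have hw0 : w ≠ 0 := fun h => by simp [h] at hre
  rw [Complex.cpow_def_of_ne_zero hw0, ← Complex.exp_add, ← hc w ⟨hw, hre⟩]
  congr 1
  ring

open scoped ComplexOrder in
lemma nonneg_of_eventually_nonneg_cpow_mul {K : ℂ → ℂ} {z : ℝ} (hK : ContinuousAt K 0)
    (h : ∀ᶠ t : ℝ in 𝓝[>] 0, 0 ≤ (t : ℂ) ^ (z : ℂ) * K t) : 0 ≤ K 0 := by
  have hofReal : Tendsto (fun t : ℝ => (t : ℂ)) (𝓝[>] 0) (𝓝 0) :=
    (Complex.continuous_ofReal.tendsto' 0 0 Complex.ofReal_zero).mono_left nhdsWithin_le_nhds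
  refine ge_of_tendsto (hK.tendsto.comp hofReal) ?_
  filter_upwards [h, self_mem_nhdsWithin] with t hnonneg (ht : 0 < t)
  rw [← Complex.ofReal_cpow ht.le] at hnonneg
  have hpow : 0 < t ^ z := Real.rpow_pos_of_pos ht z
  have hinv : (0 : ℂ) ≤ ((t ^ z)⁻¹ : ℝ) := Complex.zero_le_real.mpr (inv_nonneg.mpr hpow.le)
  have hprod := mul_nonneg hinv hnonneg
  rwa [Complex.ofReal_inv, inv_mul_cancel_left₀ (Complex.ofReal_ne_zero.mpr hpow.ne')] at hprod

open scoped ComplexOrder in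
lemma sigmaSeries_nonneg (q k : ℕ) (s : ℝ) : 0 ≤ sigmaSeries q k s :=
  tsum_nonneg fun _ =>
    LSeries.term_nonneg (Complex.zero_le_real.mpr (sigmaIndicator_mem_Icc q k _).1) s

variable {q k : ℕ} [Fact q.Prime]

theorem exists_sigmaSeries_one_add_eq_cpow_neg_mul (hk : k ≠ 0)
    (hr : 2 * k.gcd (q - 1) ∣ q - 1) {z : ℝ}
    (hz : z = charExponent (k.gcd (q - 1)) (1 : DirichletCharacter ℂ q)) :
    ∃ (ρ : ℝ) (K : ℂ → ℂ), 0 < ρ ∧ DifferentiableOn ℂ K (Metric.ball 0 ρ) ∧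
      (∀ w ∈ Metric.ball (0 : ℂ) ρ, 0 < w.re →
        sigmaSeries q k (1 + w) = w ^ (-(z : ℂ)) * K w) ∧
      0 < (K 0).re ∧ (deriv K 0).re = (K 0).re * gammakq q k := by
  obtain ⟨ρ, hρ, hΘ⟩ := exists_differentiableOn_regularPart hr
  have hΘ0 : DifferentiableOn ℂ (fun w => regularPart q (k.gcd (q - 1)) (1 + w))
      (Metric.ball 0 ρ) :=
    hΘ.comp (by fun_prop) fun w hw => by simpa [mem_ball_iff_norm] using hw
  have hl : ∀ w ∈ Metric.ball (0 : ℂ) ρ, 0 < w.re →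
      HasDerivAt (fun w => logSeries q (k.gcd (q - 1)) (1 + w))
        (regularPart q (k.gcd (q - 1)) (1 + w) - z * w⁻¹) w := fun w _ hre => by
    have hre1 : 1 < (1 + w).re := by simpa using hre
    refine ((differentiableAt_logSeries hr hre1).hasDerivAt.comp_const_add 1 w).congr_deriv ?_
    rw [deriv_logSeries_eq_regularPart_sub hr hre1, hz, add_sub_cancel_left]
  obtain ⟨K, hK, hexp⟩ := exists_exp_eq_cpow_neg_mul hΘ0 hl
  have hfactor : ∀ w ∈ Metric.ball (0 : ℂ) ρ, 0 < w.re →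
      sigmaSeries q k (1 + w) = w ^ (-(z : ℂ)) * K w := fun w hw hre => by
    rw [sigmaSeries_eq_exp hk hr (by simpa using hre), hexp w hw hre]
  obtain ⟨hK0, hderiv⟩ := hK 0 (Metric.mem_ball_self hρ)
  have hnonneg : 0 ≤ (K 0).re ∧ 0 = (K 0).im := by
    refine Complex.nonneg_iff.mp
      (nonneg_of_eventually_nonneg_cpow_mul (z := -z) hderiv.continuousAt ?_)
    filter_upwards [Ioo_mem_nhdsGT hρ] with t ht
    have hball : (t : ℂ) ∈ Metric.ball (0 : ℂ) ρ := by
      simpa [abs_of_pos ht.1] using ht.2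
    have hseries := sigmaSeries_nonneg q k (1 + t)
    push_cast at hseries ⊢
    rwa [← hfactor t hball (by simpa using ht.1)]
  have hreal : K 0 = (K 0).re := Complex.ext rfl hnonneg.2.symm
  refine ⟨ρ, K, hρ, fun w hw => (hK w hw).2.differentiableAt.differentiableWithinAt, hfactor,
    hnonneg.1.lt_of_ne fun h => hK0 (by rw [hreal, ← h, Complex.ofReal_zero]), ?_⟩
  rw [hderiv.deriv, hreal, Complex.re_ofReal_mul, add_zero, re_regularPart_one hk hr,
    Complex.ofReal_re]

end LocalFactorization

lemma Skq_eq_summatory (k q : ℕ) {x : ℝ} (hx : 0 ≤ x) :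
    (Skq k q x : ℝ) = summatory (sigmaIndicator q k) x := by
  have hset : {n : ℕ | 1 ≤ n ∧ (n : ℝ) ≤ x ∧ ¬ q ∣ sigmak k n} =
      ((Finset.range (⌊x⌋₊ + 1)).filter fun n => ¬ q ∣ sigmak k n : Finset ℕ) := by
    ext n
    rcases eq_or_ne n 0 with rfl | hn
    · have hdvd : q ∣ sigmak k 0 := by simp [sigmak]
      simp [hdvd]
    · simp [Nat.le_floor_iff hx, Nat.one_le_iff_ne_zero, hn]
  rw [Skq, hset, Nat.card_coe_set_eq, Set.ncard_coe_finset, Finset.card_filter, summatory,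
    Nat.cast_sum]
  refine Finset.sum_congr rfl fun n _ => ?_
  rw [sigmaIndicator]
  split_ifs <;> simp_all

lemma two_terms_eq_mul_div_rpow {h L : ℝ} (hh : h ≠ 0) (hL : 0 < L) (G x κ γ : ℝ) :
    G * x * (κ * L ^ (1 - 1 / h - 1) + (1 - 1 / h - 1) * (κ * γ - κ) * L ^ (1 - 1 / h - 2)) =
      G * κ * x / L ^ (1 / h) * (1 + (1 - γ) / (h * L)) := by
  have hfirst : L ^ (1 - 1 / h - 1) = (L ^ (1 / h))⁻¹ := by
    rw [← Real.rpow_neg hL.le, sub_sub_cancel_left]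
  have hsecond : L ^ (1 - 1 / h - 2) = (L ^ (1 / h))⁻¹ * L⁻¹ := by
    rw [← hfirst, ← Real.rpow_neg_one L, ← Real.rpow_add hL]
    ring_nf
  have hpow : L ^ (1 / h) ≠ 0 := (Real.rpow_pos_of_pos hL _).ne'
  rw [hfirst, hsecond]
  generalize L ^ (1 / h) = P at hpow ⊢
  field_simp
  ring

/-- Let `q` be an odd prime and `k ≥ 1`, `r = gcd(k, q-1)`, `h = (q-1)/r`
even. Then there is `C > 0` (depending only on `r` and `q`) with
`S_{k,q}(x) = C·x/(log x)^{1/h} · (1 + (1 − γ_{k,q})/(h·log x)) + O(x/(log x)^{2+1/h})`. -/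
theorem statement0 (q k r h : ℕ) (hq : q.Prime) (hq_odd : q ≠ 2) (hk : 1 ≤ k)
    (hr : r = Nat.gcd k (q - 1)) (hh : h = (q - 1) / r) (hheven : 2 ∣ h) :
    ∃ C : ℝ, 0 < C ∧
      (fun x : ℝ => (Skq k q x : ℝ) -
          C * x / Real.log x ^ ((1 : ℝ) / h) *
            (1 + (1 - gammakq q k) / (h * Real.log x)))
        =O[atTop] fun x : ℝ => x / Real.log x ^ (2 + (1 : ℝ) / h) := by
  have : Fact q.Prime := ⟨hq⟩
  subst hr hh
  set h := (q - 1) / k.gcd (q - 1)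
  have hk0 : k ≠ 0 := Nat.one_le_iff_ne_zero.mp hk
  have hr : 2 * k.gcd (q - 1) ∣ q - 1 :=
    mul_comm 2 _ ▸ Nat.mul_dvd_of_dvd_div (Nat.gcd_dvd_right _ _) hheven
  have hh2 : (2 : ℝ) ≤ h := mod_cast Nat.le_of_dvd (Nat.div_gcd_pos_of_pos_right k
    (Nat.sub_pos_of_lt hq.one_lt)) hheven
  have hz : 0 < 1 - 1 / (h : ℝ) := sub_pos.mpr ((div_lt_one (by linarith)).mpr (by linarith))
  obtain ⟨ρ, K, hρ, hK, hfactor, hκ, hγ⟩ := exists_sigmaSeries_one_add_eq_cpow_neg_mul hk0 hr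
    (charExponent_one (Nat.gcd_ne_zero_left hk0)).symm
  obtain ⟨C, hC⟩ := exists_abs_summatory_sub_two_terms_le (sigmaIndicator_zero q k)
    (sigmaIndicator_mem_Icc q k) (slowUpTo_sigmaSeries hk0 hr 5) hz
    (sub_lt_self _ (by positivity)) hρ hK hfactor
  refine ⟨(Real.Gamma (1 - 1 / h))⁻¹ * (K 0).re,
    mul_pos (inv_pos.mpr (Real.Gamma_pos_of_pos hz)) hκ, .of_bound C ?_⟩
  filter_upwards [hC, eventually_gt_atTop 1] with x hx hx1
  have hlog : 0 < Real.log x := Real.log_pos hx1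
  rw [Complex.sub_re, hγ, two_terms_eq_mul_div_rpow (by positivity) hlog,
    ← Skq_eq_summatory k q (by linarith), show 1 - 1 / (h : ℝ) - 3 = -(2 + 1 / h) by ring,
    Real.rpow_neg hlog.le, ← div_eq_mul_inv] at hx
  rwa [Real.norm_eq_abs, Real.norm_of_nonneg (by positivity)]
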